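/- arXiv:1506.08041 — 3 statements merged into one kernel-verified Lean document; each statement's English description precedes it below -/
import Mathlib

section
/- Let N be a natural number and let (u_n) be a sequence of harmonic functions on the open unit disc 𝔻 ⊂ ℝ², none identically zero, such that for each n the number of connected components of 𝔻 ∖ Z(u_n) is less than N. Then there exist a subsequence (u_{n_k}), a sequence of nonzero real numbers (α_{n_k}), and a harmonic function u on 𝔻, not identically zero, such that α_{n_k} u_{n_k} converges to u uniformly on every compact subset of 𝔻. -/
open Metric Set Filter

noncomputable section

abbrev En (n : ℕ) : Type := EuclideanSpace ℝ (Fin n)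

/-- The Laplacian of `u` at `x`, computed from the second iterated Fréchet derivative. -/
def laplacianAt {n : ℕ} (u : En n → ℝ) (x : En n) : ℝ :=
  ∑ i : Fin n, iteratedFDeriv ℝ 2 u x ![EuclideanSpace.single i 1, EuclideanSpace.single i 1]

/-- `u` is harmonic on `Ω`: twice continuously differentiable with vanishing Laplacian. -/
def HarmonicOnSet {n : ℕ} (u : En n → ℝ) (Ω : Set (En n)) : Prop :=
  ContDiffOn ℝ 2 u Ω ∧ ∀ x ∈ Ω, laplacianAt u x = 0

/-- The zero set of `u` within `Ω`. -/
def zeroSet {n : ℕ} (u : En n → ℝ) (Ω : Set (En n)) : Set (En n) :=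
  {x ∈ Ω | u x = 0}

/-- The collection of nodal domains of `u` in `Ω`, i.e. the connected components of
`Ω \ Z(u)`. -/
def nodalComponents {n : ℕ} (u : En n → ℝ) (Ω : Set (En n)) : Set (Set (En n)) :=
  {C | ∃ x ∈ Ω \ zeroSet u Ω, C = connectedComponentIn (Ω \ zeroSet u Ω) x}

open Topology MeasureTheory Complex Pointwise

/-!
Write a harmonic function as `Re f` with `f` analytic. For real `y`, at a simple zero of `f - i y`
the nodal set of `Re f` is a smooth arc separating two nodal domains. By the maximum principle a
nodal domain cannot be enclosed by the nodal set, so these arcs do not close up and each simple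
zero contributes a new nodal domain: `f - i y` has fewer simple zeros than `Re f` has nodal domains.
For almost every `y` all zeros of `f - i y` are simple, and averaging over `y ∈ [0, 1]` yields such
a `y` for which the circle average of `log⁺ |f - i y|⁻¹` is bounded by an absolute constant.
Dividing out the boundedly many zeros leaves a zero-free function `G`, and Harnack's inequality for
`log |G|` bounds `f` on compact sets in terms of its size on a small disc. After normalizing
the size on that disc, Montel's theorem gives the subsequence, and the normalization prevents the
limit from vanishing.
-/

section ContinuousLogarithm

variable {X : Type*} [TopologicalSpace X]

/-- The complex function `g` has a continuous logarithm on `K`. By Eilenberg's criterion, for `K`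
compact in the plane and `w ∉ K`, the function `z ↦ z - w` has one exactly when `w` is not separated
from infinity by `K`; this replaces winding numbers when `K` is not a curve. -/
def HasContinuousLogOn (g : X → ℂ) (K : Set X) : Prop :=
  ∃ L : X → ℂ, ContinuousOn L K ∧ ∀ z ∈ K, exp (L z) = g z

namespace HasContinuousLogOn

variable {g h : X → ℂ} {K : Set X}

lemma of_slitPlane (hg : ContinuousOn g K) (h : MapsTo g K slitPlane) : HasContinuousLogOn g K :=
  ⟨fun z => log (g z), hg.clog h, fun _ hz => exp_log (slitPlane_ne_zero (h hz))⟩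

lemma const {c : ℂ} (hc : c ≠ 0) : HasContinuousLogOn (fun _ => c) K :=
  ⟨fun _ => log c, continuousOn_const, fun _ _ => exp_log hc⟩

lemma congr (hg : HasContinuousLogOn g K) (hgh : EqOn g h K) : HasContinuousLogOn h K :=
  let ⟨L, hL, hexp⟩ := hg
  ⟨L, hL, fun z hz => (hexp z hz).trans (hgh hz)⟩

lemma mono {S : Set X} (hg : HasContinuousLogOn g K) (hS : S ⊆ K) : HasContinuousLogOn g S :=
  let ⟨L, hL, hexp⟩ := hg
  ⟨L, hL.mono hS, fun z hz => hexp z (hS hz)⟩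

lemma mul (hg : HasContinuousLogOn g K) (hh : HasContinuousLogOn h K) :
    HasContinuousLogOn (fun z => g z * h z) K :=
  let ⟨L, hL, hLexp⟩ := hg
  let ⟨M, hM, hMexp⟩ := hh
  ⟨fun z => L z + M z, hL.add hM, fun z hz => by rw [exp_add, hLexp z hz, hMexp z hz]⟩

lemma div (hg : HasContinuousLogOn g K) (hh : HasContinuousLogOn h K) :
    HasContinuousLogOn (fun z => g z / h z) K :=
  let ⟨L, hL, hLexp⟩ := hg
  let ⟨M, hM, hMexp⟩ := hh
  ⟨fun z => L z - M z, hL.sub hM, fun z hz => by rw [exp_sub, hLexp z hz, hMexp z hz]⟩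

end HasContinuousLogOn

lemma hasContinuousLogOn_empty (g : X → ℂ) : HasContinuousLogOn g ∅ :=
  ⟨0, continuousOn_empty _, fun _ hz => hz.elim⟩

lemma sub_eq_sub_of_exp_eq_exp {S : Set X} (hS : IsPreconnected S) {L M : X → ℂ}
    (hL : ContinuousOn L S) (hM : ContinuousOn M S) (h : ∀ x ∈ S, exp (L x) = exp (M x))
    {p q : X} (hp : p ∈ S) (hq : q ∈ S) : L p - L q = M p - M q := by
  have hconst : L p - M p = L q - M q :=
    isCoveringMap_exp.constOn_of_comp hS (g := fun x => L x - M x) (hL.sub hM)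
      (fun x hx y hy => by simp [exp_sub, h x hx, h y hy]) hp hq
  linear_combination hconst

end ContinuousLogarithm

section PlanarCompacta

variable {K : Set ℂ} {w w' : ℂ}

lemma HasContinuousLogOn.sub_of_norm_sub_lt (h : HasContinuousLogOn (· - w) K)
    (hK : ∀ z ∈ K, ‖w - w'‖ < ‖z - w‖) : HasContinuousLogOn (· - w') K := by
  have hne : ∀ z ∈ K, z - w ≠ 0 := fun z hz => norm_pos_iff.1 ((norm_nonneg _).trans_lt (hK z hz))
  have hquot : HasContinuousLogOn (fun z => 1 + (w - w') / (z - w)) K := by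
    refine .of_slitPlane (by fun_prop (disch := assumption)) fun z hz => ?_
    refine mem_slitPlane_of_norm_lt_one ?_
    rw [norm_div, div_lt_one (norm_pos_iff.2 (hne z hz))]
    exact hK z hz
  refine (h.mul hquot).congr fun z hz => ?_
  have := hne z hz
  field_simp
  ring

lemma hasContinuousLogOn_sub_of_notMem_convex {C : Set ℂ} (hC : Convex ℝ C) (hCc : IsClosed C)
    (hw : w ∉ C) : HasContinuousLogOn (· - w) C := by
  obtain rfl | ⟨z₀, hz₀⟩ := C.eq_empty_or_nonempty
  · exact hasContinuousLogOn_empty _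
  obtain ⟨l, u, hlw, hlC⟩ := RCLike.geometric_hahn_banach_point_closed (𝕜 := ℂ) hC hCc hw
  have hl : ∀ z, l z = z * l 1 := fun z => by simpa using l.map_smul z 1
  have hre : ∀ z ∈ C, 0 < ((z - w) * l 1).re := fun z hz => by
    have := hlw.trans (hlC z hz)
    rwa [← hl, map_sub, sub_re, sub_pos]
  have hl1 : l 1 ≠ 0 := fun h0 => by simpa [h0] using hre z₀ hz₀
  refine ((HasContinuousLogOn.of_slitPlane (g := fun z => (z - w) * l 1) (by fun_prop)
    fun z hz => Or.inl (hre z hz)).div (.const hl1)).congr fun z _ => ?_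
  exact mul_div_cancel_right₀ _ hl1

lemma eventually_hasContinuousLogOn_sub_iff (hK : IsCompact K) (hw : w ∉ K) :
    ∀ᶠ w' in 𝓝 w, w' ∉ K ∧
      (HasContinuousLogOn (· - w') K ↔ HasContinuousLogOn (· - w) K) := by
  obtain ⟨ε, hε, hball⟩ := Metric.isOpen_iff.1 hK.isClosed.isOpen_compl w hw
  have hfar : ∀ z ∈ K, ε ≤ ‖z - w‖ := fun z hz => by
    by_contra! hlt
    exact hball (mem_ball_iff_norm.2 hlt) hz
  filter_upwards [ball_mem_nhds w (half_pos hε)] with w' hw'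
  rw [mem_ball_iff_norm] at hw'
  have hfar' : ∀ z ∈ K, ε / 2 < ‖z - w'‖ := fun z hz => by
    linarith [hfar z hz, norm_sub_le_norm_sub_add_norm_sub z w' w]
  refine ⟨fun hz => ?_, fun h => h.sub_of_norm_sub_lt fun z hz => hw'.trans (hfar' z hz),
    fun h => h.sub_of_norm_sub_lt fun z hz => ?_⟩
  · simpa using (half_pos hε).trans (hfar' w' hz)
  · rw [norm_sub_rev]
    linarith [hfar z hz]

lemma isClosed_setOf_mem_or_not_hasContinuousLogOn_sub (hK : IsCompact K) :
    IsClosed {w | w ∈ K ∨ ¬ HasContinuousLogOn (· - w) K} := by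
  rw [← isOpen_compl_iff, isOpen_iff_mem_nhds]
  intro w hw
  rw [mem_compl_iff, mem_ofPred_eq, not_or, not_not] at hw
  filter_upwards [eventually_hasContinuousLogOn_sub_iff hK hw.1] with w' hw'
  rw [mem_compl_iff, mem_ofPred_eq, not_or, not_not]
  exact ⟨hw'.1, hw'.2.2 hw.2⟩

end PlanarCompacta

lemma exists_isCompact_convex_between {E : Type*} [NormedAddCommGroup E] [NormedSpace ℝ E]
    [ProperSpace E] {K Ω : Set E} (hK : IsCompact K) (hΩ : Convex ℝ Ω) (hΩo : IsOpen Ω)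
    (hKΩ : K ⊆ Ω) : ∃ C, IsCompact C ∧ Convex ℝ C ∧ K ⊆ C ∧ C ⊆ Ω := by
  obtain ⟨δ, hδ, hKδ⟩ := hK.exists_cthickening_subset_open hΩo hKΩ
  obtain ⟨t, htK, ht, hcover⟩ := hK.finite_cover_balls hδ
  refine ⟨convexHull ℝ t + closedBall 0 δ,
    (ht.isCompact_convexHull ℝ).add (isCompact_closedBall 0 δ),
    (convex_convexHull ℝ t).add (convex_closedBall 0 δ), fun z hz => ?_, ?_⟩
  · obtain ⟨x, hx, hzx⟩ := mem_iUnion₂.1 (hcover hz)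
    exact ⟨x, subset_convexHull ℝ t hx, z - x,
      mem_closedBall_zero_iff.2 (mem_ball_iff_norm.1 hzx).le, add_sub_cancel x z⟩
  · rw [← (convex_closedBall (0 : E) δ).convexHull_eq, ← convexHull_add]
    refine convexHull_min ?_ hΩ
    rintro _ ⟨x, hx, b, hb, rfl⟩
    refine hKδ (mem_cthickening_of_dist_le _ x _ _ (htK hx) ?_)
    simpa using mem_closedBall_zero_iff.1 hb

section Trapping

variable {f : ℂ → ℂ} {Ω K : Set ℂ} {w : ℂ}

lemma frequently_re_eq_and_im_lt (hf : AnalyticAt ℂ f w) (hne : ¬ ∀ᶠ z in 𝓝 w, f z = f w) :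
    ∃ᶠ z in 𝓝 w, (f z).re = (f w).re ∧ (f w).im < (f z).im := by
  intro h
  have hopen := hf.eventually_constant_or_nhds_le_map_nhds.resolve_left hne
  have hlim : Tendsto (fun ε : ℝ => f w + ε * I) (𝓝[>] 0) (𝓝 (f w)) :=
    tendsto_nhdsWithin_of_tendsto_nhds (Continuous.tendsto' (by fun_prop) _ _ (by simp))
  obtain ⟨ε, ⟨z, hz, hfz⟩, hε⟩ :=
    ((hlim.eventually (hopen (image_mem_map h))).and self_mem_nhdsWithin).exists
  exact hz (by simpa [hfz] using hε)

-- Move `v` within the region enclosed by `K` along `Re f = 0` so as to maximise `Im f`: the path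
-- cannot cross `K`, and an interior maximum contradicts the open mapping theorem.
lemma hasContinuousLogOn_sub_of_im_pos (hΩ : Convex ℝ Ω) (hΩo : IsOpen Ω)
    (hf : AnalyticOnNhd ℂ f Ω) (hK : IsCompact K) (hKΩ : K ⊆ Ω)
    (hKf : ∀ z ∈ K, (f z).re = 0 → f z = 0) (hre : (f w).re = 0) (him : 0 < (f w).im) :
    HasContinuousLogOn (· - w) K := by
  by_contra hlog
  obtain ⟨C, hC, hCconv, hKC, hCΩ⟩ := exists_isCompact_convex_between hK hΩ hΩo hKΩ
  have hfC : ContinuousOn f C := hf.continuousOn.mono hCΩ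
  have henclosed : ∀ v, ¬ HasContinuousLogOn (· - v) K → v ∈ C := fun v hv => by
    by_contra hvC
    exact hv ((hasContinuousLogOn_sub_of_notMem_convex hCconv hC.isClosed hvC).mono hKC)
  let T : Set ℂ := (C ∩ f ⁻¹' {ζ | ζ.re = 0 ∧ (f w).im ≤ ζ.im}) ∩
    {v | v ∈ K ∨ ¬ HasContinuousLogOn (· - v) K}
  have hT : IsCompact T := by
    refine .inter_right (hC.of_isClosed_subset ?_ inter_subset_left)
      (isClosed_setOf_mem_or_not_hasContinuousLogOn_sub hK)
    exact hfC.preimage_isClosed_of_isClosed hC.isClosed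
      ((isClosed_eq continuous_re continuous_const).inter
        (isClosed_le continuous_const continuous_im))
  obtain ⟨v, ⟨⟨hvC, hvre, hvim⟩, hvK⟩, hmax⟩ := hT.exists_isMaxOn (f := fun z => (f z).im)
    ⟨w, ⟨henclosed w hlog, hre, le_rfl⟩, Or.inr hlog⟩
    (continuous_im.comp_continuousOn (hfC.mono (inter_subset_left.trans inter_subset_left)))
  have hfv : 0 < (f v).im := him.trans_le hvim
  have hvnK : v ∉ K := fun h => by simp [hKf v h hvre] at hfv
  have hvlog : ¬ HasContinuousLogOn (· - v) K := hvK.resolve_left hvnK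
  have hnear : ∀ᶠ v' in 𝓝 v, ¬ HasContinuousLogOn (· - v') K :=
    (eventually_hasContinuousLogOn_sub_iff hK hvnK).mono fun v' hv' h => hvlog (hv'.2.1 h)
  by_cases hconst : ∀ᶠ z in 𝓝 v, f z = f v
  · have hKempty : K = ∅ := eq_empty_of_forall_notMem fun z hz => by
      have hfz : f z = f v := hf.eqOn_of_preconnected_of_eventuallyEq analyticOnNhd_const
        hΩ.isPreconnected (hCΩ hvC) hconst (hKΩ hz)
      simp [← hfz, hKf z hz (hfz ▸ hvre)] at hfv
    exact hvlog (hKempty ▸ hasContinuousLogOn_empty _)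
  · obtain ⟨v', ⟨hre', him'⟩, hv'⟩ :=
      ((frequently_re_eq_and_im_lt (hf v (hCΩ hvC)) hconst).and_eventually hnear).exists
    exact him'.not_ge (hmax ⟨⟨henclosed v' hv', hre'.trans hvre, hvim.trans him'.le⟩, Or.inr hv'⟩)

theorem hasContinuousLogOn_sub_of_re_eq_zero (hΩ : Convex ℝ Ω) (hΩo : IsOpen Ω)
    (hf : AnalyticOnNhd ℂ f Ω) (hK : IsCompact K) (hKΩ : K ⊆ Ω)
    (hKf : ∀ z ∈ K, (f z).re = 0 → f z = 0) (hre : (f w).re = 0) (hw : f w ≠ 0) :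
    HasContinuousLogOn (· - w) K := by
  have him : (f w).im ≠ 0 := fun h => hw (Complex.ext hre h)
  rcases him.lt_or_gt with h | h
  · exact hasContinuousLogOn_sub_of_im_pos hΩ hΩo hf.neg hK hKΩ (by simpa using hKf)
      (by simpa using hre) (by simpa using h)
  · exact hasContinuousLogOn_sub_of_im_pos hΩ hΩo hf hK hKΩ hKf hre h

end Trapping

section Winding

lemma log_div_of_re_pos {z w : ℂ} (hz : 0 < z.re) (hw : 0 < w.re) :
    log (z / w) = log z - log w := by
  have hz0 : z ≠ 0 := fun h => by simp [h] at hz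
  have hw0 : w ≠ 0 := fun h => by simp [h] at hw
  have hargz := abs_lt.1 (abs_arg_lt_pi_div_two_iff.2 (Or.inl hz))
  have hargw := abs_lt.1 (abs_arg_lt_pi_div_two_iff.2 (Or.inl hw))
  rw [← log_exp (x := log z - log w), exp_sub, exp_log hz0, exp_log hw0]
  · rw [sub_im, log_im, log_im]
    linarith
  · rw [sub_im, log_im, log_im]
    linarith

lemma log_neg_of_im_pos {z : ℂ} (hz : 0 < z.im) : log (-z) = log z - Real.pi * I := by
  simp only [log, norm_neg, arg_neg_eq_arg_sub_pi_of_im_pos hz, ofReal_sub]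
  ring

lemma log_neg_of_im_neg {z : ℂ} (hz : z.im < 0) : log (-z) = log z + Real.pi * I := by
  simp only [log, norm_neg, arg_neg_eq_arg_add_pi_of_im_neg hz, ofReal_add]
  ring

-- The function `log (x - α) - log (x - β)` is another continuous logarithm of the quotient.
lemma sub_eq_log_sub_log_add_two_pi {s : ℝ} {α β : ℂ} {M : ℝ → ℂ} (hα : 0 < α.im) (hβ : β.im < 0)
    (hαs : |α.re| < s) (hβs : |β.re| < s) (hM : ContinuousOn M (Icc (-s) s))
    (hexp : ∀ x ∈ Icc (-s) s, exp (M x) = (x - α) / (x - β)) :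
    M s - M (-s) =
      log ((s - α) / (s - β)) - log (((-s : ℝ) - α) / ((-s : ℝ) - β)) + 2 * Real.pi * I := by
  rw [abs_lt] at hαs hβs
  have hs : -s ≤ s := by linarith
  have hα0 : ∀ x : ℝ, (x - α).im ≠ 0 := fun x => by simpa using hα.ne'
  have hβ0 : ∀ x : ℝ, (x - β).im ≠ 0 := fun x => by simpa using hβ.ne
  have hL : Continuous fun x : ℝ => log (x - α) - log (x - β) :=
    (Continuous.clog (by fun_prop) fun x => Or.inr (hα0 x)).sub
      (Continuous.clog (by fun_prop) fun x => Or.inr (hβ0 x))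
  rw [sub_eq_sub_of_exp_eq_exp isPreconnected_Icc hM hL.continuousOn (fun x hx => ?_)
    (right_mem_Icc.2 hs) (left_mem_Icc.2 hs)]
  · have hneg : ∀ γ : ℂ, ((-s : ℝ) : ℂ) - γ = -(s + γ) := fun γ => by push_cast; ring
    rw [log_div_of_re_pos (by simp [hαs.2]) (by simp [hβs.2]), hneg, hneg, neg_div_neg_eq,
      log_div_of_re_pos (by simp; linarith) (by simp; linarith),
      log_neg_of_im_pos (by simp [hα]), log_neg_of_im_neg (by simp [hβ])]
    ring
  · rw [hexp x hx, exp_sub, exp_log fun h => hα0 x (by simp [h]),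
      exp_log fun h => hβ0 x (by simp [h])]

-- Around the loop formed by `p` and the segment, a logarithm of the quotient changes by `2πi`.
lemma not_hasContinuousLogOn_div {K : Set ℂ} {z₁ d α β : ℂ} {s : ℝ} (hd : d ≠ 0)
    (hα : 0 < α.im) (hβ : β.im < 0) (hαs : |α.re| < s) (hβs : |β.re| < s)
    (hK : ∀ x ∈ Icc (-s) s, z₁ + d * x ∈ K) (p : Path (z₁ + d * s) (z₁ + d * (-s : ℝ)))
    (hpK : range p ⊆ K)
    (hp : ∀ t, (p t - (z₁ + d * α)) / (p t - (z₁ + d * β)) ∈ slitPlane) :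
    ¬ HasContinuousLogOn (fun z => (z - (z₁ + d * α)) / (z - (z₁ + d * β))) K := by
  rintro ⟨M, hM, hexp⟩
  have hquot : ∀ x : ℂ, (z₁ + d * x - (z₁ + d * α)) / (z₁ + d * x - (z₁ + d * β)) =
      (x - α) / (x - β) := fun x => by
    rw [add_sub_add_left_eq_sub, add_sub_add_left_eq_sub, ← mul_sub, ← mul_sub,
      mul_div_mul_left _ _ hd]
  have hseg := sub_eq_log_sub_log_add_two_pi hα hβ hαs hβs (M := fun x : ℝ => M (z₁ + d * x))
    (hM.comp (f := fun x : ℝ => z₁ + d * (x : ℂ)) (by fun_prop) hK)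
    fun x hx => (hexp _ (hK x hx)).trans (hquot x)
  have hne : ∀ t, p t - (z₁ + d * β) ≠ 0 := fun t h => slitPlane_ne_zero (hp t) (by simp [h])
  have hpath := sub_eq_sub_of_exp_eq_exp (X := unitInterval) isPreconnected_univ
    (L := fun t => M (p t)) (M := fun t => log ((p t - (z₁ + d * α)) / (p t - (z₁ + d * β))))
    (hM.comp p.continuous.continuousOn fun t _ => hpK (mem_range_self t))
    (ContinuousOn.clog (ContinuousOn.div (by fun_prop) (by fun_prop) fun t _ => hne t)
      fun t _ => hp t)
    (fun t _ => by rw [hexp _ (hpK (mem_range_self t)), exp_log (slitPlane_ne_zero (hp t))])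
    (mem_univ 0) (mem_univ 1)
  simp only [p.source, p.target, hquot] at hpath
  rw [hpath] at hseg
  simp at hseg

end Winding

section SimpleZeros

/-- The simple zeros of `f` in `U`. -/
def simpleZeros (f : ℂ → ℂ) (U : Set ℂ) : Set ℂ :=
  {z ∈ U | f z = 0 ∧ deriv f z ≠ 0}

variable {f : ℂ → ℂ} {Ω : Set ℂ} {z₁ : ℂ}

lemma exists_segment_re_ne_zero (hΩo : IsOpen Ω) (hf : AnalyticOnNhd ℂ f Ω)
    (hz₁ : z₁ ∈ simpleZeros f Ω) :
    ∃ s > 0, ∀ x ∈ Icc (-s) s, z₁ + (deriv f z₁)⁻¹ * (x : ℝ) ∈ Ω ∧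
      (x ≠ 0 → (f (z₁ + (deriv f z₁)⁻¹ * x)).re ≠ 0) := by
  obtain ⟨hzΩ, -, hdf⟩ := hz₁
  have hline : HasDerivAt (fun t : ℂ => z₁ + (deriv f z₁)⁻¹ * t) (deriv f z₁)⁻¹ ((0 : ℝ) : ℂ) := by
    simpa using ((hasDerivAt_id ((0 : ℝ) : ℂ)).const_mul (deriv f z₁)⁻¹).const_add z₁
  have hfz : HasDerivAt f (deriv f z₁) (z₁ + (deriv f z₁)⁻¹ * ((0 : ℝ) : ℂ)) := by
    simpa using (hf z₁ hzΩ).differentiableAt.hasDerivAt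
  have hre : HasDerivAt (fun x : ℝ => (f (z₁ + (deriv f z₁)⁻¹ * x)).re) 1 0 := by
    simpa [Function.comp_def, mul_inv_cancel₀ hdf] using
      (HasDerivAt.comp ((0 : ℝ) : ℂ) hfz hline).real_of_complex
  have hne := eventually_nhdsWithin_iff.1 (hre.eventually_ne (c := 0) one_ne_zero)
  have hmem : ∀ᶠ x : ℝ in 𝓝 0, z₁ + (deriv f z₁)⁻¹ * x ∈ Ω :=
    (Continuous.tendsto' (by fun_prop) _ _ (by simp)).eventually (hΩo.mem_nhds hzΩ)
  obtain ⟨s, hs, hball⟩ := nhds_basis_closedBall.eventually_iff.1 (hmem.and hne)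
  exact ⟨s, hs, fun x hx => hball (by simpa [Real.closedBall_eq_Icc] using hx)⟩

lemma exists_right_inverse_hasDerivAt_one (hf : AnalyticAt ℂ f z₁) (hz₁ : f z₁ = 0)
    (hdf : deriv f z₁ ≠ 0) :
    ∃ g : ℂ → ℂ, g 0 = 0 ∧ HasDerivAt g 1 0 ∧
      ∀ᶠ t in 𝓝 0, f (z₁ + (deriv f z₁)⁻¹ * g t) = t := by
  have hf' : HasStrictDerivAt f (deriv f z₁) z₁ := hf.hasStrictDerivAt
  let φ := hf'.localInverse f _ _ hdf
  have hφ : HasDerivAt φ (deriv f z₁)⁻¹ 0 := hz₁ ▸ (hf'.to_localInverse hdf).hasDerivAt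
  have hφ0 : φ 0 = z₁ := hz₁ ▸ (hf'.eventually_left_inverse hdf).self_of_nhds
  refine ⟨fun t => deriv f z₁ * (φ t - z₁), by simp [hφ0], ?_, ?_⟩
  · simpa [mul_inv_cancel₀ hdf] using (hφ.sub_const z₁).const_mul (deriv f z₁)
  · filter_upwards [hz₁ ▸ hf'.eventually_right_inverse hdf] with t ht
    simpa [inv_mul_cancel_left₀ hdf] using ht

lemma eventually_sign_im_eq {g : ℂ → ℂ} (h0 : g 0 = 0) (hg : HasDerivAt g 1 0) :
    ∀ᶠ ε : ℝ in 𝓝 0, SignType.sign (g (ε * I)).im = SignType.sign ε := by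
  have hline : HasDerivAt (fun t : ℂ => t * I) I ((0 : ℝ) : ℂ) := by
    simpa using (hasDerivAt_id ((0 : ℝ) : ℂ)).mul_const I
  have hg' : HasDerivAt g 1 (((0 : ℝ) : ℂ) * I) := by simpa using hg
  have hre : HasDerivAt (fun ε : ℝ => (-I * g (ε * I)).re) 1 0 := by
    simpa [Function.comp_def] using
      ((HasDerivAt.comp ((0 : ℝ) : ℂ) hg' hline).const_mul (-I)).real_of_complex
  have him : HasDerivAt (fun ε : ℝ => (g (ε * I)).im) 1 0 := by simpa using hre
  filter_upwards [eventually_nhdsWithin_sign_eq_of_deriv_pos (him.deriv ▸ one_pos)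
    (by simp [h0])] with ε hε
  rwa [sub_zero] at hε

lemma eventually_div_mem_slitPlane {Y : Type*} [TopologicalSpace Y] [CompactSpace Y] {p : Y → ℂ}
    (hp : Continuous p) (hz₁ : ∀ t, p t ≠ z₁) :
    ∀ᶠ q : ℂ × ℂ in 𝓝 (z₁, z₁), ∀ t, (p t - q.1) / (p t - q.2) ∈ slitPlane := by
  have hlocal : ∀ t ∈ (univ : Set Y), ∀ᶠ x : (ℂ × ℂ) × Y in 𝓝 ((z₁, z₁), t),
      (p x.2 - x.1.1) / (p x.2 - x.1.2) ∈ slitPlane := fun t _ => by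
    have hne : p t - z₁ ≠ 0 := sub_ne_zero.2 (hz₁ t)
    refine ContinuousAt.eventually_mem ?_ (isOpen_slitPlane.mem_nhds ?_)
    · exact ContinuousAt.div (by fun_prop) (by fun_prop) hne
    · simp [div_self hne]
  simpa using isCompact_univ.eventually_forall_of_forall_eventually hlocal

lemma exists_preimages_of_im_axis (hf : AnalyticAt ℂ f z₁) (hfz : f z₁ = 0)
    (hdf : deriv f z₁ ≠ 0) {Y : Type*} [TopologicalSpace Y] [CompactSpace Y] {p : Y → ℂ}
    (hp : Continuous p) (hpz : ∀ t, p t ≠ z₁) {s : ℝ} (hs : 0 < s) :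
    ∃ (α β : ℂ) (ε : ℝ), ε ≠ 0 ∧ 0 < α.im ∧ β.im < 0 ∧ |α.re| < s ∧ |β.re| < s ∧
      f (z₁ + (deriv f z₁)⁻¹ * α) = ε * I ∧ f (z₁ + (deriv f z₁)⁻¹ * β) = (-ε : ℝ) * I ∧
      ∀ t, (p t - (z₁ + (deriv f z₁)⁻¹ * α)) / (p t - (z₁ + (deriv f z₁)⁻¹ * β)) ∈ slitPlane := by
  obtain ⟨g, hg0, hg, hfg⟩ := exists_right_inverse_hasDerivAt_one hf hfz hdf
  have hgI : Tendsto (fun ε : ℝ => g (ε * I)) (𝓝 0) (𝓝 0) :=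
    (by simpa [hg0] using hg.continuousAt.tendsto : Tendsto g (𝓝 0) (𝓝 0)).comp
      (Continuous.tendsto' (by fun_prop) _ _ (by simp))
  have hpt : Tendsto (fun ε : ℝ => z₁ + (deriv f z₁)⁻¹ * g (ε * I)) (𝓝 0) (𝓝 z₁) := by
    simpa using (hgI.const_mul (deriv f z₁)⁻¹).const_add z₁
  have hneg : Tendsto (fun ε : ℝ => -ε) (𝓝 0) (𝓝 0) := by simpa using continuous_neg.tendsto (0 : ℝ)
  have hre : ∀ᶠ ε : ℝ in 𝓝 0, |(g (ε * I)).re| < s :=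
    ((continuous_abs.comp continuous_re).continuousAt.tendsto.comp hgI).eventually_lt_const
      (by simpa using hs)
  have hfε : ∀ᶠ ε : ℝ in 𝓝 0, f (z₁ + (deriv f z₁)⁻¹ * g (ε * I)) = ε * I :=
    (Continuous.tendsto' (by fun_prop) (0 : ℝ) _ (by simp)).eventually hfg
  have hgood := (eventually_sign_im_eq hg0 hg).and (hre.and hfε)
  have hslit := (hpt.prodMk_nhds (hpt.comp hneg)).eventually (eventually_div_mem_slitPlane hp hpz)
  obtain ⟨ε, ⟨⟨hα, hαs, hfα⟩, ⟨hβ, hβs, hfβ⟩, hslit⟩, hε⟩ :=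
    ((hgood.and ((hneg.eventually hgood).and hslit)).filter_mono nhdsWithin_le_nhds |>.and
      (self_mem_nhdsWithin (s := Ioi (0 : ℝ)))).exists
  have hεpos : 0 < ε := hε
  rw [sign_pos hεpos, sign_eq_one_iff] at hα
  rw [sign_neg (neg_lt_zero.2 hεpos), sign_eq_neg_one_iff] at hβ
  exact ⟨_, _, ε, hεpos.ne', hα, hβ, hαs, hβs, hfα, hfβ, hslit⟩

lemma not_joinedIn_sides {s : ℝ} (hΩ : Convex ℝ Ω) (hΩo : IsOpen Ω)
    (hf : AnalyticOnNhd ℂ f Ω) (hz₁ : z₁ ∈ simpleZeros f Ω) (hs : 0 < s)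
    (hseg : ∀ x ∈ Icc (-s) s, z₁ + (deriv f z₁)⁻¹ * (x : ℝ) ∈ Ω ∧
      (x ≠ 0 → (f (z₁ + (deriv f z₁)⁻¹ * x)).re ≠ 0)) :
    ¬ JoinedIn ({z ∈ Ω | (f z).re = 0 → f z = 0} \ {z₁}) (z₁ + (deriv f z₁)⁻¹ * s)
      (z₁ + (deriv f z₁)⁻¹ * (-s : ℝ)) := by
  rintro ⟨p, hp⟩
  obtain ⟨hzΩ, hfz, hdf⟩ := hz₁
  let K : Set ℂ := range p ∪ (fun x : ℝ => z₁ + (deriv f z₁)⁻¹ * (x : ℂ)) '' Icc (-s) s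
  have hK : IsCompact K :=
    (isCompact_range p.continuous).union (isCompact_Icc.image (by fun_prop))
  have hKf : ∀ z ∈ K, z ∈ Ω ∧ ((f z).re = 0 → f z = 0) := by
    rintro _ (⟨t, rfl⟩ | ⟨x, hx, rfl⟩)
    · exact (hp t).1
    · obtain ⟨hmem, hne⟩ := hseg x hx
      refine ⟨hmem, fun h => ?_⟩
      obtain rfl : x = 0 := by_contra fun hx0 => hne hx0 h
      simpa using hfz
  have hlog : ∀ (w : ℂ) (y : ℝ), f w = y * I → y ≠ 0 → HasContinuousLogOn (· - w) K :=
    fun w y hw hy => hasContinuousLogOn_sub_of_re_eq_zero hΩ hΩo hf hK (fun z hz => (hKf z hz).1)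
      (fun z hz => (hKf z hz).2) (by simp [hw]) (by simp [hw, hy])
  obtain ⟨α, β, ε, hε, hα, hβ, hαs, hβs, hfα, hfβ, hslit⟩ :=
    exists_preimages_of_im_axis (hf z₁ hzΩ) hfz hdf p.continuous (fun t => (hp t).2) hs
  exact not_hasContinuousLogOn_div (inv_ne_zero hdf) hα hβ hαs hβs
    (fun x hx => Or.inr ⟨x, hx, rfl⟩) p subset_union_left hslit
    ((hlog _ _ hfα hε).div (hlog _ _ hfβ (neg_ne_zero.2 hε)))

theorem exists_joinedIn_and_not_joinedIn_of_mem_simpleZeros (hΩ : Convex ℝ Ω) (hΩo : IsOpen Ω)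
    (hf : AnalyticOnNhd ℂ f Ω) (hz₁ : z₁ ∈ simpleZeros f Ω) :
    ∃ c₁ ∈ {z ∈ Ω | (f z).re ≠ 0}, ∃ c₂ ∈ {z ∈ Ω | (f z).re ≠ 0},
      JoinedIn (insert z₁ {z ∈ Ω | (f z).re ≠ 0}) c₁ z₁ ∧
      JoinedIn (insert z₁ {z ∈ Ω | (f z).re ≠ 0}) c₂ z₁ ∧
      ¬ JoinedIn ({z ∈ Ω | (f z).re = 0 → f z = 0} \ {z₁}) c₁ c₂ := by
  obtain ⟨s, hs, hseg⟩ := exists_segment_re_ne_zero hΩo hf hz₁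
  have hjoin : ∀ x ∈ Icc (-s) s, JoinedIn (insert z₁ {z ∈ Ω | (f z).re ≠ 0})
      (z₁ + (deriv f z₁)⁻¹ * (x : ℝ)) z₁ := fun x hx => by
    refine (JoinedIn.ofLine (f := fun τ : ℝ => z₁ + (deriv f z₁)⁻¹ * ((τ * x : ℝ) : ℂ))
      (by fun_prop) (by simp) (by simp) ?_).symm
    rintro _ ⟨τ, hτ, rfl⟩
    have hτx : τ * x ∈ Icc (-s) s := by
      rw [mem_Icc, ← abs_le, abs_mul, abs_of_nonneg hτ.1]
      exact (mul_le_of_le_one_left (abs_nonneg x) hτ.2).trans (abs_le.2 hx)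
    by_cases h0 : τ * x = 0
    · exact Or.inl (by simp [h0])
    · exact Or.inr ⟨(hseg _ hτx).1, (hseg _ hτx).2 h0⟩
  have hs' : s ∈ Icc (-s) s := ⟨by linarith, le_rfl⟩
  have hns' : -s ∈ Icc (-s) s := ⟨le_rfl, by linarith⟩
  exact ⟨_, ⟨(hseg s hs').1, (hseg s hs').2 hs.ne'⟩, _,
    ⟨(hseg (-s) hns').1, (hseg (-s) hns').2 (neg_ne_zero.2 hs.ne')⟩, hjoin s hs', hjoin (-s) hns',
    not_joinedIn_sides hΩ hΩo hf hz₁ hs hseg⟩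

end SimpleZeros

section CountingComponents

variable {X : Type*} [TopologicalSpace X] {D : Set X}

lemma exists_pairwise_not_joinedIn_of_insert {z c₁ c₂ : X} (hc₁ : c₁ ∈ D) (hc₂ : c₂ ∈ D)
    (hj₁ : JoinedIn (insert z D) c₁ z) (hj₂ : JoinedIn (insert z D) c₂ z)
    (hnj : ¬ JoinedIn D c₁ c₂) {P : Finset X} (hP : ↑P ⊆ insert z D)
    (hPj : (P : Set X).Pairwise fun x y => ¬ JoinedIn (insert z D) x y) :
    ∃ Q : Finset X, ↑Q ⊆ D ∧ P.card + 1 ≤ Q.card ∧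
      (Q : Set X).Pairwise fun x y => ¬ JoinedIn D x y := by
  classical
  let Q : Finset X := P.filter fun x => ¬ JoinedIn (insert z D) x z
  have hQD : ∀ x ∈ Q, x ∈ D := fun x hx => by
    obtain ⟨hxP, hxz⟩ := Finset.mem_filter.1 hx
    refine (hP hxP).resolve_left ?_
    rintro rfl
    exact hxz (JoinedIn.refl (hP hxP))
  have hQP : P.card ≤ Q.card + 1 := by
    rw [← P.card_filter_add_card_filter_not fun x => ¬ JoinedIn (insert z D) x z]
    refine Nat.add_le_add_left (Finset.card_le_one.2 fun a ha b hb => ?_) _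
    simp only [Finset.mem_filter, not_not] at ha hb
    by_contra hab
    exact hPj ha.1 hb.1 hab (ha.2.trans hb.2.symm)
  have hsep : ∀ c, JoinedIn (insert z D) c z → ∀ x ∈ Q, ¬ JoinedIn D c x := fun c hc x hx h =>
    (Finset.mem_filter.1 hx).2 ((h.mono (subset_insert _ _)).symm.trans hc)
  have hnotMem : ∀ c, JoinedIn (insert z D) c z → c ∉ Q := fun c hc h =>
    (Finset.mem_filter.1 h).2 hc
  have hne : c₁ ≠ c₂ := by
    rintro rfl
    exact hnj (JoinedIn.refl hc₁)
  have : Std.Symm fun x y => ¬ JoinedIn D x y := ⟨fun x y h h' => h h'.symm⟩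
  refine ⟨insert c₁ (insert c₂ Q), ?_, ?_, ?_⟩
  · simpa only [Finset.coe_insert, insert_subset_iff] using ⟨hc₁, hc₂, hQD⟩
  · rw [Finset.card_insert_of_notMem (by simp [hne, hnotMem c₁ hj₁]),
      Finset.card_insert_of_notMem (hnotMem c₂ hj₂)]
    omega
  · rw [Finset.coe_insert, Finset.coe_insert, pairwise_insert_of_symm, pairwise_insert_of_symm]
    refine ⟨⟨fun a ha b hb hab h => ?_, fun b hb _ => hsep c₂ hj₂ b hb⟩, ?_⟩
    · exact hPj (Finset.mem_filter.1 ha).1 (Finset.mem_filter.1 hb).1 hab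
        (h.mono (subset_insert _ _))
    · rintro b (rfl | hb) _
      exacts [hnj, hsep c₁ hj₁ b hb]

lemma exists_pairwise_not_joinedIn {G : Finset X} (hD : D.Nonempty) (hGD : ∀ z ∈ G, z ∉ D)
    (hG : ∀ z ∈ G, ∃ c₁ ∈ D, ∃ c₂ ∈ D, JoinedIn (insert z D) c₁ z ∧ JoinedIn (insert z D) c₂ z ∧
      ¬ JoinedIn ((D ∪ G) \ {z}) c₁ c₂) :
    ∃ P : Finset X, ↑P ⊆ D ∧ G.card + 1 ≤ P.card ∧
      (P : Set X).Pairwise fun x y => ¬ JoinedIn D x y := by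
  classical
  induction G using Finset.induction_on generalizing D with
  | empty =>
    obtain ⟨x, hx⟩ := hD
    exact ⟨{x}, by simpa using hx, by simp, by simp⟩
  | insert z₁ G hz₁G ih =>
    have hz₁ := Finset.mem_insert_self z₁ G
    have hcoe : insert z₁ D ∪ G = D ∪ (insert z₁ G : Finset X) := by
      rw [Finset.coe_insert, insert_union, union_insert]
    obtain ⟨P, hP, hcard, hPj⟩ := ih (D := insert z₁ D) (insert_nonempty _ _)
      (fun z hz => by
        rintro (rfl | hzD)
        exacts [hz₁G hz, hGD z (Finset.mem_insert_of_mem hz) hzD])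
      (fun z hz => by
        obtain ⟨c₁, hc₁, c₂, hc₂, hj₁, hj₂, hnj⟩ := hG z (Finset.mem_insert_of_mem hz)
        have hsub : insert z D ⊆ insert z (insert z₁ D) := insert_subset_insert (subset_insert _ _)
        exact ⟨c₁, Or.inr hc₁, c₂, Or.inr hc₂, hj₁.mono hsub, hj₂.mono hsub, hcoe ▸ hnj⟩)
    obtain ⟨c₁, hc₁, c₂, hc₂, hj₁, hj₂, hnj⟩ := hG z₁ hz₁
    obtain ⟨Q, hQ, hPQ, hQj⟩ := exists_pairwise_not_joinedIn_of_insert hc₁ hc₂ hj₁ hj₂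
      (fun h => hnj (h.mono fun x hx => ⟨Or.inl hx, by
        rintro rfl
        exact hGD x hz₁ hx⟩)) hP hPj
    exact ⟨Q, hQ, by rw [Finset.card_insert_of_notMem hz₁G]; omega, hQj⟩

lemma joinedIn_of_connectedComponentIn_eq [LocallyPathConnectedSpace X] (hD : IsOpen D) {x y : X}
    (hx : x ∈ D) (hy : y ∈ D) (h : connectedComponentIn D x = connectedComponentIn D y) :
    JoinedIn D x y := by
  have hC : IsPathConnected (connectedComponentIn D x) :=
    hD.connectedComponentIn.isConnected_iff_isPathConnected.1
      (isConnected_connectedComponentIn_iff.2 hx)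
  exact (hC.joinedIn x (mem_connectedComponentIn hx) y (h ▸ mem_connectedComponentIn hy)).mono
    (connectedComponentIn_subset _ _)

lemma encard_image_connectedComponentIn {Y : Type*} [TopologicalSpace Y] (T : X ≃ₜ Y) (D : Set X) :
    (connectedComponentIn (T '' D) '' (T '' D)).encard = (connectedComponentIn D '' D).encard := by
  have h : connectedComponentIn (T '' D) '' (T '' D) =
      image T '' (connectedComponentIn D '' D) := by
    rw [image_image, image_image]
    exact image_congr fun x hx => (T.image_connectedComponentIn hx).symm
  rw [h, T.injective.image_injective.encard_image]

end CountingComponents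

theorem encard_simpleZeros_add_one_le {f : ℂ → ℂ} {Ω : Set ℂ} (hΩ : Convex ℝ Ω) (hΩo : IsOpen Ω)
    (hf : AnalyticOnNhd ℂ f Ω) (hne : {z ∈ Ω | (f z).re ≠ 0}.Nonempty) :
    (simpleZeros f Ω).encard + 1 ≤
      (connectedComponentIn {z ∈ Ω | (f z).re ≠ 0} '' {z ∈ Ω | (f z).re ≠ 0}).encard := by
  set D : Set ℂ := {z ∈ Ω | (f z).re ≠ 0}
  have hD : IsOpen D := (continuous_re.comp_continuousOn hf.continuousOn).isOpen_inter_preimage hΩo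
    isOpen_compl_singleton
  have hcard : ∀ G : Finset ℂ, ↑G ⊆ simpleZeros f Ω →
      (G.card + 1 : ℕ∞) ≤ (connectedComponentIn D '' D).encard := fun G hG => by
    obtain ⟨P, hP, hGP, hPj⟩ := exists_pairwise_not_joinedIn (G := G) hne
      (fun z hz hzD => hzD.2 (by simp [(hG hz).2.1])) (fun z hz => by
        obtain ⟨c₁, hc₁, c₂, hc₂, hj₁, hj₂, hnj⟩ :=
          exists_joinedIn_and_not_joinedIn_of_mem_simpleZeros hΩ hΩo hf (hG hz)
        refine ⟨c₁, hc₁, c₂, hc₂, hj₁, hj₂, fun h => hnj (h.mono (sdiff_subset_sdiff_left ?_))⟩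
        exact union_subset (fun x hx => ⟨hx.1, fun h0 => absurd h0 hx.2⟩)
          fun x hx => ⟨(hG hx).1, fun _ => (hG hx).2.1⟩)
    have hinj : InjOn (connectedComponentIn D) P := fun x hx y hy hxy => by
      by_contra hne'
      exact hPj hx hy hne' (joinedIn_of_connectedComponentIn_eq hD (hP hx) (hP hy) hxy)
    calc (G.card + 1 : ℕ∞) ≤ P.card := mod_cast hGP
      _ = (connectedComponentIn D '' P).encard := by
        rw [hinj.encard_image, encard_coe_eq_coe_finsetCard]
      _ ≤ (connectedComponentIn D '' D).encard := encard_le_encard (image_mono hP)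
  obtain hfin | hinf := (simpleZeros f Ω).finite_or_infinite
  · rw [hfin.encard_eq_coe_toFinset_card]
    exact hcard hfin.toFinset (by simp)
  · refine le_top.trans_eq (ENat.eq_top_iff_forall_ge.2 fun m => ?_).symm
    obtain ⟨G, hG, rfl⟩ := hinf.exists_subset_card_eq m
    exact le_self_add.trans (hcard G hG)

section Averaging

open Real (posLog)

lemma lintegral_posLog_inv : ∫⁻ t : ℝ, ENNReal.ofReal (posLog t⁻¹) = 2 := by
  have hnonneg : ∀ t ∈ Ioc (-1 : ℝ) 1, 0 ≤ -Real.log t := fun t ht => by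
    rw [← Real.log_abs, Left.nonneg_neg_iff]
    exact Real.log_nonpos (abs_nonneg t) (abs_le.2 ⟨ht.1.le, ht.2⟩)
  have hsupp : (fun t : ℝ => ENNReal.ofReal (posLog t⁻¹)) =
      (Ioc (-1) 1).indicator fun t => ENNReal.ofReal (-Real.log t) := by
    ext t
    by_cases ht : t ∈ Ioc (-1 : ℝ) 1
    · rw [indicator_of_mem ht, Real.posLog_apply, Real.log_inv, max_eq_right (hnonneg t ht)]
    · have h1 : 1 ≤ |t| := by
        rw [le_abs]
        grind
      rw [indicator_of_notMem ht, (Real.posLog_eq_zero_iff _).2, ENNReal.ofReal_zero]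
      rw [abs_inv]
      exact inv_le_one_of_one_le₀ h1
  have hint : IntegrableOn (fun t => -Real.log t) (Ioc (-1) 1) :=
    (intervalIntegrable_iff_integrableOn_Ioc_of_le (by norm_num)).1
      intervalIntegral.intervalIntegrable_log'.neg
  rw [hsupp, lintegral_indicator measurableSet_Ioc,
    ← ofReal_integral_eq_lintegral_ofReal hint
      (ae_restrict_of_forall_mem measurableSet_Ioc hnonneg),
    ← intervalIntegral.integral_of_le (by norm_num), intervalIntegral.integral_neg, integral_log]
  norm_num

lemma posLog_inv_norm_sub_mul_I_le {w : ℂ} {y : ℝ} (h : w.im ≠ y) :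
    posLog ‖w - y * I‖⁻¹ ≤ posLog (w.im - y)⁻¹ := by
  rw [← Real.posLog_abs (w.im - y)⁻¹, abs_inv]
  have him : |w.im - y| ≤ ‖w - y * I‖ := by simpa using abs_im_le_norm (w - y * I)
  exact Real.posLog_le_posLog (by positivity) (inv_anti₀ (abs_pos.2 (sub_ne_zero.2 h)) him)

lemma lintegral_posLog_inv_norm_sub_mul_I_le (w : ℂ) :
    ∫⁻ y : ℝ, ENNReal.ofReal (posLog ‖w - y * I‖⁻¹) ≤ 2 := by
  rw [← lintegral_posLog_inv,
    ← lintegral_sub_left_eq_self (fun t : ℝ => ENNReal.ofReal (posLog t⁻¹)) w.im]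
  refine lintegral_mono_ae ?_
  filter_upwards [Measure.ae_ne volume w.im] with y hy
  exact ENNReal.ofReal_le_ofReal (posLog_inv_norm_sub_mul_I_le hy.symm)

lemma measurable_posLog_inv_norm_sub_mul_I {α : Type*} [MeasurableSpace α] {w : α → ℂ}
    (hw : Measurable w) : Measurable fun p : ℝ × α => posLog ‖w p.2 - p.1 * I‖⁻¹ := by
  unfold posLog
  fun_prop

lemma exists_lintegral_posLog_inv_norm_sub_mul_I_le {α : Type*} [MeasurableSpace α]
    (μ : Measure α) [SFinite μ] {w : α → ℂ} (hw : Measurable w) {S : Set ℝ} (hS : volume S = 0) :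
    ∃ y ∈ Icc (0 : ℝ) 1, y ∉ S ∧
      ∫⁻ a, ENNReal.ofReal (posLog ‖w a - y * I‖⁻¹) ∂μ ≤ 2 * μ univ := by
  let ν : Measure ℝ := volume.restrict (Icc 0 1)
  have : IsProbabilityMeasure ν := ⟨by simp [ν]⟩
  have hm := (measurable_posLog_inv_norm_sub_mul_I hw).ennreal_ofReal
  have hmean : ∫⁻ y, ∫⁻ a, ENNReal.ofReal (posLog ‖w a - y * I‖⁻¹) ∂μ ∂ν ≤ 2 * μ univ := by
    rw [lintegral_lintegral_swap hm.aemeasurable, ← lintegral_const]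
    exact lintegral_mono fun a =>
      (setLIntegral_le_lintegral _ _).trans (lintegral_posLog_inv_norm_sub_mul_I_le (w a))
  have hnull : ν (S ∪ (Icc 0 1)ᶜ) = 0 :=
    measure_union_null (Measure.restrict_le_self.absolutelyContinuous hS) (by
      rw [Measure.restrict_apply measurableSet_Icc.compl, compl_inter_self, measure_empty])
  obtain ⟨y, hyS, hy⟩ := exists_notMem_null_le_lintegral
    (hm.lintegral_prod_right' (ν := μ)).aemeasurable hnull
  rw [mem_union, not_or, notMem_compl_iff] at hyS
  exact ⟨y, hyS.2, hyS.1, hy.trans hmean⟩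

theorem exists_circleAverage_posLog_inv_norm_sub_mul_I_le {f : ℂ → ℂ} {c : ℂ} {R : ℝ}
    (hf : ContinuousOn f (sphere c |R|)) {S : Set ℝ} (hS : volume S = 0) :
    ∃ y ∈ Icc (0 : ℝ) 1, y ∉ S ∧
      Real.circleAverage (fun z => posLog ‖f z - y * I‖⁻¹) c R ≤ 2 := by
  have hw : Measurable fun θ => f (circleMap c R θ) :=
    (hf.comp_continuous (continuous_circleMap c R) (circleMap_mem_sphere' c R)).measurable
  obtain ⟨y, hy, hyS, hle⟩ := exists_lintegral_posLog_inv_norm_sub_mul_I_le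
    (volume.restrict (Ioc 0 (2 * Real.pi))) hw hS
  refine ⟨y, hy, hyS, ?_⟩
  have hm := (measurable_posLog_inv_norm_sub_mul_I hw).comp (measurable_prodMk_left (x := y))
  rw [Real.circleAverage_def, intervalIntegral.integral_of_le Real.two_pi_pos.le,
    integral_eq_lintegral_of_nonneg_ae (Eventually.of_forall fun _ => Real.posLog_nonneg)
      hm.aestronglyMeasurable, smul_eq_mul, inv_mul_le_iff₀ Real.two_pi_pos]
  refine ENNReal.toReal_le_of_le_ofReal (by positivity) (hle.trans_eq ?_)
  rw [Measure.restrict_apply_univ, Real.volume_Ioc, sub_zero, mul_comm,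
    ENNReal.ofReal_mul Real.two_pi_pos.le, ENNReal.ofReal_ofNat]

end Averaging

section Factorization

variable {g : ℂ → ℂ} {U : Set ℂ} {s : Finset ℂ}

lemma exists_eq_prod_sub_mul (hU : IsOpen U) (hg : AnalyticOnNhd ℂ g U)
    (hs : ∀ a ∈ s, a ∈ U ∧ g a = 0) :
    ∃ G : ℂ → ℂ, AnalyticOnNhd ℂ G U ∧ ∀ z, g z = (∏ a ∈ s, (z - a)) * G z := by
  classical
  induction s using Finset.induction_on generalizing g with
  | empty => exact ⟨g, hg, by simp⟩
  | insert a s has ih =>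
    obtain ⟨haU, ha⟩ := hs a (Finset.mem_insert_self _ _)
    have hmul : ∀ z, g z = (z - a) * dslope g a z := fun z => by
      simpa [ha] using (sub_smul_dslope g a z).symm
    have hdslope : AnalyticOnNhd ℂ (dslope g a) U :=
      ((differentiableOn_dslope (hU.mem_nhds haU)).2 hg.differentiableOn).analyticOnNhd hU
    obtain ⟨G, hG, hGmul⟩ := ih hdslope fun b hb => by
      obtain ⟨hbU, hb0⟩ := hs b (Finset.mem_insert_of_mem hb)
      exact ⟨hbU, (mul_eq_zero.1 (hmul b ▸ hb0)).resolve_left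
        (sub_ne_zero.2 (ne_of_mem_of_not_mem hb has))⟩
    exact ⟨G, hG, fun z => by rw [hmul, hGmul, Finset.prod_insert has, mul_assoc]⟩

lemma exists_eq_prod_sub_mul_ne_zero (hU : IsOpen U) (hg : AnalyticOnNhd ℂ g U)
    (hs : ↑s = simpleZeros g U) (hsimple : ∀ z ∈ U, g z = 0 → deriv g z ≠ 0) :
    ∃ G : ℂ → ℂ, AnalyticOnNhd ℂ G U ∧ (∀ z ∈ U, G z ≠ 0) ∧
      ∀ z, g z = (∏ a ∈ s, (z - a)) * G z := by
  have hmem : ∀ a ∈ s, a ∈ simpleZeros g U := fun a ha => hs ▸ ha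
  obtain ⟨G, hG, hmul⟩ := exists_eq_prod_sub_mul hU hg fun a ha => ⟨(hmem a ha).1, (hmem a ha).2.1⟩
  refine ⟨G, hG, fun z hz h0 => ?_, hmul⟩
  have hgz : g z = 0 := by rw [hmul, h0, mul_zero]
  have hzs : z ∈ s := by
    rw [← Finset.mem_coe, hs]
    exact ⟨hz, hgz, hsimple z hz hgz⟩
  refine hsimple z hz hgz ?_
  have hprod : DifferentiableAt ℂ (fun z => ∏ a ∈ s, (z - a)) z := by fun_prop
  rw [funext hmul, deriv_fun_mul hprod (hG z hz).differentiableAt, h0,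
    Finset.prod_eq_zero hzs (sub_self z), mul_zero, zero_mul, add_zero]

end Factorization

section CircleAverages

open Real (posLog circleAverage)
open InnerProductSpace (HarmonicOnNhd)

variable {c : ℂ} {r R : ℝ}

lemma le_mul_circleAverage_max_zero {u : ℂ → ℝ} (hu : HarmonicOnNhd u (closedBall c R))
    (hrR : r < R) {z : ℂ} (hz : z ∈ closedBall c r) :
    u z ≤ (R + r) / (R - r) * circleAverage (fun w => max 0 (u w)) c R := by
  have hr : 0 ≤ r := dist_nonneg.trans hz
  have hR : |R| = R := abs_of_pos (hr.trans_lt hrR)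
  have hzR : z ∈ ball c R := closedBall_subset_ball hrR hz
  have hzr : ‖z - c‖ ≤ r := mem_closedBall_iff_norm.1 hz
  have hu' : ContinuousOn u (sphere c |R|) := by
    rw [hR]
    exact hu.continuousOn.mono sphere_subset_closedBall
  have hP : ContinuousOn (poissonKernel c z) (sphere c |R|) := by
    rw [poissonKernel_eq_re_herglotzRieszKernel]
    exact continuous_re.comp_continuousOn (continuousOn_herglotzRieszKernel_sphere hzR)
  have hPle : ∀ w ∈ sphere c |R|, 0 ≤ poissonKernel c z w ∧
      poissonKernel c z w ≤ (R + r) / (R - r) := fun w hw => by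
    rw [hR] at hw
    rw [poissonKernel_eq_re_herglotzRieszKernel]
    have hlt : 0 < R - ‖z - c‖ := by linarith
    constructor
    · exact (div_nonneg hlt.le (by linarith [norm_nonneg (z - c)])).trans
        (le_re_herglotzRieszKernel hw hzR)
    · refine (re_herglotzRieszKernel_le hw hzR).trans ?_
      gcongr
      linarith
  rw [← hu.circleAverage_poissonKernel_smul hzR, ← smul_eq_mul, ← Real.circleAverage_fun_smul]
  refine Real.circleAverage_mono (hP.smul hu').circleIntegrable'
    (ContinuousOn.circleIntegrable' (by fun_prop)) fun w hw => ?_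
  obtain ⟨hP0, hPk⟩ := hPle w hw
  exact (mul_le_mul_of_nonneg_left (le_max_right 0 (u w)) hP0).trans
    (mul_le_mul_of_nonneg_right hPk (le_max_left 0 (u w)))

lemma circleAverage_posLog_norm_eq {G : ℂ → ℂ} (hG : AnalyticOnNhd ℂ G (closedBall c |R|))
    (hG0 : ∀ z ∈ closedBall c |R|, G z ≠ 0) :
    circleAverage (fun z => posLog ‖G z‖) c R =
      Real.log ‖G c‖ + circleAverage (fun z => posLog ‖G z‖⁻¹) c R := by
  have hG' := (hG.mono sphere_subset_closedBall).meromorphicOn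
  have hinv : CircleIntegrable (fun z => posLog ‖G z‖⁻¹) c R := by
    simpa only [Pi.inv_apply, norm_inv] using hG'.inv.circleIntegrable_posLog_norm
  rw [← hG.circleAverage_log_norm_of_ne_zero hG0,
    ← Real.circleAverage_fun_add hG'.circleIntegrable_log_norm hinv]
  simp_rw [← Real.posLog_sub_posLog_inv (x := ‖G _‖), sub_add_cancel]

variable {g G : ℂ → ℂ} {s : Finset ℂ}

lemma log_norm_add_card_mul_log_le {B ρ : ℝ} (hρ : 0 < ρ)
    (hG : AnalyticOnNhd ℂ G (closedBall c ρ)) (hG0 : ∀ z ∈ closedBall c ρ, G z ≠ 0)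
    (hmul : ∀ z, g z = (∏ a ∈ s, (z - a)) * G z) (hB : ∀ z ∈ sphere c ρ, ‖g z‖ ≤ B) :
    Real.log ‖G c‖ + s.card * Real.log ρ ≤ posLog B := by
  rw [← abs_of_pos hρ] at hG hG0 hB
  have hG' := (hG.mono sphere_subset_closedBall).meromorphicOn
  have hint : ∀ a ∈ s, CircleIntegrable (fun z => Real.log ‖z - a‖) c ρ := fun a _ =>
    circleIntegrable_log_norm_sub_const ρ
  have hcongr : (fun z => Real.log ‖g z‖) =ᶠ[codiscreteWithin (sphere c |ρ|)]
      fun z => Real.log ‖G z‖ + ∑ a ∈ s, Real.log ‖z - a‖ := by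
    filter_upwards [self_mem_codiscreteWithin (sphere c |ρ|),
      codiscreteWithin_mono (subset_univ _) s.finite_toSet.compl_mem_codiscrete] with z hz hzs
    have hne : ∀ a ∈ s, ‖z - a‖ ≠ 0 := fun a ha =>
      norm_ne_zero_iff.2 (sub_ne_zero.2 (ne_of_mem_of_not_mem ha hzs).symm)
    rw [hmul, norm_mul, norm_prod, Real.log_mul (Finset.prod_ne_zero_iff.2 hne)
      (norm_ne_zero_iff.2 (hG0 z (sphere_subset_closedBall hz))), Real.log_prod hne, add_comm]
  calc Real.log ‖G c‖ + s.card * Real.log ρ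
      ≤ Real.log ‖G c‖ + ∑ a ∈ s, circleAverage (fun z => Real.log ‖z - a‖) c ρ := by
        rw [← nsmul_eq_mul]
        gcongr
        refine Finset.card_nsmul_le_sum s _ _ fun a _ => ?_
        rw [circleAverage_log_norm_sub_const_eq_log_radius_add_posLog hρ.ne']
        exact le_add_of_nonneg_right Real.posLog_nonneg
    _ = circleAverage (fun z => Real.log ‖g z‖) c ρ := by
        rw [Real.circleAverage_congr_codiscreteWithin hcongr hρ.ne',
          Real.circleAverage_fun_add hG'.circleIntegrable_log_norm
            (CircleIntegrable.fun_sum s hint),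
          hG.circleAverage_log_norm_of_ne_zero hG0, Real.circleAverage_fun_sum hint]
    _ ≤ posLog B := by
        refine Real.circleAverage_mono_on_of_le_circle ?_ fun z hz => ?_
        · rw [funext hmul]
          exact MeromorphicOn.circleIntegrable_log_norm fun z hz => (by fun_prop :
            AnalyticAt ℂ (fun z => ∏ a ∈ s, (z - a)) z).meromorphicAt.fun_mul (hG' z hz)
        · exact (le_max_right 0 _).trans (Real.posLog_le_posLog (norm_nonneg _) (hB z hz))

lemma circleAverage_posLog_inv_norm_le {L : ℝ} (hR : 0 < R)
    (hG : AnalyticOnNhd ℂ G (sphere c R)) (hmul : ∀ z, g z = (∏ a ∈ s, (z - a)) * G z)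
    (hL : ∀ a ∈ s, ∀ z ∈ sphere c R, ‖z - a‖ ≤ L) :
    circleAverage (fun z => posLog ‖G z‖⁻¹) c R ≤
      s.card * posLog L + circleAverage (fun z => posLog ‖g z‖⁻¹) c R := by
  rw [← abs_of_pos hR] at hG hL
  have hP : MeromorphicOn (fun z => ∏ a ∈ s, (z - a)) (sphere c |R|) := fun z _ =>
    (by fun_prop : AnalyticAt ℂ (fun z => ∏ a ∈ s, (z - a)) z).meromorphicAt
  have hg : MeromorphicOn g⁻¹ (sphere c |R|) := by
    rw [funext hmul]
    exact (hP.mul hG.meromorphicOn).inv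
  have hint : CircleIntegrable (fun z => posLog ‖g z‖⁻¹) c R := by
    simpa only [Pi.inv_apply, norm_inv] using hg.circleIntegrable_posLog_norm
  have hcongr : (fun z => posLog ‖G z‖⁻¹) =ᶠ[codiscreteWithin (sphere c |R|)]
      fun z => posLog ‖(∏ a ∈ s, (z - a)) * (g z)⁻¹‖ := by
    filter_upwards [codiscreteWithin_mono (subset_univ _)
      s.finite_toSet.compl_mem_codiscrete] with z hzs
    have hne : ∏ a ∈ s, (z - a) ≠ 0 :=
      Finset.prod_ne_zero_iff.2 fun a ha => sub_ne_zero.2 (ne_of_mem_of_not_mem ha hzs).symm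
    rw [hmul, mul_inv, mul_inv_cancel_left₀ hne, norm_inv]
  rw [Real.circleAverage_congr_codiscreteWithin hcongr hR.ne',
    ← Real.circleAverage_const (s.card * posLog L) c R,
    ← Real.circleAverage_fun_add (circleIntegrable_const _ _ _) hint]
  refine Real.circleAverage_mono (hP.mul hg).circleIntegrable_posLog_norm
    ((circleIntegrable_const _ _ _).add hint) fun z hz => ?_
  rw [norm_mul, norm_prod, norm_inv]
  refine Real.posLog_mul.trans (add_le_add_left ((Real.posLog_prod s _).trans ?_) _)
  rw [← nsmul_eq_mul]
  exact Finset.sum_le_card_nsmul s _ _ fun a ha =>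
    Real.posLog_le_posLog (norm_nonneg _) (hL a ha z hz)

end CircleAverages

section SimpleZeroBound

open Real (posLog circleAverage)

variable {c : ℂ} {f g G : ℂ → ℂ} {s : Finset ℂ} {r R ρ B L K : ℝ}

lemma circleAverage_posLog_norm_le (hρ : 0 < ρ) (hρR : ρ ≤ R)
    (hG : AnalyticOnNhd ℂ G (closedBall c R)) (hG0 : ∀ z ∈ closedBall c R, G z ≠ 0)
    (hmul : ∀ z, g z = (∏ a ∈ s, (z - a)) * G z)
    (hL : ∀ a ∈ s, ∀ z ∈ closedBall c R, ‖z - a‖ ≤ L) (hB : ∀ z ∈ sphere c ρ, ‖g z‖ ≤ B) :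
    circleAverage (fun z => posLog ‖G z‖) c R ≤ posLog B + s.card * (posLog L - Real.log ρ) +
      circleAverage (fun z => posLog ‖g z‖⁻¹) c R := by
  have hR : 0 < R := hρ.trans_le hρR
  have hρsub := closedBall_subset_closedBall (x := c) hρR
  have hcenter := log_norm_add_card_mul_log_le hρ (hG.mono hρsub)
    (fun z hz => hG0 z (hρsub hz)) hmul hB
  have hinv := circleAverage_posLog_inv_norm_le hR (hG.mono sphere_subset_closedBall) hmul
    fun a ha z hz => hL a ha z (sphere_subset_closedBall hz)
  rw [circleAverage_posLog_norm_eq (by rwa [abs_of_pos hR]) (by rwa [abs_of_pos hR])]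
  linarith

lemma norm_le_pow_card_mul_exp (hr : r < R) (hρ : 0 < ρ) (hρR : ρ ≤ R)
    (hG : AnalyticOnNhd ℂ G (closedBall c R)) (hG0 : ∀ z ∈ closedBall c R, G z ≠ 0)
    (hmul : ∀ z, g z = (∏ a ∈ s, (z - a)) * G z)
    (hL : ∀ a ∈ s, ∀ z ∈ closedBall c R, ‖z - a‖ ≤ L) (hB : ∀ z ∈ sphere c ρ, ‖g z‖ ≤ B)
    {z : ℂ} (hz : z ∈ closedBall c r) :
    ‖g z‖ ≤ L ^ s.card * Real.exp ((R + r) / (R - r) * (posLog B +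
      s.card * (posLog L - Real.log ρ) + circleAverage (fun z => posLog ‖g z‖⁻¹) c R)) := by
  have hr0 : 0 ≤ r := dist_nonneg.trans hz
  have hzR : z ∈ closedBall c R := closedBall_subset_closedBall hr.le hz
  have hharnack : Real.log ‖G z‖ ≤ (R + r) / (R - r) * circleAverage (fun z => posLog ‖G z‖) c R :=
    le_mul_circleAverage_max_zero (fun w hw => (hG w hw).harmonicAt_log_norm (hG0 w hw)) hr hz
  have hprod : ∏ a ∈ s, ‖z - a‖ ≤ L ^ s.card := by
    simpa only [Finset.prod_const] using
      Finset.prod_le_prod (fun a _ => norm_nonneg (z - a)) fun a ha => hL a ha z hzR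
  have hk : 0 ≤ (R + r) / (R - r) := div_nonneg (by linarith) (by linarith)
  rw [hmul, norm_mul, norm_prod, ← Real.exp_log (norm_pos_iff.2 (hG0 z hzR))]
  gcongr
  · exact (Finset.prod_nonneg fun a _ => norm_nonneg (z - a)).trans hprod
  · exact hharnack.trans (mul_le_mul_of_nonneg_left
      (circleAverage_posLog_norm_le hρ hρR hG hG0 hmul hL hB) hk)

lemma norm_le_of_encard_simpleZeros_le {D : ℝ} {N : ℕ} (hg : AnalyticOnNhd ℂ g (ball c D))
    (hsimple : ∀ z ∈ ball c D, g z = 0 → deriv g z ≠ 0)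
    (hN : (simpleZeros g (ball c D)).encard ≤ N) (hρ : 0 < ρ) (hρR : ρ ≤ R) (hrR : r < R)
    (hRD : R < D) (hB : ∀ z ∈ sphere c ρ, ‖g z‖ ≤ B)
    (hK : circleAverage (fun z => posLog ‖g z‖⁻¹) c R ≤ K) {z : ℂ} (hz : z ∈ closedBall c r) :
    ‖g z‖ ≤ (2 * D + 1) ^ N * Real.exp ((R + r) / (R - r) *
      (posLog B + N * (posLog (2 * D + 1) + |Real.log ρ|) + K)) := by
  have hfin : (simpleZeros g (ball c D)).Finite := finite_of_encard_le_coe hN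
  have hs : ↑hfin.toFinset = simpleZeros g (ball c D) := hfin.coe_toFinset
  have hcard : hfin.toFinset.card ≤ N := by
    rwa [hfin.encard_eq_coe_toFinset_card, Nat.cast_le] at hN
  obtain ⟨G, hG, hG0, hmul⟩ := exists_eq_prod_sub_mul_ne_zero isOpen_ball hg hs hsimple
  have hsub : closedBall c R ⊆ ball c D := closedBall_subset_ball hRD
  have hr0 : 0 ≤ r := dist_nonneg.trans hz
  have hL : ∀ a ∈ hfin.toFinset, ∀ w ∈ closedBall c R, ‖w - a‖ ≤ 2 * D + 1 := fun a ha w hw => by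
    have ha' := mem_ball'.1 (hfin.mem_toFinset.1 ha).1
    rw [← dist_eq_norm]
    linarith [dist_triangle w c a, mem_ball.1 (hsub hw)]
  refine (norm_le_pow_card_mul_exp hrR hρ hρR (hG.mono hsub) (fun w hw => hG0 w (hsub hw)) hmul hL
    hB hz).trans ?_
  have hk : 0 ≤ (R + r) / (R - r) := div_nonneg (by linarith) (by linarith)
  have hD : 1 ≤ 2 * D + 1 := by linarith
  have hlog : posLog (2 * D + 1) - Real.log ρ ≤ posLog (2 * D + 1) + |Real.log ρ| := by
    linarith [neg_abs_le (Real.log ρ)]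
  have hlog0 : 0 ≤ posLog (2 * D + 1) + |Real.log ρ| :=
    add_nonneg Real.posLog_nonneg (abs_nonneg _)
  have hcard_mul : hfin.toFinset.card * (posLog (2 * D + 1) - Real.log ρ) ≤
      N * (posLog (2 * D + 1) + |Real.log ρ|) :=
    (mul_le_mul_of_nonneg_left hlog (Nat.cast_nonneg _)).trans
      (mul_le_mul_of_nonneg_right (Nat.cast_le.2 hcard) hlog0)
  gcongr

lemma countable_setOf_eq_zero {U : Set ℂ} (hg : AnalyticOnNhd ℂ g U) (hU : IsPreconnected U)
    (hne : ¬EqOn g 0 U) : {z ∈ U | g z = 0}.Countable := by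
  have hcodiscrete : {z | g z = 0}ᶜ ∈ codiscreteWithin U :=
    (hg.eqOn_zero_or_eventually_ne_zero_of_preconnected hU).resolve_left hne
  have hdiscrete : DiscreteTopology ({z | g z = 0} ∩ U : Set ℂ) :=
    isDiscrete_iff_discreteTopology.mp (isDiscrete_of_codiscreteWithin hcodiscrete)
  have hcountable : ({z | g z = 0} ∩ U).Countable :=
    TopologicalSpace.separableSpace_iff_countable.1 inferInstance
  exact hcountable.mono fun z hz => hz.symm

lemma volume_image_im_setOf_deriv_eq_zero {U : Set ℂ} (hf : AnalyticOnNhd ℂ f U)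
    (hU : IsPreconnected U) (hne : ¬EqOn (deriv f) 0 U) :
    volume ((fun z => (f z).im) '' {z ∈ U | deriv f z = 0}) = 0 :=
  ((countable_setOf_eq_zero hf.deriv hU hne).image _).measure_zero volume

theorem exists_norm_le_of_encard_simpleZeros_le {D : ℝ} (c : ℂ) (N : ℕ) (hρ : 0 < ρ) (hρD : ρ < D)
    (hrD : r < D) :
    ∃ C, ∀ f : ℂ → ℂ, AnalyticOnNhd ℂ f (ball c D) → (∀ z ∈ closedBall c ρ, ‖f z‖ ≤ 1) →
      (∀ y : ℝ, (simpleZeros (fun z => f z - y * I) (ball c D)).encard ≤ N) →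
      ∀ z ∈ closedBall c r, ‖f z‖ ≤ C := by
  obtain ⟨R, hR, hRD⟩ := exists_between (max_lt hρD hrD)
  obtain ⟨hρR, hrR⟩ := max_lt_iff.1 hR
  have hD : 0 < D := hρ.trans hρD
  refine ⟨(2 * D + 1) ^ N * Real.exp ((R + r) / (R - r) *
    (posLog 2 + N * (posLog (2 * D + 1) + |Real.log ρ|) + 2)) + 1, fun f hf hf1 hN z hz => ?_⟩
  by_cases hderiv : EqOn (deriv f) 0 (ball c D)
  · obtain ⟨b, hb⟩ := isOpen_ball.exists_is_const_of_deriv_eq_zero (convex_ball c D).isPreconnected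
      hf.differentiableOn hderiv
    rw [hb z (closedBall_subset_ball hrD hz), ← hb c (mem_ball_self hD)]
    exact le_add_of_nonneg_of_le (by positivity) (hf1 c (mem_closedBall_self hρ.le))
  have hsphere : sphere c |R| ⊆ ball c D := by
    rw [abs_of_pos (hρ.trans hρR)]
    exact sphere_subset_ball hRD
  obtain ⟨y, hy, hyS, hK⟩ := exists_circleAverage_posLog_inv_norm_sub_mul_I_le
    (hf.continuousOn.mono hsphere)
    (volume_image_im_setOf_deriv_eq_zero hf (convex_ball c D).isPreconnected hderiv)
  have hyI : ‖(y : ℂ) * I‖ ≤ 1 := by simpa [abs_of_nonneg hy.1] using hy.2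
  have hsimple : ∀ w ∈ ball c D, f w - y * I = 0 → deriv (fun z => f z - y * I) w ≠ 0 := by
    intro w hw hw0 hd
    rw [deriv_sub_const] at hd
    exact hyS ⟨w, ⟨hw, hd⟩, by simp [sub_eq_zero.1 hw0]⟩
  have hle := norm_le_of_encard_simpleZeros_le (g := fun z => f z - y * I)
    (hf.sub analyticOnNhd_const) hsimple (hN y) hρ hρR.le hrR hRD
    (fun w hw => (norm_sub_le _ _).trans
      (by linarith [hf1 w (sphere_subset_closedBall hw)] : _ ≤ (2 : ℝ))) hK hz
  calc ‖f z‖ = ‖f z - y * I + y * I‖ := by rw [sub_add_cancel]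
    _ ≤ _ := (norm_add_le _ _).trans (add_le_add hle hyI)

end SimpleZeroBound

section Montel

lemma isClosedEmbedding_toUniformOnFunIsCompact {X α : Type*} [TopologicalSpace X]
    [WeaklyLocallyCompactSpace X] [UniformSpace α] :
    IsClosedEmbedding (ContinuousMap.toUniformOnFunIsCompact (α := X) (β := α)) := by
  refine ⟨ContinuousMap.isUniformEmbedding_toUniformOnFunIsCompact.isEmbedding, ?_⟩
  rw [ContinuousMap.range_toUniformOnFunIsCompact]
  exact UniformOnFun.isClosed_setOfPred_continuous
    (IsCoherentWith.of_nhds fun x => exists_compact_mem_nhds x)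

lemma exists_subseq_tendsto_of_equicontinuous {X E : Type*} [TopologicalSpace X]
    [WeaklyLocallyCompactSpace X] [SigmaCompactSpace X] [NormedAddCommGroup E] [ProperSpace E]
    {F : ℕ → C(X, E)} (hequi : Equicontinuous fun n => ⇑(F n))
    (hbdd : ∀ x, ∃ C, ∀ n, ‖F n x‖ ≤ C) :
    ∃ φ : ℕ → ℕ, StrictMono φ ∧ ∃ f : C(X, E), Tendsto (F ∘ φ) atTop (𝓝 f) := by
  have hcompact : IsCompact (closure (range F)) := by
    refine ArzelaAscoli.isCompact_closure_of_isClosedEmbedding (𝔖 := {K | IsCompact K})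
      (F := (⇑· : C(X, E) → X → E)) (fun K hK => hK) isClosedEmbedding_toUniformOnFunIsCompact
      (fun K _ => ?_) fun K _ x _ => ?_
    · refine Equicontinuous.equicontinuousOn (fun x U hU => (hequi x U hU).mono fun y hy => ?_) K
      rintro ⟨_, n, rfl⟩
      exact hy n
    · obtain ⟨C, hC⟩ := hbdd x
      exact ⟨closedBall 0 C, isCompact_closedBall 0 C,
        forall_mem_range.2 fun n => mem_closedBall_zero_iff.2 (hC n)⟩
  obtain ⟨f, -, φ, hφ, hlim⟩ :=
    hcompact.isSeqCompact fun n => subset_closure (mem_range_self (f := F) n)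
  exact ⟨φ, hφ, f, hlim⟩

variable {Ω : Set ℂ}

lemma equicontinuous_domRestrict_of_forall_isCompact {ι : Type*} {F : ι → ℂ → ℂ} (hΩ : IsOpen Ω)
    (hF : ∀ i, DifferentiableOn ℂ (F i) Ω)
    (hbdd : ∀ K ⊆ Ω, IsCompact K → ∃ C, ∀ i, ∀ z ∈ K, ‖F i z‖ ≤ C) :
    Equicontinuous fun i => Ω.domRestrict (F i) := by
  rintro ⟨z, hz⟩
  obtain ⟨r, hr, hrΩ⟩ := nhds_basis_closedBall.mem_iff.1 (hΩ.mem_nhds hz)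
  obtain ⟨C, hC⟩ := hbdd _ hrΩ (isCompact_closedBall z r)
  have hmaps : ∀ i, MapsTo (F i) (ball z r) (closedBall (F i z) (C + C)) := fun i w hw => by
    rw [mem_closedBall, dist_eq_norm]
    exact (norm_sub_le _ _).trans
      (add_le_add (hC i w (ball_subset_closedBall hw)) (hC i z (mem_closedBall_self hr.le)))
  refine equicontinuousAt_of_continuity_modulus (fun w : Ω => (C + C) / r * dist w.1 z) ?_ _ ?_
  · have hcont : Continuous fun w : Ω => (C + C) / r * dist w.1 z := by fun_prop
    simpa using hcont.tendsto ⟨z, hz⟩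
  · filter_upwards [continuousAt_subtype_val.preimage_mem_nhds (ball_mem_nhds z hr)] with w hw i
    rw [dist_comm]
    exact dist_le_div_mul_dist_of_mapsTo_ball
      ((hF i).mono (ball_subset_closedBall.trans hrΩ)) (hmaps i) hw

theorem exists_subseq_tendstoLocallyUniformlyOn {F : ℕ → ℂ → ℂ} (hΩ : IsOpen Ω)
    (hF : ∀ n, DifferentiableOn ℂ (F n) Ω)
    (hbdd : ∀ K ⊆ Ω, IsCompact K → ∃ C, ∀ n, ∀ z ∈ K, ‖F n z‖ ≤ C) :
    ∃ φ : ℕ → ℕ, StrictMono φ ∧ ∃ f : ℂ → ℂ,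
      TendstoLocallyUniformlyOn (fun n => F (φ n)) f atTop Ω := by
  have := hΩ.locallyCompactSpace
  let G : ℕ → C(Ω, ℂ) := fun n => ⟨Ω.domRestrict (F n), (hF n).continuousOn.domRestrict⟩
  obtain ⟨φ, hφ, f, hlim⟩ := exists_subseq_tendsto_of_equicontinuous (F := G)
    (equicontinuous_domRestrict_of_forall_isCompact hΩ hF hbdd) fun z => by
      obtain ⟨C, hC⟩ := hbdd {z.1} (singleton_subset_iff.2 z.2) isCompact_singleton
      exact ⟨C, fun n => hC n z rfl⟩
  refine ⟨φ, hφ, Function.extend Subtype.val f 0, ?_⟩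
  rw [tendstoLocallyUniformlyOn_iff_tendstoLocallyUniformly_comp_coe,
    Function.extend_comp Subtype.val_injective]
  exact ContinuousMap.tendsto_iff_tendstoLocallyUniformly.1 hlim

end Montel

section PlanarHarmonic

open InnerProductSpace (HarmonicOnNhd)

variable {Ω : Set ℂ} {c : ℂ} {D ρ : ℝ}

lemma eqOn_zero_of_re_eqOn_zero {f : ℂ → ℂ} (hf : AnalyticOnNhd ℂ f Ω) (hΩo : IsOpen Ω)
    (hΩ : IsPreconnected Ω) (hre : EqOn (fun z => (f z).re) 0 Ω) (hc : c ∈ Ω)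
    (him : (f c).im = 0) : EqOn f 0 Ω := by
  obtain ⟨b, hb⟩ := hf.eq_const_of_re_eq_const hre hΩo ⟨⟨c, hc⟩, hΩ⟩
  have hfc : f c = 0 := Complex.ext (hre hc) him
  intro z hz
  rw [hb z hz, ← hb c hc, hfc, Pi.zero_apply]

lemma exists_analyticOnNhd_re_eq_mul_and_isGreatest_norm {h : ℂ → ℝ}
    (hh : HarmonicOnNhd h (ball c D)) (hne : ∃ z ∈ ball c D, h z ≠ 0) (hρ : 0 < ρ) (hρD : ρ < D) :
    ∃ a : ℝ, a ≠ 0 ∧ ∃ f : ℂ → ℂ, AnalyticOnNhd ℂ f (ball c D) ∧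
      EqOn (fun z => (f z).re) (fun z => a * h z) (ball c D) ∧ (f c).im = 0 ∧
      IsGreatest ((fun z => ‖f z‖) '' closedBall c ρ) 1 := by
  obtain ⟨F₀, hF₀, hre₀⟩ := hh.exists_analyticOnNhd_ball_re_eq
  let F : ℂ → ℂ := fun z => F₀ z - (F₀ c).im * I
  have hF : AnalyticOnNhd ℂ F (ball c D) := hF₀.sub analyticOnNhd_const
  have hre : ∀ z ∈ ball c D, (F z).re = h z := fun z hz => by
    simpa [F] using hre₀ hz
  obtain ⟨z₀, hz₀, hmax⟩ := (isCompact_closedBall c ρ).exists_isMaxOn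
    ⟨c, mem_closedBall_self hρ.le⟩ (hF.continuousOn.mono (closedBall_subset_ball hρD)).norm
  have hF0 : ‖F z₀‖ ≠ 0 := fun h0 => by
    have hzero : EqOn F 0 (ball c D) := hF.eqOn_zero_of_preconnected_of_eventuallyEq_zero
      (convex_ball c D).isPreconnected (mem_ball_self (hρ.trans hρD)) <| by
        filter_upwards [closedBall_mem_nhds c hρ] with z hz
        exact norm_le_zero_iff.1 ((hmax hz).trans h0.le)
    obtain ⟨z, hz, hhz⟩ := hne
    exact hhz (by rw [← hre z hz, hzero hz, Pi.zero_apply, zero_re])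
  have hnorm : ∀ z, ‖(‖F z₀‖⁻¹ : ℝ) * F z‖ = ‖F z‖ / ‖F z₀‖ := fun z => by
    rw [norm_mul, norm_real, norm_inv, norm_norm, inv_mul_eq_div]
  refine ⟨‖F z₀‖⁻¹, inv_ne_zero hF0, fun z => (‖F z₀‖⁻¹ : ℝ) * F z, analyticOnNhd_const.mul hF,
    fun z hz => ?_, ?_, ⟨z₀, hz₀, ?_⟩, ?_⟩
  · simp only [re_ofReal_mul, hre z hz]
  · simp [F]
  · simp only [hnorm, div_self hF0]
  · rintro _ ⟨z, hz, rfl⟩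
    simp only [hnorm]
    exact div_le_one_of_le₀ (hmax hz) (norm_nonneg _)

lemma encard_simpleZeros_sub_mul_I_le {f : ℂ → ℂ} {h : ℂ → ℝ} {a : ℝ} (hΩ : Convex ℝ Ω)
    (hΩo : IsOpen Ω) (hf : AnalyticOnNhd ℂ f Ω) (ha : a ≠ 0)
    (hre : EqOn (fun z => (f z).re) (fun z => a * h z) Ω) (hne : ∃ z ∈ Ω, h z ≠ 0) (y : ℝ) :
    (simpleZeros (fun z => f z - y * I) Ω).encard ≤
      (connectedComponentIn {z ∈ Ω | h z ≠ 0} '' {z ∈ Ω | h z ≠ 0}).encard := by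
  have hset : {z ∈ Ω | (f z - y * I).re ≠ 0} = {z ∈ Ω | h z ≠ 0} := by
    ext z
    refine and_congr_right fun hz => ?_
    have hrez : (f z).re = a * h z := hre hz
    simp [hrez, ha]
  have hcount := encard_simpleZeros_add_one_le hΩ hΩo (f := fun z => f z - y * I)
    (hf.sub analyticOnNhd_const) (hset ▸ hne)
  rw [hset] at hcount
  exact le_self_add.trans hcount

lemma exists_ne_zero_of_tendstoUniformlyOn {X E ι : Type*} [NormedAddCommGroup E] {p : Filter ι}
    [p.NeBot] {F : ι → X → E} {f : X → E} {K : Set X} (hlim : TendstoUniformlyOn F f p K)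
    (hF : ∀ i, ∃ x ∈ K, 1 ≤ ‖F i x‖) : ∃ x ∈ K, f x ≠ 0 := by
  by_contra! hzero
  obtain ⟨i, hi⟩ := (Metric.tendstoUniformlyOn_iff.1 hlim 1 one_pos).exists
  obtain ⟨x, hx, h1⟩ := hF i
  have hlt := hi x hx
  rw [hzero x hx, dist_zero_left] at hlt
  exact hlt.not_ge h1

theorem exists_subseq_tendstoLocallyUniformlyOn_of_encard_le {h : ℕ → ℂ → ℝ} {N : ℕ}
    (hD : 0 < D) (hh : ∀ n, HarmonicOnNhd (h n) (ball c D))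
    (hne : ∀ n, ∃ z ∈ ball c D, h n z ≠ 0)
    (hN : ∀ n, (connectedComponentIn {z ∈ ball c D | h n z ≠ 0} ''
      {z ∈ ball c D | h n z ≠ 0}).encard ≤ N) :
    ∃ φ : ℕ → ℕ, StrictMono φ ∧ ∃ a : ℕ → ℝ, (∀ k, a k ≠ 0) ∧ ∃ w : ℂ → ℝ,
      HarmonicOnNhd w (ball c D) ∧ (∃ z ∈ ball c D, w z ≠ 0) ∧
      TendstoLocallyUniformlyOn (fun k z => a k * h (φ k) z) w atTop (ball c D) := by
  have hρ := half_pos hD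
  have hρD := half_lt_self hD
  have hc : c ∈ ball c D := mem_ball_self hD
  choose a ha f hf hre him hmax using fun n =>
    exists_analyticOnNhd_re_eq_mul_and_isGreatest_norm (hh n) (hne n) hρ hρD
  obtain ⟨φ, hφ, g, hlim⟩ := exists_subseq_tendstoLocallyUniformlyOn isOpen_ball
    (fun n => (hf n).differentiableOn) fun K hK hKc => by
      obtain ⟨r, hrD, hKr⟩ := exists_lt_subset_ball hKc.isClosed hK
      obtain ⟨C, hC⟩ := exists_norm_le_of_encard_simpleZeros_le c N hρ hρD hrD
      exact ⟨C, fun n z hz => hC (f n) (hf n) (fun z hz => (hmax n).2 (mem_image_of_mem _ hz))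
        (fun y => (encard_simpleZeros_sub_mul_I_le (convex_ball c D) isOpen_ball (hf n) (ha n)
          (hre n) (hne n) y).trans (hN n)) z (ball_subset_closedBall (hKr hz))⟩
  have hg : AnalyticOnNhd ℂ g (ball c D) := (hlim.differentiableOn
    (.of_forall fun k => (hf (φ k)).differentiableOn) isOpen_ball).analyticOnNhd isOpen_ball
  have hgc : (g c).im = 0 := tendsto_nhds_unique
    ((continuous_im.tendsto _).comp (hlim.tendsto_at hc)) (by simp [Function.comp_def, him])
  refine ⟨φ, hφ, fun k => a (φ k), fun k => ha _, fun z => (g z).re,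
    fun z hz => (hg z hz).harmonicAt_re, ?_, ?_⟩
  · have hsub := closedBall_subset_ball (x := c) hρD
    obtain ⟨z, hz, hgz⟩ := exists_ne_zero_of_tendstoUniformlyOn
      ((tendstoLocallyUniformlyOn_iff_forall_isCompact isOpen_ball).1 hlim _ hsub
        (isCompact_closedBall c _)) fun k => by
          obtain ⟨z, hz, h1⟩ := (hmax (φ k)).1
          exact ⟨z, hz, h1.ge⟩
    by_contra! hzero
    exact hgz (eqOn_zero_of_re_eqOn_zero hg isOpen_ball (convex_ball c D).isPreconnected hzero hc
      hgc (hsub hz))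
  · exact (reCLM.uniformContinuous.comp_tendstoLocallyUniformlyOn hlim).congr fun k z hz =>
      hre (φ k) hz

end PlanarHarmonic

section EuclideanTransport

open InnerProductSpace Laplacian

variable {n : ℕ}

lemma encard_nodalComponents_eq {X : Type*} [TopologicalSpace X] (T : X ≃ₜ En n)
    (u : En n → ℝ) (Ω : Set (En n)) :
    (nodalComponents u Ω).encard = (connectedComponentIn {z ∈ T ⁻¹' Ω | u (T z) ≠ 0} ''
      {z ∈ T ⁻¹' Ω | u (T z) ≠ 0}).encard := by
  have himage : T '' {z ∈ T ⁻¹' Ω | u (T z) ≠ 0} = Ω \ zeroSet u Ω := by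
    rw [Homeomorph.image_eq_preimage_symm]
    ext x
    simp +contextual [zeroSet]
  rw [← encard_image_connectedComponentIn T, himage]
  congr 1
  ext C
  simp only [nodalComponents, mem_image, eq_comm]
  rfl

variable {E : Type*} [NormedAddCommGroup E] [InnerProductSpace ℝ E] [FiniteDimensional ℝ E]

lemma laplacian_comp_linearIsometryEquiv (T : E ≃ₗᵢ[ℝ] En n) (u : En n → ℝ) (z : E) :
    Δ (u ∘ T) z = laplacianAt u (T z) := by
  have hcomp : iteratedFDeriv ℝ 2 (u ∘ T) z =
      (iteratedFDeriv ℝ 2 u (T z)).compContinuousLinearMap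
        fun _ => (T.toContinuousLinearEquiv : E →L[ℝ] En n) := by
    have hwithin := T.toContinuousLinearEquiv.iteratedFDerivWithin_comp_right u uniqueDiffOn_univ
      (mem_univ (T z)) 2
    rwa [preimage_univ, iteratedFDerivWithin_univ, iteratedFDerivWithin_univ] at hwithin
  rw [laplacian_eq_iteratedFDeriv_orthonormalBasis _
    ((EuclideanSpace.basisFun (Fin n) ℝ).map T.symm), laplacianAt]
  refine Finset.sum_congr rfl fun i _ => ?_
  rw [hcomp, ContinuousMultilinearMap.compContinuousLinearMap_apply]
  congr 1
  ext j : 1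
  fin_cases j <;> simp

lemma HarmonicOnSet.harmonicOnNhd_comp (T : E ≃ₗᵢ[ℝ] En n) {u : En n → ℝ} {Ω : Set (En n)}
    (hΩ : IsOpen Ω) (hu : HarmonicOnSet u Ω) : HarmonicOnNhd (u ∘ T) (T ⁻¹' Ω) := fun z hz => by
  have hnhds := hΩ.mem_nhds hz
  refine ⟨(hu.1.contDiffAt hnhds).comp z T.contDiff.contDiffAt, ?_⟩
  filter_upwards [T.continuous.continuousAt.preimage_mem_nhds hnhds] with x hx
  rw [laplacian_comp_linearIsometryEquiv, hu.2 _ hx, Pi.zero_apply]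

lemma harmonicOnSet_comp_symm (T : E ≃ₗᵢ[ℝ] En n) {h : E → ℝ} {Ω : Set E}
    (hh : HarmonicOnNhd h Ω) : HarmonicOnSet (h ∘ T.symm) (T.symm ⁻¹' Ω) := by
  refine ⟨fun x hx => ((hh _ hx).1.comp x T.symm.contDiff.contDiffAt).contDiffWithinAt,
    fun x hx => ?_⟩
  have hΔ := laplacian_comp_linearIsometryEquiv T (h ∘ T.symm) (T.symm x)
  rw [T.apply_symm_apply] at hΔ
  rw [← hΔ, Function.comp_assoc, T.symm_comp_self, Function.comp_id]
  exact (hh _ hx).2.self_of_nhds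

end EuclideanTransport

theorem stmt4 (N : ℕ) (u : ℕ → En 2 → ℝ)
    (hharm : ∀ m, HarmonicOnSet (u m) (ball 0 1))
    (hne : ∀ m, ∃ x ∈ ball (0 : En 2) 1, u m x ≠ 0)
    (hfin : ∀ m, (nodalComponents (u m) (ball 0 1)).Finite)
    (hcount : ∀ m, (nodalComponents (u m) (ball 0 1)).ncard < N) :
    ∃ φ : ℕ → ℕ, StrictMono φ ∧
      ∃ a : ℕ → ℝ, (∀ k, a k ≠ 0) ∧
      ∃ w : En 2 → ℝ, HarmonicOnSet w (ball 0 1) ∧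
        (∃ x ∈ ball (0 : En 2) 1, w x ≠ 0) ∧
        ∀ K : Set (En 2), K ⊆ ball (0 : En 2) 1 → IsCompact K →
          TendstoUniformlyOn (fun k x => a k * u (φ k) x) w atTop K := by
  let T : ℂ ≃ₗᵢ[ℝ] En 2 := Complex.orthonormalBasisOneI.repr
  have hT : T ⁻¹' ball 0 1 = ball 0 1 := by rw [T.preimage_ball, map_zero]
  have hTsymm : T.symm ⁻¹' ball 0 1 = ball 0 1 := by rw [T.symm.preimage_ball, map_zero]
  obtain ⟨φ, hφ, a, ha, w, hw, ⟨z, hz, hwz⟩, hlim⟩ :=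
    exists_subseq_tendstoLocallyUniformlyOn_of_encard_le (h := fun m => u m ∘ T) (N := N) one_pos
      (fun m => hT ▸ (hharm m).harmonicOnNhd_comp T isOpen_ball)
      (fun m => by
        obtain ⟨x, hx, hux⟩ := hne m
        exact ⟨T.symm x, hTsymm.ge hx, by simpa using hux⟩)
      (fun m => by
        have hle := Nat.cast_le (α := ℕ∞).2 (hcount m).le
        rwa [(hfin m).cast_ncard_eq, encard_nodalComponents_eq T.toHomeomorph,
          T.coe_toHomeomorph, hT] at hle)
  refine ⟨φ, hφ, a, ha, w ∘ T.symm, hTsymm ▸ harmonicOnSet_comp_symm T hw,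
    ⟨T z, hT.ge hz, by simpa using hwz⟩, fun K hK hKc => ?_⟩
  have hunif := ((tendstoLocallyUniformlyOn_iff_forall_isCompact isOpen_ball).1 hlim (T ⁻¹' K)
    (hT ▸ preimage_mono hK) (T.toHomeomorph.isCompact_preimage.2 hKc)).comp T.symm
  simpa [← preimage_comp, Function.comp_def] using hunif
end
end

section
/- Let (U_n) and (V_n) be sequences of holomorphic functions on the open unit disc 𝔻 ⊂ ℂ such that Z(Im U_n) = Z(Im V_n) for every n, and suppose V_n converges uniformly on compact subsets of 𝔻 to the function V(z) = z^k for some positive integer k. Then for every ρ < 1 there exists n₀ = n₀(ρ) such that for every n > n₀ there is a holomorphic function g_n, defined on an open disc centered at 0 that contains V_n({|z| < ρ}) and taking real values on the real axis, with U_n(z) = g_n(V_n(z)) for all |z| < ρ. -/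
open Metric Set Complex Filter

noncomputable section

/-!
On an annulus `V` is close to `z ^ k`, so `V (exp t) = exp (k * L t)` on a vertical strip, with `L`
close to the identity and hence invertible on a smaller strip. In the coordinate `τ = L t` the
function `U` is real on the lines `im τ = n * π / k`, since `V` is. Reflecting in two of these lines
shows that `U` is invariant under `τ ↦ τ + 2 * π * n * I / k`, that is, constant on the fibres of
`V` in the annulus. The mean of `U` over a fibre of `V` is a contour integral of
`U * deriv V / (V - w)`, holomorphic in `w`. It factors `U` through `V` on an annulus, hence on the
disc by the identity theorem. By Rouché's theorem `V` covers a neighbourhood of `0`, so the factor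
is real at the real points near `0`, and by reflection at all real points.
-/

open scoped Topology Real ComplexConjugate NNReal

theorem apply_conj_of_frequently_real {D : Set ℂ} (hD : IsOpen D) (hDc : IsPreconnected D)
    (hsymm : ∀ z ∈ D, conj z ∈ D) {f : ℂ → ℂ} (hf : DifferentiableOn ℂ f D) {x₀ : ℝ}
    (hx₀ : (x₀ : ℂ) ∈ D) (hreal : ∃ᶠ x : ℝ in 𝓝[≠] x₀, (f x).im = 0) {z : ℂ} (hz : z ∈ D) :
    f (conj z) = conj (f z) := by
  have hg : DifferentiableOn ℂ (conj ∘ f ∘ conj) D := fun w hw =>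
    (differentiableAt_conj_conj_iff.2
      (hf.differentiableAt (hD.mem_nhds (hsymm w hw)))).differentiableWithinAt
  have hofReal : Tendsto ((↑) : ℝ → ℂ) (𝓝[≠] x₀) (𝓝[≠] (x₀ : ℂ)) :=
    continuous_ofReal.continuousWithinAt.tendsto_nhdsWithin fun x hx => by simpa using hx
  have hfreq : ∃ᶠ w in 𝓝[≠] (x₀ : ℂ), f w = (conj ∘ f ∘ conj) w :=
    hofReal.frequently <| hreal.mono fun x hx => by
      simpa only [Function.comp_apply, conj_ofReal] using (conj_eq_iff_im.2 hx).symm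
  have h : f z = conj (f (conj z)) :=
    (hf.analyticOnNhd hD).eqOn_of_preconnected_of_frequently_eq (hg.analyticOnNhd hD) hDc hx₀
      hfreq hz
  rw [h, conj_conj]

theorem im_apply_eq_zero_of_comp_real {s : ℝ} (hs : 0 < s) {U V g : ℂ → ℂ} {S : Set ℂ}
    (hg : DifferentiableOn ℂ g (ball 0 s)) (hfactor : EqOn U (g ∘ V) S)
    (hreal : ∀ z ∈ S, (V z).im = 0 → (U z).im = 0) (hV : V '' S ∈ 𝓝 0) {x : ℝ}
    (hx : (x : ℂ) ∈ ball 0 s) : (g x).im = 0 := by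
  have hnear : ∀ᶠ y : ℝ in 𝓝 0, (g y).im = 0 := by
    have hV' : ∀ᶠ y : ℝ in 𝓝 0, (y : ℂ) ∈ V '' S :=
      continuous_ofReal.continuousAt.eventually_mem (by simpa using hV)
    filter_upwards [hV'] with y ⟨z, hz, hVz⟩
    have hUz : U z = g y := by rw [hfactor hz, Function.comp_apply, hVz]
    exact hUz ▸ hreal z hz (by rw [hVz, ofReal_im])
  have h := apply_conj_of_frequently_real (x₀ := 0) isOpen_ball (convex_ball _ _).isPreconnected
    (fun z hz => by simpa using hz) hg (by simpa using hs)
    (eventually_nhdsWithin_of_eventually_nhds hnear).frequently hx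
  rw [conj_ofReal] at h
  exact conj_eq_iff_im.1 h.symm

section VerticalStrip

variable {a b : ℝ}

theorem isOpen_re_preimage_Ioo : IsOpen (re ⁻¹' Ioo a b) :=
  isOpen_Ioo.preimage continuous_re

theorem convex_re_preimage_Ioo : Convex ℝ (re ⁻¹' Ioo a b) :=
  (convex_Ioo a b).linear_preimage reLm

theorem closedBall_subset_re_preimage_Ioo {r : ℝ} {t : ℂ}
    (ht : t ∈ re ⁻¹' Ioo (a + r) (b - r)) : closedBall t r ⊆ re ⁻¹' Ioo a b := by
  intro w hw
  have h := (abs_re_le_norm (w - t)).trans (mem_closedBall_iff_norm.1 hw)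
  rw [sub_re, abs_le] at h
  exact ⟨by linarith [ht.1], by linarith [ht.2]⟩

/- The reflections in the two lines compose to the translation by `2 * p * I`. -/
theorem apply_add_eq_of_real_on_lines {p : ℝ} {F : ℂ → ℂ}
    (hF : DifferentiableOn ℂ F (re ⁻¹' Ioo a b)) (h0 : ∀ x : ℝ, x ∈ Ioo a b → (F x).im = 0)
    (hp : ∀ x : ℝ, x ∈ Ioo a b → (F (x + p * I)).im = 0) {t : ℂ} (ht : t ∈ re ⁻¹' Ioo a b) :
    F (t + 2 * p * I) = F t := by
  have hreflect : ∀ {f : ℂ → ℂ}, DifferentiableOn ℂ f (re ⁻¹' Ioo a b) →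
      (∀ x : ℝ, x ∈ Ioo a b → (f x).im = 0) → ∀ w ∈ re ⁻¹' Ioo a b, f (conj w) = conj (f w) :=
    fun hf hreal w hw => apply_conj_of_frequently_real (x₀ := t.re) isOpen_re_preimage_Ioo
      convex_re_preimage_Ioo.isPreconnected (fun z hz => by simpa using hz) hf
      (by simpa only [mem_preimage, ofReal_re] using ht)
      (eventually_nhdsWithin_of_eventually_nhds
        (eventually_of_mem (isOpen_Ioo.mem_nhds ht) hreal)).frequently hw
  have hG : DifferentiableOn ℂ (fun w => F (w + p * I)) (re ⁻¹' Ioo a b) :=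
    hF.comp (by fun_prop) fun w hw => by simpa using hw
  calc F (t + 2 * p * I) = F (conj (conj t - p * I) + p * I) := by
        congr 1
        simp only [map_sub, conj_conj, map_mul, conj_ofReal, conj_I]
        ring
    _ = conj (F (conj t - p * I + p * I)) := hreflect hG hp _ (by simpa using ht)
    _ = F t := by rw [sub_add_cancel, hreflect hF h0 t ht, conj_conj]

theorem eq_of_exp_mul_eq {κ : ℝ} (hκ : κ ≠ 0) {F : ℂ → ℂ}
    (hF : DifferentiableOn ℂ F (re ⁻¹' Ioo a b))
    (hreal : ∀ t ∈ re ⁻¹' Ioo a b, (exp (κ * t)).im = 0 → (F t).im = 0) {t t' : ℂ}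
    (ht' : t' ∈ re ⁻¹' Ioo a b) (h : exp (κ * t) = exp (κ * t')) : F t = F t' := by
  obtain ⟨n, hn⟩ := exp_eq_exp_iff_exists_int.1 h
  have htranslate : t = t' + 2 * (n * π / κ : ℝ) * I := by
    have hκ' : (κ : ℂ) ≠ 0 := ofReal_ne_zero.2 hκ
    refine mul_left_cancel₀ hκ' (hn.trans ?_)
    push_cast
    field_simp
  rw [htranslate]
  refine apply_add_eq_of_real_on_lines hF (fun x hx => ?_) (fun x hx => ?_) ht'
  · exact hreal x (by simpa using hx) (by simp [exp_im])
  · refine hreal _ (by simpa using hx) ?_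
    have him : (κ * (x + (n * π / κ : ℝ) * I) : ℂ).im = n * π := by
      simp [-ofReal_div, mul_div_cancel₀ _ hκ]
    rw [exp_im, him, Real.sin_int_mul_pi, mul_zero]

end VerticalStrip

section NearIdentity

theorem norm_deriv_sub_one_le {f : ℂ → ℂ} {z : ℂ} {r C : ℝ} (hr : 0 < r)
    (hf : ∀ w ∈ closedBall z r, DifferentiableAt ℂ f w) (hC : ∀ w ∈ sphere z r, ‖f w - w‖ ≤ C) :
    ‖deriv f z - 1‖ ≤ C / r := by
  have hd : DifferentiableOn ℂ (fun w => f w - w) (closure (ball z r)) := fun w hw =>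
    ((hf w (closure_ball_subset_closedBall hw)).sub differentiableAt_id).differentiableWithinAt
  have hderiv : deriv (fun w => f w - w) z = deriv f z - 1 :=
    ((hf z (mem_closedBall_self hr.le)).hasDerivAt.sub (hasDerivAt_id z)).deriv
  exact hderiv ▸ norm_deriv_le_of_forall_mem_sphere_norm_le hr hd.diffContOnCl hC

theorem approximatesLinearOn_refl_of_norm_deriv_sub_one_le {f : ℂ → ℂ} {s : Set ℂ} {c : ℝ≥0}
    (hs : Convex ℝ s) (hf : ∀ z ∈ s, DifferentiableAt ℂ f z)
    (hc : ∀ z ∈ s, ‖deriv f z - 1‖ ≤ c) :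
    ApproximatesLinearOn f (ContinuousLinearEquiv.refl ℂ ℂ : ℂ →L[ℂ] ℂ) s c := by
  intro x hx y hy
  have h := hs.norm_image_sub_le_of_norm_hasDerivWithin_le
    (fun z hz => ((hf z hz).hasDerivAt.sub (hasDerivAt_id z)).hasDerivWithinAt) hc hy hx
  calc _ = ‖f x - x - (f y - y)‖ := by congr 1; simp; ring
    _ ≤ _ := by simpa using h

theorem exists_rightInverse_of_norm_deriv_sub_one_le {f : ℂ → ℂ} {s T : Set ℂ} {δ : ℝ}
    (hδ : 0 ≤ δ) (hs : IsOpen s) (hsc : Convex ℝ s) (hf : DifferentiableOn ℂ f s)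
    (hf' : ∀ z ∈ s, ‖deriv f z - 1‖ ≤ 1 / 2) (hfδ : ∀ z ∈ s, ‖f z - z‖ ≤ δ)
    (hT : ∀ w ∈ T, closedBall w (2 * δ) ⊆ s) :
    InjOn f s ∧ ∃ g : ℂ → ℂ, DifferentiableOn ℂ g T ∧ MapsTo g T s ∧ RightInvOn g f T := by
  have hfd : ∀ z ∈ s, DifferentiableAt ℂ f z := fun z hz => hf.differentiableAt (hs.mem_nhds hz)
  have happ := approximatesLinearOn_refl_of_norm_deriv_sub_one_le (c := 1 / 2) hsc hfd
    (by simpa using hf')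
  have hnorm : ‖((ContinuousLinearEquiv.refl ℂ ℂ).symm : ℂ →L[ℂ] ℂ)‖₊ = 1 :=
    NNReal.eq ContinuousLinearMap.norm_id
  have hc : Subsingleton ℂ ∨
      (1 / 2 : ℝ≥0) < ‖((ContinuousLinearEquiv.refl ℂ ℂ).symm : ℂ →L[ℂ] ℂ)‖₊⁻¹ := by
    right
    rw [hnorm]
    norm_num
  set P := happ.toOpenPartialHomeomorph f s hc hs
  have htarget : ∀ w ∈ T, w ∈ P.target := by
    intro w hw
    refine happ.closedBall_subset_target hc hs (by positivity) (hT w hw) ?_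
    rw [mem_closedBall, dist_comm, dist_eq_norm, hnorm]
    have := hfδ w (hT w hw (mem_closedBall_self (by positivity)))
    push_cast
    linarith
  refine ⟨happ.injOn hc, P.symm, fun w hw => ?_, fun w hw => P.map_target (htarget w hw),
    fun w hw => P.right_inv (htarget w hw)⟩
  have hmem : P.symm w ∈ s := P.map_target (htarget w hw)
  have hne : deriv f (P.symm w) ≠ 0 := by
    intro h0
    have := hf' _ hmem
    rw [h0] at this
    norm_num at this
  exact (P.hasDerivAt_symm (htarget w hw) hne
    (hfd _ hmem).hasDerivAt).differentiableAt.differentiableWithinAt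

variable {a b δ : ℝ} {L : ℂ → ℂ}

theorem exists_inverse_re_preimage_Ioo (hδ : 0 < δ) (hL : DifferentiableOn ℂ L (re ⁻¹' Ioo a b))
    (hLδ : ∀ t ∈ re ⁻¹' Ioo a b, ‖L t - t‖ ≤ δ) :
    ∃ M : ℂ → ℂ, DifferentiableOn ℂ M (re ⁻¹' Ioo (a + 4 * δ) (b - 4 * δ)) ∧
      (∀ τ ∈ re ⁻¹' Ioo (a + 4 * δ) (b - 4 * δ), M τ ∈ re ⁻¹' Ioo a b ∧ L (M τ) = τ) ∧
      ∀ t ∈ re ⁻¹' Ioo (a + 5 * δ) (b - 5 * δ),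
        L t ∈ re ⁻¹' Ioo (a + 4 * δ) (b - 4 * δ) ∧ M (L t) = t := by
  set S := re ⁻¹' Ioo (a + 2 * δ) (b - 2 * δ)
  have hball : ∀ t ∈ S, closedBall t (2 * δ) ⊆ re ⁻¹' Ioo a b := fun t ht =>
    closedBall_subset_re_preimage_Ioo ht
  have hS : S ⊆ re ⁻¹' Ioo a b := fun t ht => hball t ht (mem_closedBall_self (by positivity))
  have hL' : ∀ t ∈ S, ‖deriv L t - 1‖ ≤ 1 / 2 := fun t ht => by
    refine (norm_deriv_sub_one_le (mul_pos two_pos hδ)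
      (fun w hw => hL.differentiableAt (isOpen_re_preimage_Ioo.mem_nhds (hball t ht hw)))
      fun w hw => hLδ w (hball t ht (sphere_subset_closedBall hw))).trans_eq ?_
    field_simp
  obtain ⟨hinj, M, hM, hMS, hLM⟩ := exists_rightInverse_of_norm_deriv_sub_one_le
    (T := re ⁻¹' Ioo (a + 4 * δ) (b - 4 * δ)) hδ.le isOpen_re_preimage_Ioo convex_re_preimage_Ioo
    (hL.mono hS) hL' (fun t ht => hLδ t (hS ht)) fun τ hτ =>
      closedBall_subset_re_preimage_Ioo ⟨by linarith [hτ.1], by linarith [hτ.2]⟩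
  refine ⟨M, hM, fun τ hτ => ⟨hS (hMS hτ), hLM hτ⟩, fun t ht => ?_⟩
  have htS : t ∈ S := ⟨by linarith [ht.1], by linarith [ht.2]⟩
  have hLt : L t ∈ re ⁻¹' Ioo (a + 4 * δ) (b - 4 * δ) :=
    closedBall_subset_re_preimage_Ioo (r := δ) ⟨by linarith [ht.1], by linarith [ht.2]⟩
      (mem_closedBall_iff_norm.2 (hLδ t (hS htS)))
  exact ⟨hLt, hinj (hMS hLt) htS (hLM hLt)⟩

theorem eq_of_exp_mul_eq_of_norm_sub_id_le {κ : ℝ} (hκ : κ ≠ 0) (hδ : 0 < δ)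
    (hL : DifferentiableOn ℂ L (re ⁻¹' Ioo a b)) (hLδ : ∀ t ∈ re ⁻¹' Ioo a b, ‖L t - t‖ ≤ δ)
    {f : ℂ → ℂ} (hf : DifferentiableOn ℂ f (re ⁻¹' Ioo a b))
    (hreal : ∀ t ∈ re ⁻¹' Ioo a b, (exp (κ * L t)).im = 0 → (f t).im = 0) {t t' : ℂ}
    (ht : t ∈ re ⁻¹' Ioo (a + 5 * δ) (b - 5 * δ)) (ht' : t' ∈ re ⁻¹' Ioo (a + 5 * δ) (b - 5 * δ))
    (h : exp (κ * L t) = exp (κ * L t')) : f t = f t' := by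
  obtain ⟨M, hM, hLM, hML⟩ := exists_inverse_re_preimage_Ioo hδ hL hLδ
  calc f t = (f ∘ M) (L t) := by rw [Function.comp_apply, (hML t ht).2]
    _ = (f ∘ M) (L t') := eq_of_exp_mul_eq hκ (hf.comp hM fun τ hτ => (hLM τ hτ).1)
      (fun τ hτ hτreal => hreal _ (hLM τ hτ).1 (by rwa [(hLM τ hτ).2])) (hML t' ht').1 h
    _ = f t' := by rw [Function.comp_apply, (hML t' ht').2]

end NearIdentity

section Annulus

theorem exists_exp_mul_eq_of_norm_sub_exp_mul_le {S : Set ℂ} {W : ℂ → ℂ} {κ : ℂ} (hκ : κ ≠ 0)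
    {η : ℝ} (hη : η ≤ 1 / 2) (hW : DifferentiableOn ℂ W S)
    (hclose : ∀ t ∈ S, ‖W t - exp (κ * t)‖ ≤ η * ‖exp (κ * t)‖) :
    ∃ L : ℂ → ℂ, DifferentiableOn ℂ L S ∧
      ∀ t ∈ S, ‖L t - t‖ ≤ 3 / 2 * η / ‖κ‖ ∧ exp (κ * L t) = W t := by
  have hsplit : ∀ t, W t / exp (κ * t) = 1 + (W t - exp (κ * t)) / exp (κ * t) := fun t => by
    rw [sub_div, div_self (exp_ne_zero _), add_sub_cancel]
  have hnorm : ∀ t ∈ S, ‖(W t - exp (κ * t)) / exp (κ * t)‖ ≤ η := fun t ht => by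
    rw [norm_div, div_le_iff₀ (norm_pos_iff.2 (exp_ne_zero _))]
    exact hclose t ht
  have hslit : ∀ t ∈ S, W t / exp (κ * t) ∈ slitPlane := fun t ht => by
    rw [hsplit]
    exact mem_slitPlane_of_norm_lt_one ((hnorm t ht).trans_lt (by linarith))
  refine ⟨fun t => t + log (W t / exp (κ * t)) / κ, ?_, fun t ht => ⟨?_, ?_⟩⟩
  · have hexp : DifferentiableOn ℂ (fun t => exp (κ * t)) S := by fun_prop
    exact differentiableOn_id.add
      (((hW.div hexp fun t _ => exp_ne_zero _).clog hslit).div_const κ)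
  · rw [add_sub_cancel_left, norm_div, hsplit]
    gcongr
    refine (norm_log_one_add_half_le_self ((hnorm t ht).trans hη)).trans ?_
    gcongr
    exact hnorm t ht
  · rw [mul_add, mul_div_cancel₀ _ hκ, exp_add, exp_log (slitPlane_ne_zero (hslit t ht)),
      mul_div_cancel₀ _ (exp_ne_zero _)]

theorem eq_of_norm_sub_exp_mul_le {a b δ η κ : ℝ} (hκ : κ ≠ 0) (hδ : 0 < δ) (hη : η ≤ 1 / 2)
    (hηδ : 3 / 2 * η ≤ δ * |κ|) {W f : ℂ → ℂ} (hW : DifferentiableOn ℂ W (re ⁻¹' Ioo a b))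
    (hf : DifferentiableOn ℂ f (re ⁻¹' Ioo a b))
    (hclose : ∀ t ∈ re ⁻¹' Ioo a b, ‖W t - exp (κ * t)‖ ≤ η * ‖exp (κ * t)‖)
    (hreal : ∀ t ∈ re ⁻¹' Ioo a b, (W t).im = 0 → (f t).im = 0) {t t' : ℂ}
    (ht : t ∈ re ⁻¹' Ioo (a + 5 * δ) (b - 5 * δ)) (ht' : t' ∈ re ⁻¹' Ioo (a + 5 * δ) (b - 5 * δ))
    (h : W t = W t') : f t = f t' := by
  obtain ⟨L, hL, hLW⟩ := exists_exp_mul_eq_of_norm_sub_exp_mul_le (ofReal_ne_zero.2 hκ) hη hW hclose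
  have hLδ : ∀ w ∈ re ⁻¹' Ioo a b, ‖L w - w‖ ≤ δ := fun w hw => by
    refine (hLW w hw).1.trans ?_
    rwa [norm_real, Real.norm_eq_abs, div_le_iff₀ (abs_pos.2 hκ)]
  have hsub : re ⁻¹' Ioo (a + 5 * δ) (b - 5 * δ) ⊆ re ⁻¹' Ioo a b :=
    preimage_mono (Ioo_subset_Ioo (by linarith) (by linarith))
  refine eq_of_exp_mul_eq_of_norm_sub_id_le hκ hδ hL hLδ hf (fun w hw him => ?_) ht ht' ?_
  · exact hreal w hw (by rwa [(hLW w hw).2] at him)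
  · rw [(hLW t (hsub ht)).2, (hLW t' (hsub ht')).2, h]

theorem mapsTo_exp_re_preimage_Ioo {r R : ℝ} (hr : 0 < r) (hR : 0 < R) :
    MapsTo exp (re ⁻¹' Ioo (Real.log r) (Real.log R)) (norm ⁻¹' Ioo r R) := fun t ht => by
  rw [mem_preimage, norm_exp]
  exact ⟨(Real.log_lt_iff_lt_exp hr).1 ht.1, (Real.lt_log_iff_exp_lt hR).1 ht.2⟩

theorem exists_pos_forall_eq_of_eq_on_annulus {k : ℕ} (hk : k ≠ 0) {r₀ r R R₀ : ℝ} (hr₀ : 0 < r₀)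
    (hr₀r : r₀ < r) (hrR : r ≤ R) (hRR₀ : R < R₀) :
    ∃ ε > 0, ∀ U V : ℂ → ℂ, DifferentiableOn ℂ U (norm ⁻¹' Ioo r₀ R₀) →
      DifferentiableOn ℂ V (norm ⁻¹' Ioo r₀ R₀) →
      (∀ z ∈ norm ⁻¹' Ioo r₀ R₀, (V z).im = 0 → (U z).im = 0) →
      (∀ z ∈ norm ⁻¹' Ioo r₀ R₀, ‖V z - z ^ k‖ ≤ ε) →
      ∀ z ∈ norm ⁻¹' Icc r R, ∀ z' ∈ norm ⁻¹' Icc r R, V z = V z' → U z = U z' := by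
  have hr : 0 < r := hr₀.trans hr₀r
  have hR : 0 < R := hr.trans_le hrR
  obtain ⟨δ, hδ, hδlt⟩ := exists_between (lt_min
    (div_pos (sub_pos.2 (Real.log_lt_log hr₀ hr₀r)) (by norm_num : (0 : ℝ) < 5))
    (div_pos (sub_pos.2 (Real.log_lt_log hR hRR₀)) (by norm_num : (0 : ℝ) < 5)))
  rw [lt_min_iff] at hδlt
  set η := min (1 / 2) (2 / 3 * (δ * k))
  have hk0 : (0 : ℝ) < k := Nat.cast_pos.2 (Nat.pos_of_ne_zero hk)
  have hη : 0 < η := lt_min (by norm_num) (by positivity)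
  refine ⟨η * r₀ ^ k, mul_pos hη (pow_pos hr₀ k), fun U V hU hV hreal hclose z hz z' hz' hVz => ?_⟩
  have hexp := mapsTo_exp_re_preimage_Ioo hr₀ (hR.trans hRR₀)
  have hclose' : ∀ t ∈ re ⁻¹' Ioo (Real.log r₀) (Real.log R₀),
      ‖V (exp t) - exp ((k : ℝ) * t)‖ ≤ η * ‖exp ((k : ℝ) * t)‖ := fun t ht => by
    rw [ofReal_natCast, exp_nat_mul, norm_pow]
    refine (hclose _ (hexp ht)).trans ?_
    gcongr
    exact (hexp ht).1.le
  have hlog : ∀ ζ ∈ norm ⁻¹' Icc r R, exp (log ζ) = ζ ∧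
      log ζ ∈ re ⁻¹' Ioo (Real.log r₀ + 5 * δ) (Real.log R₀ - 5 * δ) := fun ζ hζ => by
    have hζ0 : 0 < ‖ζ‖ := hr.trans_le hζ.1
    rw [mem_preimage, log_re]
    exact ⟨exp_log (norm_pos_iff.1 hζ0), by linarith [Real.log_le_log hr hζ.1],
      by linarith [Real.log_le_log hζ0 hζ.2]⟩
  have h := eq_of_norm_sub_exp_mul_le hk0.ne' hδ (min_le_left _ _)
    (by rw [Nat.abs_cast]; linarith [min_le_right (1 / 2) (2 / 3 * (δ * k))])
    (hV.comp differentiable_exp.differentiableOn hexp)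
    (hU.comp differentiable_exp.differentiableOn hexp) hclose' (fun t ht => hreal _ (hexp ht))
    (hlog z hz).2 (hlog z' hz').2
  simp only [Function.comp_apply, (hlog z hz).1, (hlog z' hz').1] at h
  exact h hVz

end Annulus

section ArgumentPrinciple

variable {c : ℂ} {R : ℝ}

theorem circleIntegral_eq_zero_of_meromorphicOrderAt_nonneg (hR : 0 ≤ R) {f : ℂ → ℂ}
    (hf : MeromorphicOn f (closedBall c R))
    (hord : ∀ z ∈ closedBall c R, 0 ≤ meromorphicOrderAt f z) : (∮ z in C(c, R), f z) = 0 := by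
  rcases hR.eq_or_lt with rfl | hR0
  · exact circleIntegral.integral_radius_zero f c
  set F := toMeromorphicNFOn f (closedBall c R)
  have hF : ∀ z ∈ closedBall c R, AnalyticAt ℂ F z := fun z hz =>
    (meromorphicNFOn_toMeromorphicNFOn f _ hz).meromorphicOrderAt_nonneg_iff_analyticAt.1
      (by rw [meromorphicOrderAt_toMeromorphicNFOn hf hz]; exact hord z hz)
  have hsphere : sphere c |R| ⊆ closedBall c R := by
    rw [abs_of_nonneg hR]
    exact sphere_subset_closedBall
  calc (∮ z in C(c, R), f z) = ∮ z in C(c, R), F z :=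
        circleIntegral.circleIntegral_congr_codiscreteWithin
          (codiscreteWithin_mono hsphere (toMeromorphicNFOn_eqOn_codiscrete hf)) hR0.ne'
    _ = 0 := circleIntegral_eq_zero_of_differentiable_on_off_countable hR countable_empty
        (fun z hz => (hF z hz).continuousAt.continuousWithinAt)
        fun z hz => (hF z (ball_subset_closedBall hz.1)).differentiableAt

theorem meromorphicOrderAt_mul_logDeriv_nonneg {h W : ℂ → ℂ} {z : ℂ} (hh : AnalyticAt ℂ h z)
    (hW : AnalyticAt ℂ W z) (hzero : W z = 0 → h z = 0) :
    0 ≤ meromorphicOrderAt (h * logDeriv W) z := by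
  rw [meromorphicOrderAt_mul hh.meromorphicAt hW.meromorphicAt.logDeriv]
  have hlog := meromorphicOrderAt_logDeriv_nonneg hW.meromorphicAt
  by_cases hord : meromorphicOrderAt W z = 0
  · exact add_nonneg hh.meromorphicOrderAt_nonneg (hlog hord)
  by_cases htop : meromorphicOrderAt W z = ⊤
  · have hlogtop : meromorphicOrderAt (logDeriv W) z = ⊤ := by
      refine meromorphicOrderAt_eq_top_iff.2 ?_
      filter_upwards [meromorphicOrderAt_eq_top_iff.1 htop] with w hw
      rw [logDeriv_apply, hw, div_zero]
    rw [hlogtop, add_top]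
    exact le_top
  have hWz : W z = 0 := by
    contrapose! hord
    exact hW.meromorphicNFAt.meromorphicOrderAt_eq_zero_iff.2 hord
  have hhz : 0 < meromorphicOrderAt h z := by
    rw [← tendsto_zero_iff_meromorphicOrderAt_pos hh.meromorphicAt, ← hzero hWz]
    exact hh.continuousAt.tendsto.mono_left nhdsWithin_le_nhds
  rw [meromorphicOrderAt_logDeriv_eq_neg_one hW.meromorphicAt hord htop]
  cases horder : meromorphicOrderAt h z with
  | top => exact le_top
  | coe n =>
    have hn : 0 < n := WithTop.coe_pos.1 (horder ▸ hhz)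
    exact WithTop.coe_nonneg.2 (by lia : 0 ≤ n + -1)

theorem circleIntegral_mul_logDeriv_eq_zero (hR : 0 ≤ R) {h W : ℂ → ℂ}
    (hh : AnalyticOnNhd ℂ h (closedBall c R)) (hW : AnalyticOnNhd ℂ W (closedBall c R))
    (hzero : ∀ z ∈ closedBall c R, W z = 0 → h z = 0) :
    (∮ z in C(c, R), h z * logDeriv W z) = 0 :=
  circleIntegral_eq_zero_of_meromorphicOrderAt_nonneg hR
    (fun z hz => (hh z hz).meromorphicAt.mul (hW z hz).meromorphicAt.logDeriv)
    fun z hz => meromorphicOrderAt_mul_logDeriv_nonneg (hh z hz) (hW z hz) (hzero z hz)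

theorem circleIntegrable_mul_logDeriv (hR : 0 ≤ R) {h W : ℂ → ℂ}
    (hh : ContinuousOn h (sphere c R)) (hW : AnalyticOnNhd ℂ W (sphere c R))
    (hne : ∀ z ∈ sphere c R, W z ≠ 0) : CircleIntegrable (fun z => h z * logDeriv W z) c R :=
  (hh.mul (hW.deriv.continuousOn.div hW.continuousOn hne)).circleIntegrable hR

theorem circleIntegral_mul_logDeriv_eq (hR : 0 ≤ R) {U W : ℂ → ℂ} {u : ℂ}
    (hU : AnalyticOnNhd ℂ U (closedBall c R)) (hW : AnalyticOnNhd ℂ W (closedBall c R))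
    (hne : ∀ z ∈ sphere c R, W z ≠ 0) (hzero : ∀ z ∈ closedBall c R, W z = 0 → U z = u) :
    (∮ z in C(c, R), U z * logDeriv W z) = u * ∮ z in C(c, R), logDeriv W z := by
  have hWs := hW.mono sphere_subset_closedBall
  have h := circleIntegral_mul_logDeriv_eq_zero hR (hU.sub analyticOnNhd_const) hW
    fun z hz hWz => sub_eq_zero.2 (hzero z hz hWz)
  simp only [Pi.sub_apply, sub_mul] at h
  rwa [circleIntegral.integral_sub
    (circleIntegrable_mul_logDeriv hR (hU.continuousOn.mono sphere_subset_closedBall) hWs hne)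
    (circleIntegrable_mul_logDeriv hR continuousOn_const hWs hne),
    circleIntegral.integral_const_mul, sub_eq_zero] at h

theorem circleIntegral_logDeriv_eq_of_norm_sub_lt (hR : 0 ≤ R) {f g : ℂ → ℂ}
    (hf : AnalyticOnNhd ℂ f (sphere c R)) (hg : AnalyticOnNhd ℂ g (sphere c R))
    (hfg : ∀ z ∈ sphere c R, ‖f z - g z‖ < ‖g z‖) :
    (∮ z in C(c, R), logDeriv f z) = ∮ z in C(c, R), logDeriv g z := by
  have hg0 : ∀ z ∈ sphere c R, g z ≠ 0 := fun z hz =>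
    norm_pos_iff.1 ((norm_nonneg _).trans_lt (hfg z hz))
  have hf0 : ∀ z ∈ sphere c R, f z ≠ 0 := fun z hz hfz => by
    simpa [hfz] using hfg z hz
  have hslit : ∀ z ∈ sphere c R, f z / g z ∈ slitPlane := fun z hz => by
    have hsplit : f z / g z = 1 + (f z - g z) / g z := by
      rw [sub_div, div_self (hg0 z hz), add_sub_cancel]
    rw [hsplit]
    refine mem_slitPlane_of_norm_lt_one ?_
    rw [norm_div, div_lt_one (norm_pos_iff.2 (hg0 z hz))]
    exact hfg z hz
  have hprimitive : ∀ z ∈ sphere c R, HasDerivWithinAt (fun z => log (f z / g z))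
      (logDeriv f z - logDeriv g z) (sphere c R) z := fun z hz => by
    have hfz := (hf z hz).differentiableAt
    have hgz := (hg z hz).differentiableAt
    rw [← logDeriv_div z (hf0 z hz) (hg0 z hz) hfz hgz]
    exact ((hfz.div hgz (hg0 z hz)).hasDerivAt.clog (hslit z hz)).hasDerivWithinAt
  have hint : ∀ {W : ℂ → ℂ}, AnalyticOnNhd ℂ W (sphere c R) → (∀ z ∈ sphere c R, W z ≠ 0) →
      CircleIntegrable (logDeriv W) c R := fun hW hne => by
    simpa only [one_mul] using
      circleIntegrable_mul_logDeriv (h := fun _ => 1) hR continuousOn_const hW hne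
  rw [← sub_eq_zero, ← circleIntegral.integral_sub (hint hf hf0) (hint hg hg0)]
  exact circleIntegral.integral_eq_zero_of_hasDerivWithinAt hR hprimitive

theorem circleIntegral_logDeriv_sub_eq_of_norm_sub_pow_lt (hR : 0 < R) {k : ℕ} {V : ℂ → ℂ}
    (hV : AnalyticOnNhd ℂ V (sphere 0 R)) {w : ℂ}
    (hclose : ∀ z ∈ sphere 0 R, ‖V z - z ^ k‖ + ‖w‖ < R ^ k) :
    (∮ z in C(0, R), logDeriv (fun z => V z - w) z) = 2 * π * I * k := by
  calc (∮ z in C(0, R), logDeriv (fun z => V z - w) z)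
      = ∮ z in C(0, R), logDeriv (fun z => z ^ k) z :=
        circleIntegral_logDeriv_eq_of_norm_sub_lt hR.le (hV.sub analyticOnNhd_const)
          (analyticOnNhd_id.pow k) fun z hz => by
            rw [norm_pow, mem_sphere_zero_iff_norm.1 hz, sub_right_comm]
            exact (norm_sub_le _ _).trans_lt (hclose z hz)
    _ = ∮ z in C(0, R), k * (z - 0)⁻¹ := by
        simp only [logDeriv_pow, sub_zero, div_eq_mul_inv]
    _ = 2 * π * I * k := by
        rw [circleIntegral.integral_const_mul, circleIntegral.integral_sub_center_inv 0 hR.ne',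
          mul_comm]

theorem exists_mem_closedBall_eq_of_norm_sub_pow_lt (hR : 0 < R) {k : ℕ} (hk : k ≠ 0) {V : ℂ → ℂ}
    (hV : AnalyticOnNhd ℂ V (closedBall 0 R)) {w : ℂ}
    (hclose : ∀ z ∈ sphere 0 R, ‖V z - z ^ k‖ + ‖w‖ < R ^ k) : ∃ z ∈ closedBall 0 R, V z = w := by
  by_contra! hne
  have hzero := circleIntegral_mul_logDeriv_eq_zero (h := 1) hR.le analyticOnNhd_const
    (hV.sub analyticOnNhd_const) fun z hz hVz => absurd (sub_eq_zero.1 hVz) (hne z hz)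
  have hcount := circleIntegral_logDeriv_sub_eq_of_norm_sub_pow_lt hR
    (hV.mono sphere_subset_closedBall) hclose
  simp only [Pi.one_apply, one_mul] at hzero
  exact mul_ne_zero two_pi_I_ne_zero (Nat.cast_ne_zero.2 hk) (hcount.symm.trans hzero)

theorem image_closedBall_mem_nhds_zero (hR : 0 < R) {k : ℕ} (hk : k ≠ 0) {V : ℂ → ℂ}
    (hV : AnalyticOnNhd ℂ V (closedBall 0 R)) {ε : ℝ} (hε : ε < R ^ k)
    (hclose : ∀ z ∈ sphere 0 R, ‖V z - z ^ k‖ ≤ ε) : V '' closedBall 0 R ∈ 𝓝 0 := by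
  refine mem_of_superset (ball_mem_nhds 0 (sub_pos.2 hε)) fun w hw => ?_
  exact exists_mem_closedBall_eq_of_norm_sub_pow_lt hR hk hV fun z hz => by
    linarith [hclose z hz, mem_ball_zero_iff.1 hw]

end ArgumentPrinciple

section FibreMean

theorem differentiableOn_intervalIntegral_div_sub {ψ v : ℝ → ℂ} (hψ : Continuous ψ)
    (hv : Continuous v) {a b s : ℝ} (hs : ∀ θ, s ≤ ‖v θ‖) :
    DifferentiableOn ℂ (fun w => ∫ θ in a..b, ψ θ / (v θ - w)) (ball 0 s) := by
  intro w hw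
  rw [mem_ball_zero_iff] at hw
  set d := (s - ‖w‖) / 2 with hd_def
  have hd : 0 < d := by linarith
  have hlow : ∀ θ, ∀ x ∈ ball w d, d ≤ ‖v θ - x‖ := fun θ x hx => by
    linarith [norm_sub_norm_le (v θ) x, norm_sub_norm_le x w, mem_ball_iff_norm.1 hx, hs θ]
  have hne : ∀ θ, ∀ x ∈ ball w d, v θ - x ≠ 0 := fun θ x hx =>
    norm_pos_iff.1 (hd.trans_le (hlow θ x hx))
  have hcont : ∀ x ∈ ball w d, Continuous fun θ => ψ θ / (v θ - x) := fun x hx =>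
    hψ.div (hv.sub continuous_const) fun θ => hne θ x hx
  have hcont' : Continuous fun θ => ψ θ / (v θ - w) ^ 2 :=
    hψ.div ((hv.sub continuous_const).pow 2) fun θ => pow_ne_zero _ (hne θ w (mem_ball_self hd))
  have hbound : ∀ θ, ∀ x ∈ ball w d, ‖ψ θ / (v θ - x) ^ 2‖ ≤ ‖ψ θ‖ / d ^ 2 := fun θ x hx => by
    rw [norm_div, norm_pow]
    gcongr
    exact hlow θ x hx
  have hderiv : ∀ θ, ∀ x ∈ ball w d,
      HasDerivAt (fun x => ψ θ / (v θ - x)) (ψ θ / (v θ - x) ^ 2) x := fun θ x hx => by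
    simpa [div_eq_mul_inv] using
      (((hasDerivAt_id x).const_sub (v θ)).inv (hne θ x hx)).const_mul (ψ θ)
  exact (intervalIntegral.hasDerivAt_integral_of_dominated_loc_of_deriv_le
    (μ := MeasureTheory.volume) (ball_mem_nhds w hd)
    (eventually_of_mem (ball_mem_nhds w hd) fun x hx => (hcont x hx).aestronglyMeasurable)
    ((hcont w (mem_ball_self hd)).intervalIntegrable a b) hcont'.aestronglyMeasurable
    (.of_forall fun θ _ => hbound θ) ((hψ.norm.div_const _).intervalIntegrable a b)
    (.of_forall fun θ _ => hderiv θ)).2.differentiableAt.differentiableWithinAt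

theorem differentiableOn_circleIntegral_div_sub {c : ℂ} {R s : ℝ} (hR : 0 ≤ R) {φ V : ℂ → ℂ}
    (hφ : ContinuousOn φ (sphere c R)) (hV : ContinuousOn V (sphere c R))
    (hs : ∀ z ∈ sphere c R, s ≤ ‖V z‖) :
    DifferentiableOn ℂ (fun w => ∮ z in C(c, R), φ z / (V z - w)) (ball 0 s) := by
  have hmem : ∀ θ, circleMap c R θ ∈ sphere c R := circleMap_mem_sphere c hR
  have hcircle := continuous_circleMap c R
  have hψ : Continuous fun θ => deriv (circleMap c R) θ * φ (circleMap c R θ) := by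
    simp only [deriv_circleMap]
    exact ((continuous_circleMap 0 R).mul continuous_const).mul (hφ.comp_continuous hcircle hmem)
  simpa only [circleIntegral, smul_eq_mul, mul_div_assoc] using
    differentiableOn_intervalIntegral_div_sub (a := 0) (b := 2 * π) hψ
      (v := fun θ => V (circleMap c R θ)) (hV.comp_continuous hcircle hmem) fun θ => hs _ (hmem θ)

/-- The mean of `U` over the fibre of `V` above `w` in the disc of radius `R` around `0`, written
as a contour integral; it is meant for functions `V` that take the value `w` there `k` times,
counted with multiplicity. -/
def fibreMean (k : ℕ) (R : ℝ) (U V : ℂ → ℂ) (w : ℂ) : ℂ :=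
  (2 * π * I * k)⁻¹ * ∮ z in C(0, R), U z * deriv V z / (V z - w)

variable {k : ℕ} {r R s : ℝ} {U V : ℂ → ℂ}

theorem abs_norm_sub_norm_pow_le (w z : ℂ) (k : ℕ) : |‖w‖ - ‖z‖ ^ k| ≤ ‖w - z ^ k‖ := by
  simpa only [norm_pow] using abs_norm_sub_norm_le w (z ^ k)

theorem differentiableOn_fibreMean (hR : 0 ≤ R) (hU : ContinuousOn U (sphere 0 R))
    (hV : AnalyticOnNhd ℂ V (sphere 0 R)) (hclose : ∀ z ∈ sphere 0 R, ‖V z - z ^ k‖ + s ≤ R ^ k) :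
    DifferentiableOn ℂ (fibreMean k R U V) (ball 0 s) := by
  refine (differentiableOn_circleIntegral_div_sub hR (hU.mul hV.deriv.continuousOn)
    hV.continuousOn fun z hz => ?_).const_mul _
  have hnorm := abs_norm_sub_norm_pow_le (V z) z k
  rw [mem_sphere_zero_iff_norm.1 hz] at hnorm
  linarith [(abs_le.1 hnorm).1, hclose z hz]

theorem fibreMean_eq (hk : k ≠ 0) (hR : 0 < R) (hU : AnalyticOnNhd ℂ U (closedBall 0 R))
    (hV : AnalyticOnNhd ℂ V (closedBall 0 R)) {u w : ℂ}
    (hclose : ∀ z ∈ sphere 0 R, ‖V z - z ^ k‖ + ‖w‖ < R ^ k)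
    (hfib : ∀ z ∈ closedBall 0 R, V z = w → U z = u) : fibreMean k R U V w = u := by
  have hne : ∀ z ∈ sphere 0 R, V z - w ≠ 0 := fun z hz hVz => by
    have hnorm := abs_norm_sub_norm_pow_le (V z) z k
    have hw := hclose z hz
    rw [mem_sphere_zero_iff_norm.1 hz] at hnorm
    rw [sub_eq_zero.1 hVz] at hnorm hw
    linarith [(abs_le.1 hnorm).1]
  have hmean : (∮ z in C(0, R), U z * deriv V z / (V z - w)) = u * (2 * π * I * k) := by
    rw [← circleIntegral_logDeriv_sub_eq_of_norm_sub_pow_lt hR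
      (hV.mono sphere_subset_closedBall) hclose,
      ← circleIntegral_mul_logDeriv_eq (W := fun z => V z - w) hR.le hU
        (hV.sub analyticOnNhd_const) hne fun z hz hVz => hfib z hz (sub_eq_zero.1 hVz)]
    simp only [logDeriv_apply, deriv_sub_const, mul_div_assoc]
  rw [fibreMean, hmean, mul_comm u,
    inv_mul_cancel_left₀ (mul_ne_zero two_pi_I_ne_zero (Nat.cast_ne_zero.2 hk))]

theorem eqOn_fibreMean_comp (hk : k ≠ 0) (hR : 0 < R) (hrR : r ≤ R)
    (hU : AnalyticOnNhd ℂ U (closedBall 0 R)) (hV : AnalyticOnNhd ℂ V (closedBall 0 R))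
    (hclose : ∀ z ∈ sphere 0 R, ‖V z - z ^ k‖ + s ≤ R ^ k)
    (hVs : MapsTo V (ball 0 r) (ball 0 s))
    {O : Set ℂ} (hO : IsOpen O) (hOne : O.Nonempty) (hOr : O ⊆ ball 0 r)
    (hfib : ∀ z₀ ∈ O, ∀ z ∈ closedBall 0 R, V z = V z₀ → U z = U z₀) :
    EqOn U (fibreMean k R U V ∘ V) (ball 0 r) := by
  obtain ⟨z₀, hz₀⟩ := hOne
  have hg := differentiableOn_fibreMean hR.le (hU.continuousOn.mono sphere_subset_closedBall)
    (hV.mono sphere_subset_closedBall) hclose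
  have hrR' : ball (0 : ℂ) r ⊆ closedBall 0 R :=
    ball_subset_closedBall.trans (closedBall_subset_closedBall hrR)
  refine (hU.mono hrR').eqOn_of_preconnected_of_eventuallyEq
    ((hg.comp (hV.mono hrR').differentiableOn hVs).analyticOnNhd isOpen_ball)
    (convex_ball _ _).isPreconnected (hOr hz₀) ?_
  filter_upwards [hO.mem_nhds hz₀] with z hz
  exact (fibreMean_eq hk hR hU hV (fun ζ hζ => (add_lt_add_right
    (mem_ball_zero_iff.1 (hVs (hOr hz))) _).trans_le (hclose ζ hζ)) (hfib z hz)).symm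

theorem mapsTo_ball_of_norm_sub_pow_le {ε : ℝ} (hk : k ≠ 0)
    (hclose : ∀ z ∈ ball 0 r, ‖V z - z ^ k‖ ≤ ε) (hs : r ^ k + ε ≤ s) :
    MapsTo V (ball 0 r) (ball 0 s) := fun z hz => by
  have hpow := pow_lt_pow_left₀ (mem_ball_zero_iff.1 hz) (norm_nonneg z) hk
  rw [mem_ball_zero_iff]
  linarith [(abs_le.1 (abs_norm_sub_norm_pow_le (V z) z k)).2, hclose z hz]

theorem lt_norm_of_apply_eq_of_norm_sub_pow_le {r₁ r₂ ε : ℝ} (hk : k ≠ 0) (hr₂ : 0 ≤ r₂)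
    (hε : r₁ ^ k + 2 * ε ≤ r₂ ^ k) {z z₀ : ℂ} (hz : ‖V z - z ^ k‖ ≤ ε)
    (hz₀ : ‖V z₀ - z₀ ^ k‖ ≤ ε) (hr₂z₀ : r₂ < ‖z₀‖) (hV : V z = V z₀) : r₁ < ‖z‖ := by
  have hpow := pow_lt_pow_left₀ hr₂z₀ hr₂ hk
  have hnorm := abs_norm_sub_norm_pow_le (V z) z k
  have hnorm₀ := abs_norm_sub_norm_pow_le (V z₀) z₀ k
  have hlt : r₁ ^ k < ‖z‖ ^ k := by
    linarith [(abs_le.1 hnorm).2, (abs_le.1 hnorm₀).1, congrArg norm hV]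
  exact lt_of_pow_lt_pow_left₀ k (norm_nonneg z) hlt

theorem eqOn_fibreMean_comp_of_eq_on_annulus {r₁ r₂ ε : ℝ} (hk : k ≠ 0) (hr₂ : 0 < r₂)
    (hr₂r : r₂ < r) (hrR : r ≤ R) (hε₁ : r₁ ^ k + 2 * ε ≤ r₂ ^ k) (hε₂ : r ^ k + 2 * ε ≤ R ^ k)
    (hU : AnalyticOnNhd ℂ U (closedBall 0 R)) (hV : AnalyticOnNhd ℂ V (closedBall 0 R))
    (hclose : ∀ z ∈ closedBall 0 R, ‖V z - z ^ k‖ ≤ ε)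
    (hfib : ∀ z ∈ norm ⁻¹' Icc r₁ R, ∀ z' ∈ norm ⁻¹' Icc r₁ R, V z = V z' → U z = U z') :
    EqOn U (fibreMean k R U V ∘ V) (ball 0 r) := by
  have hball : ball (0 : ℂ) r ⊆ closedBall 0 R :=
    ball_subset_closedBall.trans (closedBall_subset_closedBall hrR)
  have hVs := mapsTo_ball_of_norm_sub_pow_le (s := R ^ k - ε) hk
    (fun z hz => hclose z (hball hz)) (by linarith)
  have hne : (ball (0 : ℂ) r \ closedBall 0 r₂).Nonempty := by
    obtain ⟨x, hr₂x, hxr⟩ := exists_between hr₂r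
    exact ⟨x, by simp [abs_of_pos (hr₂.trans hr₂x), hr₂x, hxr]⟩
  refine eqOn_fibreMean_comp hk (hr₂.trans (hr₂r.trans_le hrR)) hrR hU hV
    (fun z hz => by linarith [hclose z (sphere_subset_closedBall hz)]) hVs
    (isOpen_ball.sdiff isClosed_closedBall) hne sdiff_subset ?_
  rintro z₀ ⟨hz₀r, hz₀⟩ z hz hVz
  have hr₂z₀ : r₂ < ‖z₀‖ := by simpa using hz₀
  have hannulus : ∀ ζ ∈ closedBall 0 R, V ζ = V z₀ → ζ ∈ norm ⁻¹' Icc r₁ R := fun ζ hζ hVζ =>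
    ⟨(lt_norm_of_apply_eq_of_norm_sub_pow_le hk hr₂.le hε₁ (hclose ζ hζ)
      (hclose z₀ (hball hz₀r)) hr₂z₀ hVζ).le, mem_closedBall_zero_iff.1 hζ⟩
  exact hfib z (hannulus z hz hVz) z₀ (hannulus z₀ (hball hz₀r) rfl) hVz

theorem exists_factorization_of_eq_on_annulus {r₁ r₂ ε : ℝ} (hk : k ≠ 0) (hr₁ : 0 < r₁)
    (hr₂ : 0 < r₂) (hr₂r : r₂ < r) (hrR : r ≤ R) (hε₁ : r₁ ^ k + 2 * ε ≤ r₂ ^ k)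
    (hε₂ : r ^ k + 2 * ε ≤ R ^ k) (hU : AnalyticOnNhd ℂ U (closedBall 0 R))
    (hV : AnalyticOnNhd ℂ V (closedBall 0 R)) (hclose : ∀ z ∈ closedBall 0 R, ‖V z - z ^ k‖ ≤ ε)
    (hfib : ∀ z ∈ norm ⁻¹' Icc r₁ R, ∀ z' ∈ norm ⁻¹' Icc r₁ R, V z = V z' → U z = U z')
    (hreal : ∀ z ∈ ball 0 r, (V z).im = 0 → (U z).im = 0) :
    ∃ (s : ℝ) (g : ℂ → ℂ), 0 < s ∧ V '' ball 0 r ⊆ ball 0 s ∧ DifferentiableOn ℂ g (ball 0 s) ∧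
      (∀ x : ℝ, (x : ℂ) ∈ ball 0 s → (g x).im = 0) ∧ ∀ z ∈ ball 0 r, U z = g (V z) := by
  have hR : 0 < R := hr₂.trans (hr₂r.trans_le hrR)
  have hε : 0 ≤ ε := (norm_nonneg _).trans (hclose 0 (mem_closedBall_self hR.le))
  have hs : 0 < R ^ k - ε := by linarith [pow_pos (hr₂.trans hr₂r) k]
  have hsphere : sphere (0 : ℂ) R ⊆ closedBall 0 R := sphere_subset_closedBall
  have hball : ball (0 : ℂ) r ⊆ closedBall 0 R :=
    ball_subset_closedBall.trans (closedBall_subset_closedBall hrR)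
  have hr₂R : closedBall (0 : ℂ) r₂ ⊆ closedBall 0 R :=
    closedBall_subset_closedBall (hr₂r.le.trans hrR)
  have hVs := mapsTo_ball_of_norm_sub_pow_le (s := R ^ k - ε) hk
    (fun z hz => hclose z (hball hz)) (by linarith)
  have hg : DifferentiableOn ℂ (fibreMean k R U V) (ball 0 (R ^ k - ε)) :=
    differentiableOn_fibreMean hR.le (hU.continuousOn.mono hsphere) (hV.mono hsphere)
      fun z hz => by linarith [hclose z (hsphere hz)]
  have hfactor := eqOn_fibreMean_comp_of_eq_on_annulus hk hr₂ hr₂r hrR hε₁ hε₂ hU hV hclose hfib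
  have himage : V '' ball 0 r ∈ 𝓝 0 := mem_of_superset
    (image_closedBall_mem_nhds_zero hr₂ hk (hV.mono hr₂R) (by linarith [pow_pos hr₁ k])
      fun z hz => hclose z (hr₂R (sphere_subset_closedBall hz)))
    (image_mono (closedBall_subset_ball hr₂r))
  exact ⟨R ^ k - ε, fibreMean k R U V, hs, hVs.image_subset, hg,
    fun x hx => im_apply_eq_zero_of_comp_real hs hg hfactor hreal himage hx, hfactor⟩

end FibreMean

theorem exists_pos_forall_exists_factorization {k : ℕ} (hk : k ≠ 0) {r R : ℝ} (hr : 0 < r)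
    (hrR : r < R) :
    ∃ ε > 0, ∀ U V : ℂ → ℂ, DifferentiableOn ℂ U (ball 0 R) → DifferentiableOn ℂ V (ball 0 R) →
      (∀ z ∈ ball 0 R, (V z).im = 0 → (U z).im = 0) → (∀ z ∈ ball 0 R, ‖V z - z ^ k‖ ≤ ε) →
      ∃ (s : ℝ) (g : ℂ → ℂ), 0 < s ∧ V '' ball 0 r ⊆ ball 0 s ∧ DifferentiableOn ℂ g (ball 0 s) ∧
        (∀ x : ℝ, (x : ℂ) ∈ ball 0 s → (g x).im = 0) ∧ ∀ z ∈ ball 0 r, U z = g (V z) := by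
  obtain ⟨R₁, hrR₁, hR₁R⟩ := exists_between hrR
  obtain ⟨r₂, hr₂, hr₂r⟩ := exists_between hr
  obtain ⟨r₁, hr₁, hr₁r₂⟩ := exists_between hr₂
  obtain ⟨r₀, hr₀, hr₀r₁⟩ := exists_between hr₁
  obtain ⟨ε, hε, hfib⟩ := exists_pos_forall_eq_of_eq_on_annulus hk hr₀ hr₀r₁
    ((hr₁r₂.trans hr₂r).trans hrR₁).le hR₁R
  have hpow₁ : r₁ ^ k < r₂ ^ k := pow_lt_pow_left₀ hr₁r₂ hr₁.le hk
  have hpow₂ : r ^ k < R₁ ^ k := pow_lt_pow_left₀ hrR₁ hr.le hk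
  obtain ⟨ε', hε', hε'min⟩ := exists_between
    (lt_min hε (lt_min (half_pos (sub_pos.2 hpow₁)) (half_pos (sub_pos.2 hpow₂))))
  rw [lt_min_iff, lt_min_iff] at hε'min
  obtain ⟨hε'ε, hε'₁, hε'₂⟩ := hε'min
  refine ⟨ε', hε', fun U V hU hV hreal hclose => ?_⟩
  have hannulus : norm ⁻¹' Ioo r₀ R ⊆ ball (0 : ℂ) R := fun z hz => mem_ball_zero_iff.2 hz.2
  have hclosedBall : closedBall (0 : ℂ) R₁ ⊆ ball 0 R := closedBall_subset_ball hR₁R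
  exact exists_factorization_of_eq_on_annulus hk hr₁ hr₂ hr₂r hrR₁.le (by linarith) (by linarith)
    ((hU.analyticOnNhd isOpen_ball).mono hclosedBall)
    ((hV.analyticOnNhd isOpen_ball).mono hclosedBall) (fun z hz => hclose z (hclosedBall hz))
    (hfib U V (hU.mono hannulus) (hV.mono hannulus) (fun z hz => hreal z (hannulus hz))
      fun z hz => (hclose z (hannulus hz)).trans hε'ε.le)
    fun z hz => hreal z (ball_subset_ball hrR.le hz)

theorem stmt7_general {ι : Type*} {l : Filter ι} (U V : ι → ℂ → ℂ) (k : ℕ) (hk : 0 < k)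
    (hU : ∀ i, DifferentiableOn ℂ (U i) (ball (0 : ℂ) 1))
    (hV : ∀ i, DifferentiableOn ℂ (V i) (ball (0 : ℂ) 1))
    (hz : ∀ i, {z ∈ ball (0 : ℂ) 1 | (V i z).im = 0} ⊆ {z ∈ ball (0 : ℂ) 1 | (U i z).im = 0})
    (hconv : ∀ K : Set ℂ, K ⊆ ball (0 : ℂ) 1 → IsCompact K →
      TendstoUniformlyOn (fun i z => V i z) (fun z => z ^ k) l K) :
    ∀ ρ : ℝ, ρ < 1 → ∀ᶠ i in l,
      ∃ (s : ℝ) (g : ℂ → ℂ), 0 < s ∧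
        V i '' ball (0 : ℂ) ρ ⊆ ball (0 : ℂ) s ∧
        DifferentiableOn ℂ g (ball (0 : ℂ) s) ∧
        (∀ x : ℝ, (x : ℂ) ∈ ball (0 : ℂ) s → (g x).im = 0) ∧
        ∀ z ∈ ball (0 : ℂ) ρ, U i z = g (V i z) := by
  intro ρ hρ
  obtain ⟨r, hρr, hr1⟩ := exists_between (max_lt hρ one_pos)
  obtain ⟨R, hrR, hR1⟩ := exists_between hr1
  rw [max_lt_iff] at hρr
  obtain ⟨ε, hε, hfactor⟩ := exists_pos_forall_exists_factorization hk.ne' hρr.2 hrR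
  have hR : closedBall (0 : ℂ) R ⊆ ball 0 1 := closedBall_subset_ball hR1
  have hR' : ball (0 : ℂ) R ⊆ ball 0 1 := ball_subset_ball hR1.le
  have hρr' : ball (0 : ℂ) ρ ⊆ ball 0 r := ball_subset_ball hρr.1.le
  filter_upwards [tendstoUniformlyOn_iff.1 (hconv _ hR (isCompact_closedBall 0 R)) ε hε]
    with i hi
  obtain ⟨s, g, hs, hVs, hg, hgreal, hUg⟩ := hfactor (U i) (V i) ((hU i).mono hR')
    ((hV i).mono hR') (fun z hzR him => (hz i ⟨hR' hzR, him⟩).2) fun z hzR => by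
      rw [← dist_eq_norm, dist_comm]
      exact (hi z (ball_subset_closedBall hzR)).le
  exact ⟨s, g, hs, (image_mono hρr').trans hVs, hg, hgreal, fun z hzρ => hUg z (hρr' hzρ)⟩

theorem stmt7 (U V : ℕ → ℂ → ℂ) (k : ℕ) (hk : 0 < k)
    (hU : ∀ n, DifferentiableOn ℂ (U n) (ball (0 : ℂ) 1))
    (hV : ∀ n, DifferentiableOn ℂ (V n) (ball (0 : ℂ) 1))
    (hz : ∀ n, {z ∈ ball (0 : ℂ) 1 | (U n z).im = 0} =
               {z ∈ ball (0 : ℂ) 1 | (V n z).im = 0})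
    (hconv : ∀ K : Set ℂ, K ⊆ ball (0 : ℂ) 1 → IsCompact K →
      TendstoUniformlyOn (fun n z => V n z) (fun z => z ^ k) atTop K) :
    ∀ ρ : ℝ, ρ < 1 → ∃ n₀ : ℕ, ∀ n > n₀,
      ∃ (s : ℝ) (g : ℂ → ℂ), 0 < s ∧
        V n '' ball (0 : ℂ) ρ ⊆ ball (0 : ℂ) s ∧
        DifferentiableOn ℂ g (ball (0 : ℂ) s) ∧
        (∀ x : ℝ, (x : ℂ) ∈ ball (0 : ℂ) s → (g x).im = 0) ∧
        ∀ z ∈ ball (0 : ℂ) ρ, U n z = g (V n z) := by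
  intro ρ hρ
  obtain ⟨n₀, hn₀⟩ := eventually_atTop.1
    (stmt7_general U V k hk hU hV (fun n => (hz n).ge) hconv ρ hρ)
  exact ⟨n₀, fun n hn => hn₀ n hn.le⟩
end
end

section
/- Let (u_n) and (v_n) be sequences of harmonic functions on the open unit disc 𝔻 ⊂ ℝ² such that for each n: Z(u_n) = Z(v_n) and u_n(x)·v_n(x) > 0 for every x ∈ 𝔻 ∖ Z(u_n). Suppose u_n converges to u and v_n converges to v uniformly on compact subsets of 𝔻, where u and v are harmonic on 𝔻 and neither is identically zero. Then for every compact set K ⊂ 𝔻 there is a constant C such that for every n, sup_{x ∈ K ∖ Z(u_n)} u_n(x)/v_n(x) ≤ C · inf_{x ∈ K ∖ Z(u_n)} u_n(x)/v_n(x). -/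
open Metric Set Filter

noncomputable section

/-!
It suffices to bound `|u n| ≤ C |v n|` on `K`, uniformly in `n`, since the roles of `u` and `v` can
be exchanged. By compactness this is a local question near a point `q` for large `n`; each of the
remaining finitely many `n` is covered by applying the same bound to a constant sequence.

* If `V q ≠ 0`, then `u n / v n` is bounded near `q`.
* If `V q = 0` and `∇V q ≠ 0`, then `∇(v n)` is bounded away from zero near `q`, so that moving a
  distance at most a multiple of `|v n z|` from `z` reaches a zero of `v n`. It is also a zero of
  `u n`, and a Lipschitz bound for `u n` gives `|u n z| ≤ C |v n z|`.
* The other points `q` are isolated, so the bound is already known on a small circle around `q`.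
  It extends to the disc by the maximum principle for `±u n - C v n` on `{v n > 0}` and for
  `±u n + C v n` on `{v n < 0}`, because these functions vanish on the zero set of `v n`.
-/

open Asymptotics InnerProductSpace Function
open scoped Topology

section IsBigO

variable {ι X E F : Type*}

lemma isBigO_uncurry_prod_principal_iff [Norm E] [Norm F] {l : Filter ι} {u : ι → X → E}
    {v : ι → X → F} {K : Set X} :
    uncurry u =O[l ×ˢ 𝓟 K] uncurry v ↔ ∃ C, ∀ᶠ n in l, ∀ x ∈ K, ‖u n x‖ ≤ C * ‖v n x‖ := by
  simp only [isBigO_iff, eventually_prod_principal_iff, uncurry_apply_pair]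

variable [Norm E] [SeminormedAddCommGroup F] {f : ι × X → E} {g : ι × X → F}

lemma isBigO_prod_principal_of_isCompact [TopologicalSpace X] {l : Filter ι} {K : Set X}
    (hK : IsCompact K) (h : ∀ x ∈ K, f =O[l ×ˢ 𝓝 x] g) : f =O[l ×ˢ 𝓟 K] g := by
  refine hK.induction_on (p := fun T => f =O[l ×ˢ 𝓟 T] g) (by simp)
    (fun S T hST hT => hT.mono (by gcongr)) (fun S T hS hT => ?_) fun x hx => ?_
  · rw [← sup_principal, prod_sup]
    exact hS.sup hT
  · obtain ⟨C, hC⟩ := (h x hx).bound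
    obtain ⟨A, hA, B, hB, hAB⟩ := mem_prod_iff.1 hC
    exact ⟨B, mem_nhdsWithin_of_mem_nhds hB,
      .of_bound C (mem_of_superset (prod_mem_prod hA (mem_principal_self B)) hAB)⟩

lemma isBigO_top_prod_of_cofinite_of_pure {k : Filter X} (h : f =O[cofinite ×ˢ k] g)
    (hpure : ∀ n, f =O[pure n ×ˢ k] g) : f =O[⊤ ×ˢ k] g := by
  obtain ⟨C, hC⟩ := h.bound
  obtain ⟨A, hA, B, hB, hAB⟩ := mem_prod_iff.1 hC
  have hA_bound : f =O[𝓟 A ×ˢ k] g :=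
    .of_bound C (mem_of_superset (prod_mem_prod (mem_principal_self A) hB) hAB)
  have hAc_bound : f =O[𝓟 Aᶜ ×ˢ k] g := by
    refine Set.Finite.induction_on (motive := fun S _ => f =O[𝓟 S ×ˢ k] g) Aᶜ hA (by simp)
      fun {n S} _ _ hS => ?_
    rw [insert_eq, ← sup_principal, principal_singleton, sup_prod]
    exact (hpure n).sup hS
  rw [← principal_univ, ← union_compl_self A, ← sup_principal, sup_prod]
  exact hA_bound.sup hAc_bound

end IsBigO

lemma exists_mem_Icc_eq_zero_of_one_le_deriv {φ : ℝ → ℝ}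
    (hφ : ∀ t ∈ Icc (-|φ 0|) |φ 0|, DifferentiableAt ℝ φ t)
    (hφ' : ∀ t ∈ Icc (-|φ 0|) |φ 0|, 1 ≤ deriv φ t) :
    ∃ t ∈ Icc (-|φ 0|) |φ 0|, φ t = 0 := by
  have hcont : ContinuousOn φ (Icc (-|φ 0|) |φ 0|) := fun t ht =>
    (hφ t ht).continuousAt.continuousWithinAt
  have hgrowth : ∀ s ∈ Icc (-|φ 0|) |φ 0|, ∀ t ∈ Icc (-|φ 0|) |φ 0|, s ≤ t →
      1 * (t - s) ≤ φ t - φ s :=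
    (convex_Icc _ _).mul_sub_le_image_sub_of_le_deriv hcont
      (fun t ht => (hφ t (interior_subset ht)).differentiableWithinAt)
      fun t ht => hφ' t (interior_subset ht)
  have hle : -|φ 0| ≤ |φ 0| := neg_le_self (abs_nonneg _)
  have h0 : (0 : ℝ) ∈ Icc (-|φ 0|) |φ 0| := ⟨neg_nonpos.2 (abs_nonneg _), abs_nonneg _⟩
  have hleft := hgrowth _ (left_mem_Icc.2 hle) _ h0 h0.1
  have hright := hgrowth _ h0 _ (right_mem_Icc.2 hle) h0.2
  exact intermediate_value_Icc hle hcont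
    ⟨by linarith [le_abs_self (φ 0)], by linarith [neg_le_abs (φ 0)]⟩

section NormedSpace

variable {E : Type*} [NormedAddCommGroup E] [NormedSpace ℝ E]

lemma abs_le_mul_abs_of_one_le_fderiv {f g : E → ℝ} {s : Set E} {x e : E} {M : ℝ}
    (hs : Convex ℝ s) (hf : ∀ y ∈ s, DifferentiableAt ℝ f y)
    (hg : ∀ y ∈ s, DifferentiableAt ℝ g y) (hf' : ∀ y ∈ s, ‖fderiv ℝ f y‖ ≤ M)
    (hg' : ∀ y ∈ s, 1 ≤ fderiv ℝ g y e) (hzero : ∀ y ∈ s, g y = 0 → f y = 0)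
    (hseg : ∀ t ∈ Icc (-|g x|) |g x|, x + t • e ∈ s) : |f x| ≤ M * ‖e‖ * |g x| := by
  have hx : x ∈ s := by
    simpa using hseg 0 ⟨neg_nonpos.2 (abs_nonneg _), abs_nonneg _⟩
  have hderiv : ∀ t ∈ Icc (-|g x|) |g x|,
      HasDerivAt (fun t : ℝ => g (x + t • e)) (fderiv ℝ g (x + t • e) e) t := fun t ht =>
    (hg _ (hseg t ht)).hasFDerivAt.comp_hasDerivAt t
      (by simpa using ((hasDerivAt_id t).smul_const e).const_add x)
  obtain ⟨t, ht, hgt⟩ : ∃ t ∈ Icc (-|g x|) |g x|, g (x + t • e) = 0 := by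
    simpa using exists_mem_Icc_eq_zero_of_one_le_deriv (φ := fun t => g (x + t • e))
      (by simpa using fun t h₁ h₂ => (hderiv t ⟨h₁, h₂⟩).differentiableAt)
      (by simpa using fun t h₁ h₂ =>
        (hg' _ (hseg t ⟨h₁, h₂⟩)).trans_eq (hderiv t ⟨h₁, h₂⟩).deriv.symm)
  have hM : 0 ≤ M := (norm_nonneg _).trans (hf' x hx)
  calc |f x| = ‖f x - f (x + t • e)‖ := by
        rw [hzero _ (hseg t ht) hgt, sub_zero, Real.norm_eq_abs]
    _ ≤ M * ‖x - (x + t • e)‖ :=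
        hs.norm_image_sub_le_of_norm_fderiv_le (𝕜 := ℝ) hf hf' (hseg t ht) hx
    _ = M * ‖e‖ * |t| := by
        rw [sub_add_cancel_left, norm_neg, norm_smul, Real.norm_eq_abs]; ring
    _ ≤ M * ‖e‖ * |g x| := mul_le_mul_of_nonneg_left (abs_le.2 ht) (by positivity)

lemma isBigO_of_tendsto_fderiv_ne_zero {ι : Type*} {l : Filter ι} {f g : ι → E → ℝ} {x : E}
    {f' g' : E →L[ℝ] ℝ} (hf : ∀ᶠ p in l ×ˢ 𝓝 x, DifferentiableAt ℝ (f p.1) p.2)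
    (hg : ∀ᶠ p in l ×ˢ 𝓝 x, DifferentiableAt ℝ (g p.1) p.2)
    (hf' : Tendsto (fun p : ι × E => fderiv ℝ (f p.1) p.2) (l ×ˢ 𝓝 x) (𝓝 f'))
    (hg' : Tendsto (fun p : ι × E => fderiv ℝ (g p.1) p.2) (l ×ˢ 𝓝 x) (𝓝 g'))
    (hg₀ : Tendsto (uncurry g) (l ×ˢ 𝓝 x) (𝓝 0)) (hne : g' ≠ 0)
    (hzero : ∀ᶠ p in l ×ˢ 𝓝 x, g p.1 p.2 = 0 → f p.1 p.2 = 0) :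
    uncurry f =O[l ×ˢ 𝓝 x] uncurry g := by
  obtain ⟨e, he⟩ : ∃ e, g' e = 2 := by
    obtain ⟨v, hv⟩ := DFunLike.ne_iff.1 hne
    exact ⟨(2 / g' v) • v, by rw [map_smul, smul_eq_mul, div_mul_cancel₀ _ hv]⟩
  have hf'_le : ∀ᶠ p in l ×ˢ 𝓝 x, ‖fderiv ℝ (f p.1) p.2‖ ≤ ‖f'‖ + 1 :=
    hf'.norm.eventually_le_const (lt_add_one _)
  have hg'_ge : ∀ᶠ p in l ×ˢ 𝓝 x, 1 ≤ fderiv ℝ (g p.1) p.2 e :=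
    (((ContinuousLinearMap.apply ℝ ℝ e).continuous.tendsto g').comp hg').eventually_const_le
      (by simp [he])
  obtain ⟨A, hA, r, hr, hAr⟩ := Metric.eventually_prod_nhds_iff.1
    (hf.and <| hg.and <| hf'_le.and <| hg'_ge.and hzero)
  have hsmall : ∀ᶠ p in l ×ˢ 𝓝 x, |g p.1 p.2| * ‖e‖ < r / 2 := by
    have : Tendsto (fun p : ι × E => |g p.1 p.2| * ‖e‖) (l ×ˢ 𝓝 x) (𝓝 0) := by
      simpa [uncurry_def] using hg₀.abs.mul_const ‖e‖
    exact this.eventually_lt_const (half_pos hr)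
  refine .of_bound ((‖f'‖ + 1) * ‖e‖) ?_
  filter_upwards [hsmall, tendsto_fst.eventually hA,
    tendsto_snd.eventually (ball_mem_nhds x (half_pos hr))] with ⟨n, y⟩ hn hAn hy
  refine abs_le_mul_abs_of_one_le_fderiv (convex_ball x r)
    (fun z hz => (hAr hAn hz).1) (fun z hz => (hAr hAn hz).2.1) (fun z hz => (hAr hAn hz).2.2.1)
    (fun z hz => (hAr hAn hz).2.2.2.1) (fun z hz => (hAr hAn hz).2.2.2.2) fun t ht => ?_
  calc dist (y + t • e) x ≤ dist (y + t • e) y + dist y x := dist_triangle _ _ _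
    _ = |t| * ‖e‖ + dist y x := by rw [dist_self_add_left, norm_smul, Real.norm_eq_abs]
    _ ≤ |g n y| * ‖e‖ + dist y x := by
      have : |t| ≤ |g n y| := abs_le.2 ht
      gcongr
    _ < r := by linarith [mem_ball.1 hy]

end NormedSpace

lemma tendsto_uncurry_of_tendstoLocallyUniformlyOn {ι X Y : Type*} [TopologicalSpace X]
    [UniformSpace Y] {l : Filter ι} {F : ι → X → Y} {f : X → Y} {s : Set X}
    (h : TendstoLocallyUniformlyOn F f l s) (hs : IsOpen s) (hf : ContinuousOn f s) {x : X}
    (hx : x ∈ s) : Tendsto (uncurry F) (l ×ˢ 𝓝 x) (𝓝 (f x)) := by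
  refine tendsto_comp_of_locally_uniform_limit (F := fun p : ι × X => F p.1)
    (hf.continuousAt (hs.mem_nhds hx)) tendsto_snd fun V hV => ?_
  obtain ⟨t, ht, H⟩ := h V hV x hx
  rw [hs.nhdsWithin_eq hx] at ht
  exact ⟨t, ht, tendsto_fst.eventually H⟩

lemma norm_deriv_le_of_forall_mem_ball_abs_re_lt {F : ℂ → ℂ} {c : ℂ} {r M : ℝ}
    (hF : DifferentiableOn ℂ F (ball c r)) (hM : ∀ z ∈ ball c r, |(F z).re| < M) (hr : 0 < r) :
    ‖deriv F c‖ ≤ 8 * M / r := by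
  set G : ℂ → ℂ := fun z => F (c + z) - F c with hG
  have hmaps : MapsTo (c + ·) (ball 0 r) (ball c r) := fun z hz => by simpa using hz
  have hM₀ : 0 < M := (abs_nonneg _).trans_lt (hM c (mem_ball_self hr))
  have hGd : DifferentiableOn ℂ G (ball 0 r) :=
    (hF.comp (differentiable_id.const_add c).differentiableOn hmaps).sub_const _
  have hGre : MapsTo G (ball 0 r) {z | z.re ≤ 2 * M} := fun z hz => by
    have h₁ := abs_lt.1 (hM _ (hmaps hz))
    have h₂ := abs_lt.1 (hM c (mem_ball_self hr))
    simp only [hG, mem_ofPred_eq, Complex.sub_re]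
    linarith
  have hsphere : ∀ z ∈ sphere (0 : ℂ) (r / 2), ‖G z‖ ≤ 4 * M := fun z hz => by
    have hz' : ‖z‖ = r / 2 := by simpa using hz
    have := Complex.borelCaratheodory_zero (by positivity) hGd hGre hr
      (by rw [mem_ball_zero_iff]; linarith) (by simp [hG])
    exact this.trans_eq (by rw [hz']; field_simp; ring)
  have hcauchy : ‖deriv G 0‖ ≤ 4 * M / (r / 2) :=
    Complex.norm_deriv_le_of_forall_mem_sphere_norm_le (half_pos hr)
      (hGd.mono (closure_ball_subset_closedBall.trans
        (closedBall_subset_ball (half_lt_self hr)))).diffContOnCl hsphere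
  have hderiv : deriv G 0 = deriv F c := by
    rw [hG, deriv_sub_const, deriv_comp_const_add, add_zero]
  rw [hderiv] at hcauchy
  exact hcauchy.trans_eq (by field_simp; ring)

lemma norm_fderiv_le_of_harmonicOnNhd {u : ℂ → ℝ} {c : ℂ} {r M : ℝ}
    (hu : HarmonicOnNhd u (ball c r)) (hM : ∀ z ∈ ball c r, |u z| < M) (hr : 0 < r) :
    ‖fderiv ℝ u c‖ ≤ 8 * M / r := by
  obtain ⟨F, hF, hFu⟩ := hu.exists_analyticOnNhd_ball_re_eq
  have hFc : HasFDerivAt u (Complex.reCLM ∘L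
      (ContinuousLinearMap.toSpanSingleton ℂ (deriv F c)).restrictScalars ℝ) c := by
    refine HasFDerivAt.congr_of_eventuallyEq (f := fun z => (F z).re) ?_
      (hFu.symm.eventuallyEq_of_mem (ball_mem_nhds c hr))
    exact Complex.reCLM.hasFDerivAt.comp c
      (((hF c (mem_ball_self hr)).differentiableAt.hasDerivAt).hasFDerivAt.restrictScalars ℝ)
  have hF_lt : ∀ z ∈ ball c r, |(F z).re| < M := fun z hz => by
    simpa [← hFu hz] using hM z hz
  refine le_trans ?_ (norm_deriv_le_of_forall_mem_ball_abs_re_lt hF.differentiableOn hF_lt hr)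
  rw [hFc.fderiv]
  refine ContinuousLinearMap.opNorm_le_bound _ (norm_nonneg _) fun z => ?_
  simpa [mul_comm] using Complex.abs_re_le_norm (z * deriv F c)

lemma eventually_nhdsNE_fderiv_ne_zero_of_harmonicAt {V : ℂ → ℝ} {q : ℂ} (hV : HarmonicAt V q)
    (hne : ¬V =ᶠ[𝓝 q] 0) : ∀ᶠ z in 𝓝[≠] q, V z = 0 → fderiv ℝ V z ≠ 0 := by
  rcases (HarmonicAt.analyticAt_complex_partial hV).eventually_eq_zero_or_eventually_ne_zero
    with h | h
  · obtain ⟨r, hr, hball⟩ := Metric.eventually_nhds_iff_ball.1 (h.and hV.eventually)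
    have hfderiv : EqOn (fderiv ℝ V) 0 (ball q r) := fun z hz => by
      have := (hball z hz).1
      refine ContinuousLinearMap.coe_injective (Complex.basisOneI.ext fun i => ?_)
      fin_cases i
      · simpa using congrArg Complex.re this
      · simpa using congrArg Complex.im this
    obtain ⟨a, ha⟩ := isOpen_ball.exists_is_const_of_fderiv_eq_zero
      (convex_ball q r).isPreconnected
      (fun z hz => ((hball z hz).2.1.differentiableAt two_ne_zero).differentiableWithinAt) hfderiv
    have ha₀ : a ≠ 0 := by
      rintro rfl
      exact hne (mem_of_superset (ball_mem_nhds q hr) ha)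
    filter_upwards [mem_nhdsWithin_of_mem_nhds (ball_mem_nhds q hr)] with z hz hz₀
    exact absurd ((ha z hz).symm.trans hz₀) ha₀
  · exact h.mono fun z hz _ h₀ => hz (by simp [h₀])

lemma eqOn_zero_of_harmonicOnNhd_of_eventuallyEq_zero {V : ℂ → ℝ} {Ω : Set ℂ}
    (hV : HarmonicOnNhd V Ω) (hΩ : IsPreconnected Ω) {q : ℂ} (hq : q ∈ Ω) (h : V =ᶠ[𝓝 q] 0) :
    EqOn V 0 Ω :=
  AnalyticOnNhd.eqOn_zero_of_preconnected_of_eventuallyEq_zero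
    (fun z hz => HarmonicAt.analyticAt (hV z hz)) hΩ hq h

section MaximumPrinciple

variable {u v : ℂ → ℝ} {c : ℂ} {r : ℝ} {D : Set ℂ}

lemma le_of_harmonicOnNhd_of_forall_mem_frontier (hu : HarmonicOnNhd u (ball c r))
    (hD : closure D ⊆ ball c r) {M : ℝ} (hM : ∀ z ∈ frontier D, u z ≤ M) {z : ℂ}
    (hz : z ∈ closure D) : u z ≤ M := by
  -- Bounding `u = re F` is bounding the modulus of the holomorphic function `exp F`.
  obtain ⟨F, hF, hFu⟩ := hu.exists_analyticOnNhd_ball_re_eq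
  have hnorm : ∀ w ∈ closure D, ‖Complex.exp (F w)‖ = Real.exp (u w) := fun w hw => by
    rw [Complex.norm_exp]
    exact congrArg Real.exp (hFu (hD hw))
  have hexp : DiffContOnCl ℂ (fun w => Complex.exp (F w)) D :=
    (hF.differentiableOn.cexp.mono hD).diffContOnCl
  have := Complex.norm_le_of_forall_mem_frontier_norm_le
    (isBounded_ball.subset (subset_closure.trans hD)) hexp
    (fun w hw => (hnorm w (frontier_subset_closure hw)).trans_le (Real.exp_le_exp.2 (hM w hw))) hz
  rwa [hnorm z hz, Real.exp_le_exp] at this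

lemma le_mul_of_harmonicOnNhd_of_forall_mem_frontier (hu : HarmonicOnNhd u (ball c r))
    (hv : HarmonicOnNhd v (ball c r)) (hD : closure D ⊆ ball c r) {C : ℝ}
    (hzero : ∀ z ∈ D, v z = 0 → u z = 0) (hC : ∀ z ∈ frontier D, u z ≤ C * |v z|) {z : ℂ}
    (hz : z ∈ D) (hvz : 0 < v z) : u z ≤ C * v z := by
  set W : Set ℂ := D ∩ {w | 0 < v w}
  have hWD : closure W ⊆ closure D := closure_mono inter_subset_left
  have hcontAt : ∀ w ∈ closure D, ContinuousAt v w := fun w hw =>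
    (hv w (hD hw)).1.continuousAt
  have hnonneg : ∀ w ∈ closure W, 0 ≤ v w := fun w hw => by
    have := mem_closure_iff_nhdsWithin_neBot.1 hw
    exact ge_of_tendsto ((hcontAt w (hWD hw)).mono_left (nhdsWithin_le_nhds (s := W)))
      (eventually_mem_nhdsWithin.mono fun _ h => h.2.le)
  have hfrontier : ∀ w ∈ frontier W, (u - C • v) w ≤ 0 := fun w hw => by
    have hwW := frontier_subset_closure hw
    rw [Pi.sub_apply, Pi.smul_apply, smul_eq_mul, sub_nonpos]
    by_cases hwD : w ∈ frontier D
    · simpa [abs_of_nonneg (hnonneg w hwW)] using hC w hwD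
    have hwint : w ∈ interior D := by
      by_contra h
      exact hwD ⟨hWD hwW, h⟩
    have hvw : v w = 0 := by
      refine ((hnonneg w hwW).eq_of_not_lt fun hpos => hw.2 ?_).symm
      exact mem_interior_iff_mem_nhds.2 (inter_mem (mem_interior_iff_mem_nhds.1 hwint)
        ((hcontAt w (hWD hwW)).eventually_const_lt hpos))
    simp [hvw, hzero w (interior_subset hwint) hvw]
  have := le_of_harmonicOnNhd_of_forall_mem_frontier (hu.sub hv.const_smul) (hWD.trans hD)
    hfrontier (subset_closure ⟨hz, hvz⟩)
  simpa using this

lemma abs_le_mul_abs_of_harmonicOnNhd_of_forall_mem_frontier (hu : HarmonicOnNhd u (ball c r))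
    (hv : HarmonicOnNhd v (ball c r)) (hD : closure D ⊆ ball c r) {C : ℝ}
    (hzero : ∀ z ∈ D, v z = 0 → u z = 0) (hC : ∀ z ∈ frontier D, |u z| ≤ C * |v z|) {z : ℂ}
    (hz : z ∈ D) : |u z| ≤ C * |v z| := by
  have habs : ∀ {w : ℂ → ℝ}, HarmonicOnNhd w (ball c r) → (∀ y ∈ D, w y = 0 → u y = 0) →
      (∀ y ∈ frontier D, |u y| ≤ C * |w y|) → 0 < w z → |u z| ≤ C * w z := fun hw hw₀ hwC hwz =>
    abs_le'.2 ⟨le_mul_of_harmonicOnNhd_of_forall_mem_frontier hu hw hD hw₀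
        (fun y hy => (le_abs_self _).trans (hwC y hy)) hz hwz,
      le_mul_of_harmonicOnNhd_of_forall_mem_frontier (u := -u) hu.neg hw hD (by simpa using hw₀)
        (fun y hy => (neg_le_abs _).trans (hwC y hy)) hz hwz⟩
  rcases lt_trichotomy (v z) 0 with hneg | h₀ | hpos
  · rw [abs_of_neg hneg]
    exact habs (w := -v) hv.neg (by simpa using hzero) (by simpa using hC) (neg_pos.2 hneg)
  · simp [h₀, hzero z hz h₀]
  · rw [abs_of_pos hpos]
    exact habs hv hzero hC hpos

end MaximumPrinciple

/-- Locally uniform convergence `u n → U` on `Ω` of harmonic functions along `l`. Harmonicity of the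
limit is a field, so that it need not be derived from the convergence. -/
structure HarmonicTendstoOn {ι : Type*} (u : ι → ℂ → ℝ) (U : ℂ → ℝ) (l : Filter ι) (Ω : Set ℂ) :
    Prop where
  harmonicOnNhd : ∀ n, HarmonicOnNhd (u n) Ω
  harmonicOnNhd_limit : HarmonicOnNhd U Ω
  tendstoLocallyUniformlyOn : TendstoLocallyUniformlyOn u U l Ω

namespace HarmonicTendstoOn

variable {ι : Type*} {l : Filter ι} {u v : ι → ℂ → ℝ} {U V : ℂ → ℝ} {Ω : Set ℂ}

lemma const {f : ℂ → ℝ} (hf : HarmonicOnNhd f Ω) : HarmonicTendstoOn (fun _ => f) f l Ω where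
  harmonicOnNhd _ := hf
  harmonicOnNhd_limit := hf
  tendstoLocallyUniformlyOn _ hs _ _ :=
    ⟨univ, univ_mem, .of_forall fun _ _ _ => refl_mem_uniformity hs⟩

lemma tendstoLocallyUniformlyOn_fderiv (h : HarmonicTendstoOn u U l Ω) (hΩ : IsOpen Ω) :
    TendstoLocallyUniformlyOn (fun n => fderiv ℝ (u n)) (fderiv ℝ U) l Ω := by
  rw [Metric.tendstoLocallyUniformlyOn_iff]
  intro ε hε q hq
  obtain ⟨R, hR, hRΩ⟩ := nhds_basis_closedBall.mem_iff.1 (hΩ.mem_nhds hq)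
  set r := R / 2 with hr
  have hr₀ : 0 < r := half_pos hR
  refine ⟨ball q r, mem_nhdsWithin_of_mem_nhds (ball_mem_nhds q hr₀), ?_⟩
  have hunif := Metric.tendstoUniformlyOn_iff.1
    ((tendstoLocallyUniformlyOn_iff_forall_isCompact hΩ).1 h.tendstoLocallyUniformlyOn _ hRΩ
      (isCompact_closedBall q R)) (ε * r / 16) (by positivity)
  filter_upwards [hunif] with n hn z hz
  have hzR : ball z r ⊆ closedBall q R :=
    (ball_subset_ball' (by linarith [mem_ball.1 hz])).trans ball_subset_closedBall
  have hzΩ : z ∈ Ω := hRΩ (hzR (mem_ball_self hr₀))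
  have hsub : fderiv ℝ (U - u n) z = fderiv ℝ U z - fderiv ℝ (u n) z :=
    fderiv_sub ((h.harmonicOnNhd_limit z hzΩ).1.differentiableAt two_ne_zero)
      ((h.harmonicOnNhd n z hzΩ).1.differentiableAt two_ne_zero)
  rw [dist_eq_norm, ← hsub]
  calc ‖fderiv ℝ (U - u n) z‖ ≤ 8 * (ε * r / 16) / r :=
        norm_fderiv_le_of_harmonicOnNhd
          ((h.harmonicOnNhd_limit.sub (h.harmonicOnNhd n)).mono (hzR.trans hRΩ))
          (fun w hw => hn w (hzR hw)) hr₀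
    _ = ε / 2 := by field_simp; norm_num
    _ < ε := half_lt_self hε

lemma tendsto_uncurry (h : HarmonicTendstoOn u U l Ω) (hΩ : IsOpen Ω) {q : ℂ} (hq : q ∈ Ω) :
    Tendsto (uncurry u) (l ×ˢ 𝓝 q) (𝓝 (U q)) :=
  tendsto_uncurry_of_tendstoLocallyUniformlyOn h.tendstoLocallyUniformlyOn hΩ
    (fun z hz => (h.harmonicOnNhd_limit z hz).1.continuousAt.continuousWithinAt) hq

lemma tendsto_fderiv (h : HarmonicTendstoOn u U l Ω) (hΩ : IsOpen Ω) {q : ℂ} (hq : q ∈ Ω) :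
    Tendsto (fun p : ι × ℂ => fderiv ℝ (u p.1) p.2) (l ×ˢ 𝓝 q) (𝓝 (fderiv ℝ U q)) :=
  tendsto_uncurry_of_tendstoLocallyUniformlyOn (h.tendstoLocallyUniformlyOn_fderiv hΩ) hΩ
    (fun z hz => (HarmonicAt.analyticAt
      (h.harmonicOnNhd_limit z hz)).fderiv.continuousAt.continuousWithinAt) hq

lemma eventually_differentiableAt (h : HarmonicTendstoOn u U l Ω) (hΩ : IsOpen Ω) {q : ℂ}
    (hq : q ∈ Ω) : ∀ᶠ p in l ×ˢ 𝓝 q, DifferentiableAt ℝ (u p.1) p.2 :=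
  (tendsto_snd.eventually (hΩ.eventually_mem hq)).mono fun p hp =>
    (h.harmonicOnNhd p.1 p.2 hp).1.differentiableAt two_ne_zero

lemma isBigO_of_fderiv_ne_zero (hu : HarmonicTendstoOn u U l Ω) (hv : HarmonicTendstoOn v V l Ω)
    (hΩ : IsOpen Ω) (hzero : ∀ n, ∀ z ∈ Ω, v n z = 0 → u n z = 0) {q : ℂ} (hq : q ∈ Ω)
    (hVq : V q = 0 → fderiv ℝ V q ≠ 0) : uncurry u =O[l ×ˢ 𝓝 q] uncurry v := by
  have hv_lim := hv.tendsto_uncurry hΩ hq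
  by_cases hVq₀ : V q = 0
  · exact isBigO_of_tendsto_fderiv_ne_zero (hu.eventually_differentiableAt hΩ hq)
      (hv.eventually_differentiableAt hΩ hq) (hu.tendsto_fderiv hΩ hq) (hv.tendsto_fderiv hΩ hq)
      (hVq₀ ▸ hv_lim) (hVq hVq₀)
      ((tendsto_snd.eventually (hΩ.eventually_mem hq)).mono fun p hp => hzero p.1 p.2 hp)
  · calc uncurry u =O[l ×ˢ 𝓝 q] fun _ => (1 : ℝ) := (hu.tendsto_uncurry hΩ hq).isBigO_one ℝ
      _ =O[l ×ˢ 𝓝 q] fun _ => V q := isBigO_const_const 1 hVq₀ _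
      _ =O[l ×ˢ 𝓝 q] uncurry v := ((isEquivalent_const_iff_tendsto hVq₀).2 hv_lim).symm.isBigO

lemma isBigO_of_not_eventuallyEq_zero (hu : HarmonicTendstoOn u U l Ω)
    (hv : HarmonicTendstoOn v V l Ω) (hΩ : IsOpen Ω)
    (hzero : ∀ n, ∀ z ∈ Ω, v n z = 0 → u n z = 0) {q : ℂ} (hq : q ∈ Ω)
    (hVq : ¬V =ᶠ[𝓝 q] 0) : uncurry u =O[l ×ˢ 𝓝 q] uncurry v := by
  obtain ⟨r, hr, hball⟩ := Metric.eventually_nhds_iff_ball.1 <|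
    (hΩ.eventually_mem hq).and <| eventually_nhdsWithin_iff.1 <|
      eventually_nhdsNE_fderiv_ne_zero_of_harmonicAt (hv.harmonicOnNhd_limit q hq) hVq
  have hball_sub : ball q r ⊆ Ω := fun z hz => (hball z hz).1
  have hsub : closedBall q (r / 2) ⊆ ball q r := closedBall_subset_ball (half_lt_self hr)
  have hsphere : uncurry u =O[l ×ˢ 𝓟 (sphere q (r / 2))] uncurry v :=
    isBigO_prod_principal_of_isCompact (isCompact_sphere q (r / 2)) fun z hz => by
      have hz' := hball z (hsub (sphere_subset_closedBall hz))
      exact hu.isBigO_of_fderiv_ne_zero hv hΩ hzero hz'.1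
        (hz'.2 (ne_of_mem_sphere hz (half_pos hr).ne'))
  obtain ⟨C, hC⟩ := isBigO_uncurry_prod_principal_iff.1 hsphere
  refine .of_bound C ?_
  filter_upwards [tendsto_fst.eventually hC,
    tendsto_snd.eventually (ball_mem_nhds q (half_pos hr))] with ⟨n, z⟩ hn hz
  exact abs_le_mul_abs_of_harmonicOnNhd_of_forall_mem_frontier ((hu.harmonicOnNhd n).mono hball_sub)
    ((hv.harmonicOnNhd n).mono hball_sub) (closure_ball_subset_closedBall.trans hsub)
    (fun w hw => hzero n w (hball_sub (hsub (ball_subset_closedBall hw))))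
    (by rwa [frontier_ball q (half_pos hr).ne']) hz

lemma isBigO_prod_principal (hu : HarmonicTendstoOn u U l Ω) (hv : HarmonicTendstoOn v V l Ω)
    (hΩ : IsOpen Ω) (hΩc : IsPreconnected Ω) (hVne : ∃ z ∈ Ω, V z ≠ 0)
    (hzero : ∀ n, ∀ z ∈ Ω, v n z = 0 → u n z = 0) {K : Set ℂ} (hK : IsCompact K) (hKΩ : K ⊆ Ω) :
    uncurry u =O[l ×ˢ 𝓟 K] uncurry v := by
  obtain ⟨z, hz, hVz⟩ := hVne
  exact isBigO_prod_principal_of_isCompact hK fun q hq =>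
    hu.isBigO_of_not_eventuallyEq_zero hv hΩ hzero (hKΩ hq) fun h =>
      hVz <| eqOn_zero_of_harmonicOnNhd_of_eventuallyEq_zero hv.harmonicOnNhd_limit hΩc (hKΩ hq)
        h hz

end HarmonicTendstoOn

section Domination

variable {Ω K : Set ℂ}

lemma exists_forall_abs_le_mul_abs_of_harmonicOnNhd {u v : ℂ → ℝ} (hu : HarmonicOnNhd u Ω)
    (hv : HarmonicOnNhd v Ω) (hΩ : IsOpen Ω) (hΩc : IsPreconnected Ω)
    (hzero : ∀ z ∈ Ω, v z = 0 → u z = 0) (hK : IsCompact K) (hKΩ : K ⊆ Ω) :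
    ∃ C, ∀ z ∈ K, |u z| ≤ C * |v z| := by
  by_cases hne : ∃ z ∈ Ω, v z ≠ 0
  · simpa only [isBigO_uncurry_prod_principal_iff, eventually_pure, Real.norm_eq_abs] using
      (HarmonicTendstoOn.const (l := pure ()) hu).isBigO_prod_principal (.const hv) hΩ hΩc hne
        (fun _ => hzero) hK hKΩ
  · push Not at hne
    exact ⟨0, fun z hz => by simp [hzero z (hKΩ hz) (hne z (hKΩ hz))]⟩

lemma HarmonicTendstoOn.exists_forall_abs_le_mul_abs {u v : ℕ → ℂ → ℝ} {U V : ℂ → ℝ}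
    (hu : HarmonicTendstoOn u U atTop Ω) (hv : HarmonicTendstoOn v V atTop Ω) (hΩ : IsOpen Ω)
    (hΩc : IsPreconnected Ω) (hVne : ∃ z ∈ Ω, V z ≠ 0)
    (hzero : ∀ n, ∀ z ∈ Ω, v n z = 0 → u n z = 0) (hK : IsCompact K) (hKΩ : K ⊆ Ω) :
    ∃ C, ∀ n, ∀ z ∈ K, |u n z| ≤ C * |v n z| := by
  have hcofinite := hu.isBigO_prod_principal hv hΩ hΩc hVne hzero hK hKΩ
  have hpure : ∀ n, uncurry u =O[pure n ×ˢ 𝓟 K] uncurry v := fun n => by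
    simpa only [isBigO_uncurry_prod_principal_iff, eventually_pure, Real.norm_eq_abs] using
      exists_forall_abs_le_mul_abs_of_harmonicOnNhd (hu.harmonicOnNhd n) (hv.harmonicOnNhd n)
        hΩ hΩc (hzero n) hK hKΩ
  rw [← Nat.cofinite_eq_atTop] at hcofinite
  simpa only [isBigO_uncurry_prod_principal_iff, eventually_top, Real.norm_eq_abs] using
    isBigO_top_prod_of_cofinite_of_pure hcofinite hpure

end Domination

/-- The linear isometry from `ℂ` onto the Euclidean plane, used to transport harmonic functions
on the plane to `ℂ`, where holomorphic functions are available. -/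
def planeIso : ℂ ≃ₗᵢ[ℝ] En 2 := Complex.orthonormalBasisOneI.repr

section Plane

lemma laplacian_comp_planeIso (u : En 2 → ℝ) (z : ℂ) :
    Laplacian.laplacian (u ∘ planeIso) z = laplacianAt u (planeIso z) := by
  rw [laplacian_eq_iteratedFDeriv_orthonormalBasis _
    ((EuclideanSpace.basisFun (Fin 2) ℝ).map planeIso.symm), laplacianAt]
  refine Finset.sum_congr rfl fun i _ => ?_
  have h := planeIso.toContinuousLinearEquiv.iteratedFDerivWithin_comp_right (𝕜 := ℝ) u
    uniqueDiffOn_univ (mem_univ (planeIso z)) 2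
  rw [preimage_univ, iteratedFDerivWithin_univ, iteratedFDerivWithin_univ,
    planeIso.coe_toContinuousLinearEquiv] at h
  rw [h, ContinuousMultilinearMap.compContinuousLinearMap_apply]
  congr 1
  ext j : 1
  fin_cases j <;> simp

variable {Ω : Set (En 2)}

lemma HarmonicOnSet.comp_planeIso {u : En 2 → ℝ} (hu : HarmonicOnSet u Ω) (hΩ : IsOpen Ω) :
    HarmonicOnNhd (u ∘ planeIso) (planeIso ⁻¹' Ω) := fun z hz => by
  refine ⟨(hu.1.contDiffAt (hΩ.mem_nhds hz)).comp z planeIso.contDiff.contDiffAt, ?_⟩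
  filter_upwards [(hΩ.preimage planeIso.continuous).mem_nhds hz] with w hw
  rw [laplacian_comp_planeIso, hu.2 _ hw, Pi.zero_apply]

lemma harmonicTendstoOn_comp_planeIso {ι : Type*} {l : Filter ι} {u : ι → En 2 → ℝ}
    {U : En 2 → ℝ} (hu : ∀ m, HarmonicOnSet (u m) Ω) (hU : HarmonicOnSet U Ω) (hΩ : IsOpen Ω)
    (h : ∀ K ⊆ Ω, IsCompact K → TendstoUniformlyOn u U l K) :
    HarmonicTendstoOn (fun m => u m ∘ planeIso) (U ∘ planeIso) l (planeIso ⁻¹' Ω) where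
  harmonicOnNhd m := (hu m).comp_planeIso hΩ
  harmonicOnNhd_limit := hU.comp_planeIso hΩ
  tendstoLocallyUniformlyOn :=
    ((tendstoLocallyUniformlyOn_iff_forall_isCompact hΩ).2 h).comp planeIso
      (mapsTo_preimage _ _) planeIso.continuous.continuousOn

lemma exists_forall_abs_le_mul_abs_of_harmonicOnSet {u v : ℕ → En 2 → ℝ} {U V : En 2 → ℝ}
    (hΩ : IsOpen Ω) (hΩc : IsPreconnected Ω) (hu : ∀ m, HarmonicOnSet (u m) Ω)
    (hv : ∀ m, HarmonicOnSet (v m) Ω) (hzero : ∀ m, ∀ x ∈ Ω, v m x = 0 → u m x = 0)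
    (hU : HarmonicOnSet U Ω) (hV : HarmonicOnSet V Ω) (hVne : ∃ x ∈ Ω, V x ≠ 0)
    (hconvU : ∀ K ⊆ Ω, IsCompact K → TendstoUniformlyOn u U atTop K)
    (hconvV : ∀ K ⊆ Ω, IsCompact K → TendstoUniformlyOn v V atTop K)
    {K : Set (En 2)} (hK : IsCompact K) (hKΩ : K ⊆ Ω) :
    ∃ C, ∀ m, ∀ x ∈ K, |u m x| ≤ C * |v m x| := by
  obtain ⟨C, hC⟩ := (harmonicTendstoOn_comp_planeIso hu hU hΩ hconvU).exists_forall_abs_le_mul_abs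
    (harmonicTendstoOn_comp_planeIso hv hV hΩ hconvV) (hΩ.preimage planeIso.continuous)
    (planeIso.toHomeomorph.isPreconnected_preimage.2 hΩc) (planeIso.surjective.exists.1 hVne)
    (fun m z hz => hzero m (planeIso z) hz) (planeIso.toHomeomorph.isCompact_preimage.2 hK)
    (preimage_mono hKΩ)
  exact ⟨C, fun m x hx => by simpa using hC m (planeIso.symm x) (by simpa using hx)⟩

end Plane

theorem stmt8_general {Ω : Set (En 2)} (hΩ : IsOpen Ω) (hΩc : IsPreconnected Ω)
    (u v : ℕ → En 2 → ℝ) (U V : En 2 → ℝ) (hu : ∀ m, HarmonicOnSet (u m) Ω)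
    (hv : ∀ m, HarmonicOnSet (v m) Ω) (hz : ∀ m, zeroSet (u m) Ω = zeroSet (v m) Ω)
    (hU : HarmonicOnSet U Ω) (hV : HarmonicOnSet V Ω)
    (hUne : ∃ x ∈ Ω, U x ≠ 0) (hVne : ∃ x ∈ Ω, V x ≠ 0)
    (hconvU : ∀ K ⊆ Ω, IsCompact K → TendstoUniformlyOn u U atTop K)
    (hconvV : ∀ K ⊆ Ω, IsCompact K → TendstoUniformlyOn v V atTop K)
    {K : Set (En 2)} (hK : IsCompact K) (hKΩ : K ⊆ Ω) :
    ∃ C : ℝ, ∀ m, ∀ x ∈ K \ zeroSet (u m) Ω, ∀ y ∈ K \ zeroSet (u m) Ω,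
      |u m x / v m x| ≤ C * |u m y / v m y| := by
  have hzero : ∀ m, ∀ x ∈ Ω, u m x = 0 ↔ v m x = 0 := fun m x hx => by
    simpa [zeroSet, hx] using Set.ext_iff.1 (hz m) x
  obtain ⟨C, hC⟩ := exists_forall_abs_le_mul_abs_of_harmonicOnSet hΩ hΩc hu hv
    (fun m x hx => (hzero m x hx).2) hU hV hVne hconvU hconvV hK hKΩ
  obtain ⟨D, hD⟩ := exists_forall_abs_le_mul_abs_of_harmonicOnSet hΩ hΩc hv hu
    (fun m x hx => (hzero m x hx).1) hV hU hUne hconvV hconvU hK hKΩ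
  have hpos : ∀ m, ∀ x ∈ K \ zeroSet (u m) Ω, 0 < |v m x| := fun m x hx =>
    abs_pos.2 fun h => hx.2 ⟨hKΩ hx.1, (hzero m x (hKΩ hx.1)).2 h⟩
  refine ⟨C * D, fun m x hx y hy => ?_⟩
  have hCx : |u m x / v m x| ≤ C := by
    rw [abs_div, div_le_iff₀ (hpos m x hx)]
    exact hC m x hx.1
  have hDy : 1 ≤ D * |u m y / v m y| := by
    rw [abs_div, mul_div_assoc', one_le_div (hpos m y hy)]
    exact hD m y hy.1
  calc |u m x / v m x| ≤ C := hCx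
    _ ≤ C * (D * |u m y / v m y|) := le_mul_of_one_le_right ((abs_nonneg _).trans hCx) hDy
    _ = C * D * |u m y / v m y| := (mul_assoc _ _ _).symm

theorem stmt8 (u v : ℕ → En 2 → ℝ) (U V : En 2 → ℝ)
    (hu : ∀ m, HarmonicOnSet (u m) (ball 0 1))
    (hv : ∀ m, HarmonicOnSet (v m) (ball 0 1))
    (hz : ∀ m, zeroSet (u m) (ball 0 1) = zeroSet (v m) (ball 0 1))
    (hpos : ∀ m, ∀ x ∈ ball (0 : En 2) 1 \ zeroSet (u m) (ball 0 1), 0 < u m x * v m x)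
    (hU : HarmonicOnSet U (ball 0 1)) (hV : HarmonicOnSet V (ball 0 1))
    (hUne : ∃ x ∈ ball (0 : En 2) 1, U x ≠ 0)
    (hVne : ∃ x ∈ ball (0 : En 2) 1, V x ≠ 0)
    (hconvU : ∀ K : Set (En 2), K ⊆ ball (0 : En 2) 1 → IsCompact K →
      TendstoUniformlyOn (fun m x => u m x) U atTop K)
    (hconvV : ∀ K : Set (En 2), K ⊆ ball (0 : En 2) 1 → IsCompact K →
      TendstoUniformlyOn (fun m x => v m x) V atTop K) :
    ∀ K : Set (En 2), IsCompact K → K ⊆ ball (0 : En 2) 1 →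
      ∃ C : ℝ, ∀ m, ∀ x ∈ K \ zeroSet (u m) (ball 0 1), ∀ y ∈ K \ zeroSet (u m) (ball 0 1),
        u m x / v m x ≤ C * (u m y / v m y) := by
  intro K hK hKb
  have habs : ∀ m, ∀ x ∈ K \ zeroSet (u m) (ball 0 1), |u m x / v m x| = u m x / v m x :=
    fun m x hx => abs_of_pos (div_pos_iff.2 (mul_pos_iff.1 (hpos m x ⟨hKb hx.1, hx.2⟩)))
  obtain ⟨C, hC⟩ := stmt8_general isOpen_ball (convex_ball _ _).isPreconnected u v U V hu hv hz
    hU hV hUne hVne hconvU hconvV hK hKb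
  exact ⟨C, fun m x hx y hy => by simpa only [habs m x hx, habs m y hy] using hC m x hx y hy⟩
end
end
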